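/- For every nonnegative integer n, the number of overpartitions of 5n+2 whose rank is congruent to 0 modulo 5 equals the number of overpartitions of 5n+2 whose rank is congruent to 2 modulo 5; that is, N̄(0,5,5n+2) = N̄(2,5,5n+2). -/

import Mathlib

/-- The number of overpartitions of `n` (partitions together with a choice of a subset of the
distinct part sizes, marking the overlined parts) whose rank (largest part minus number of
parts) is congruent to `s` modulo `m`. -/
def overN (s m n : ℕ) : ℕ :=
  (((Finset.univ : Finset (Nat.Partition n)).sigma fun p => p.parts.toFinset.powerset).filter
    fun x => ((x.1.parts.sup : ℤ) - (Multiset.card x.1.parts : ℤ)) % (m : ℤ)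
      = (s : ℤ) % (m : ℤ)).card

/-! Write `D(t)` for the generating function of `N̄(0,5,n) - N̄(2,5,n)` and
`θ(t) = ∑ (-1)^n t^(n²)`. Counting overpartitions by largest part and number of parts yields
`θ(t) D(t) = 1 + ∑_{k ≠ 0} (-1)^k t^(k²) (4 t^k + 2 t^(3k)) / (1 - t^(5k))`.
Splitting the sum by the residue of `k` modulo `5` expresses it through Appell sums with base
`t^25`. Partial fractions of quotients of theta functions relate these sums, up to theta quotients,
to one another and to a Lambert series, so that all Appell sums except those in the components
`t^1` and `t^4` can be eliminated; what remains is `θ(t) ∑_c t^c F_c(t^5)` with `F_2 = 0`. -/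

open Filter Topology Finset

namespace OverpartitionRank

noncomputable section

section QPochhammer

/-- The finite `p`-Pochhammer symbol `(x; p)_n`. -/
def qPoch (p x : ℂ) (n : ℕ) : ℂ := ∏ i ∈ range n, (1 - x * p ^ i)

/-- The infinite `p`-Pochhammer symbol `(x; p)_∞`. -/
def qPochInf (p x : ℂ) : ℂ := ∏' i : ℕ, (1 - x * p ^ i)

/-- The theta product `[x; p]_∞ = (x; p)_∞ (p / x; p)_∞`. -/
def thetaProd (p x : ℂ) : ℂ := qPochInf p x * qPochInf p (p / x)

/-- `x` is not an integral power of `p`, i.e. `x` is not a zero of `thetaProd p`. -/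
def OffLattice (p x : ℂ) : Prop := ∀ n : ℤ, x * p ^ n ≠ 1

variable {p x : ℂ}

lemma qPoch_zero : qPoch p x 0 = 1 := prod_range_zero _

lemma qPoch_succ (n : ℕ) : qPoch p x (n + 1) = qPoch p x n * (1 - x * p ^ n) :=
  prod_range_succ _ n

lemma qPoch_succ' (n : ℕ) : qPoch p x (n + 1) = (1 - x) * qPoch p (x * p) n := by
  rw [qPoch, prod_range_succ', pow_zero, mul_one, mul_comm, qPoch]
  simp only [pow_succ', mul_assoc]

lemma summable_norm_geometric (hp : ‖p‖ < 1) (x : ℂ) :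
    Summable fun i : ℕ => ‖-(x * p ^ i)‖ := by
  simp only [norm_neg, norm_mul, norm_pow]
  exact (summable_geometric_of_lt_one (norm_nonneg _) hp).mul_left _

lemma tendsto_qPoch (hp : ‖p‖ < 1) (x : ℂ) :
    Tendsto (qPoch p x) atTop (𝓝 (qPochInf p x)) := by
  have hmul : Multipliable fun i : ℕ => 1 - x * p ^ i := by
    simpa [sub_eq_add_neg] using multipliable_one_add_of_summable (summable_norm_geometric hp x)
  exact hmul.tendsto_prod_tprod_nat

lemma qPochInf_ne_zero (hp : ‖p‖ < 1) (h : ∀ i : ℕ, x * p ^ i ≠ 1) : qPochInf p x ≠ 0 := by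
  have hne : ∀ i : ℕ, 1 + -(x * p ^ i) ≠ 0 := fun i h0 => h i (by linear_combination -h0)
  simpa [qPochInf, sub_eq_add_neg] using
    tprod_one_add_ne_zero_of_summable hne (summable_norm_geometric hp x)

lemma qPochInf_eq_mul (hp : ‖p‖ < 1) (x : ℂ) :
    qPochInf p x = (1 - x) * qPochInf p (x * p) :=
  tendsto_nhds_unique ((tendsto_qPoch hp x).comp (tendsto_add_atTop_nat 1))
    (((tendsto_qPoch hp (x * p)).const_mul (1 - x)).congr fun n => (qPoch_succ' n).symm)

lemma qPochInf_eq_qPoch_mul (hp : ‖p‖ < 1) (x : ℂ) (n : ℕ) :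
    qPochInf p x = qPoch p x n * qPochInf p (x * p ^ n) := by
  induction n with
  | zero => simp [qPoch_zero]
  | succ n ih => rw [ih, qPoch_succ, qPochInf_eq_mul hp (x * p ^ n)]; ring_nf

lemma norm_pow_lt_one (hp : ‖p‖ < 1) {m : ℕ} (hm : m ≠ 0) : ‖p ^ m‖ < 1 := by
  rw [norm_pow]; exact pow_lt_one₀ (norm_nonneg _) hp hm

lemma one_sub_pow_ne_zero (hp : ‖p‖ < 1) {m : ℕ} (hm : m ≠ 0) : 1 - p ^ m ≠ 0 :=
  sub_ne_zero.2 fun h => (norm_pow_lt_one hp hm).ne (by rw [← h, norm_one])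

lemma one_add_pow_ne_zero (hp : ‖p‖ < 1) {m : ℕ} (hm : m ≠ 0) : 1 + p ^ m ≠ 0 :=
  fun h => (norm_pow_lt_one hp hm).ne (by
    rw [eq_neg_of_add_eq_zero_right h, norm_neg, norm_one])

lemma qPochInf_mul_neg (hp : ‖p‖ < 1) (x : ℂ) :
    qPochInf p x * qPochInf p (-x) = qPochInf (p ^ 2) (x ^ 2) := by
  refine tendsto_nhds_unique ((tendsto_qPoch hp x).mul (tendsto_qPoch hp (-x))) ?_
  refine (tendsto_qPoch (norm_pow_lt_one hp two_ne_zero) (x ^ 2)).congr fun n => ?_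
  simp only [qPoch, ← prod_mul_distrib]
  exact prod_congr rfl fun i _ => by ring

lemma qPochInf_eq_even_mul_odd (hp : ‖p‖ < 1) (x : ℂ) :
    qPochInf p x = qPochInf (p ^ 2) x * qPochInf (p ^ 2) (x * p) := by
  have hp2 := norm_pow_lt_one hp two_ne_zero
  have hdouble : ∀ n, qPoch p x (2 * n) = qPoch (p ^ 2) x n * qPoch (p ^ 2) (x * p) n := by
    intro n
    induction n with
    | zero => simp [qPoch_zero]
    | succ n ih =>
      rw [Nat.mul_succ, qPoch_succ, qPoch_succ, qPoch_succ, qPoch_succ, ih]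
      ring
  exact tendsto_nhds_unique
    ((tendsto_qPoch hp x).comp (tendsto_id.const_mul_atTop' two_pos))
    (((tendsto_qPoch hp2 x).mul (tendsto_qPoch hp2 (x * p))).congr fun n => (hdouble n).symm)

lemma qPochInf_self_ne_zero (hp : ‖p‖ < 1) : qPochInf p p ≠ 0 :=
  qPochInf_ne_zero hp fun i h =>
    one_sub_pow_ne_zero hp i.succ_ne_zero (by rw [pow_succ', h, sub_self])

lemma OffLattice.one_sub_ne_zero (h : OffLattice p x) (n : ℤ) : 1 - x * p ^ n ≠ 0 :=
  fun h0 => h n (sub_eq_zero.1 h0).symm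

lemma OffLattice.ne_one_of_nat (h : OffLattice p x) (n : ℕ) : x * p ^ n ≠ 1 := by
  simpa using h n

lemma OffLattice.div_ne_one_of_nat (h : OffLattice p x) (n : ℕ) : p / x * p ^ n ≠ 1 := by
  intro h0
  have hx : x ≠ 0 := by rintro rfl; simp at h0
  have hp0 : p ≠ 0 := by rintro rfl; simp at h0
  refine h (-(n + 1 : ℕ)) ?_
  rw [zpow_neg, zpow_natCast, mul_inv_eq_one₀ (pow_ne_zero _ hp0), pow_succ]
  field_simp at h0
  linear_combination -h0

lemma OffLattice.inv (h : OffLattice p x) (hp0 : p ≠ 0) : OffLattice p x⁻¹ := by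
  intro n hn
  have hx : x ≠ 0 := by rintro rfl; simp at hn
  refine h (-n) ?_
  rw [zpow_neg, mul_inv_eq_one₀ (zpow_ne_zero _ hp0)]
  field_simp at hn
  exact hn.symm

lemma thetaProd_ne_zero (hp : ‖p‖ < 1) (h : OffLattice p x) : thetaProd p x ≠ 0 :=
  mul_ne_zero (qPochInf_ne_zero hp h.ne_one_of_nat) (qPochInf_ne_zero hp h.div_ne_one_of_nat)

lemma thetaProd_div (hp0 : p ≠ 0) : thetaProd p (p / x) = thetaProd p x := by
  rw [thetaProd, thetaProd, div_div_cancel₀ hp0, mul_comm]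

lemma thetaProd_inv (hp : ‖p‖ < 1) (hx : x ≠ 0) : thetaProd p x⁻¹ = -thetaProd p x / x := by
  rw [thetaProd, thetaProd, qPochInf_eq_mul hp x⁻¹, div_inv_eq_mul, qPochInf_eq_mul hp x,
    inv_mul_eq_div, mul_comm p x]
  field_simp
  ring

lemma thetaProd_mul_neg (hp : ‖p‖ < 1) (x : ℂ) :
    thetaProd p x * thetaProd p (-x) = thetaProd (p ^ 2) (x ^ 2) := by
  rw [thetaProd, thetaProd, thetaProd, ← div_pow, ← qPochInf_mul_neg hp, ← qPochInf_mul_neg hp,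
    div_neg]
  ring

lemma thetaProd_eq_even_mul_odd (hp : ‖p‖ < 1) (hp0 : p ≠ 0) (x : ℂ) :
    thetaProd p x = thetaProd (p ^ 2) x * thetaProd (p ^ 2) (x * p) := by
  rw [thetaProd, qPochInf_eq_even_mul_odd hp x, qPochInf_eq_even_mul_odd hp (p / x), thetaProd,
    thetaProd, sq, mul_div_mul_right p x hp0, mul_div_right_comm]
  ring

end QPochhammer

section PartialFractions

variable {ι κ : Type*} [DecidableEq ι] {s : Finset ι} {t : Finset κ} {u : ι → ℂ} {y : κ → ℂ}
  {m : ℕ} {o : ι}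

/-- The coefficient of `(1 - z * u k)⁻¹` in the partial fraction expansion of
`z ^ m * ∏ j ∈ t, (1 - z * y j) / ∏ l ∈ s, (1 - z * u l)`. -/
def pfCoeff (s : Finset ι) (t : Finset κ) (u : ι → ℂ) (y : κ → ℂ) (m : ℕ) (k : ι) : ℂ :=
  (u k)⁻¹ ^ m * (∏ j ∈ t, (1 - (u k)⁻¹ * y j)) / ∏ l ∈ s.erase k, (1 - (u k)⁻¹ * u l)

lemma eval_basis_inv (hu : ∀ k ∈ s, u k ≠ 0) (k : ι) (z : ℂ) :
    (Lagrange.basis s (fun i => (u i)⁻¹) k).eval z =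
      (∏ l ∈ s.erase k, (1 - z * u l)) / ∏ l ∈ s.erase k, (1 - (u k)⁻¹ * u l) := by
  rw [Lagrange.basis, Polynomial.eval_prod, ← prod_div_distrib]
  refine prod_congr rfl fun l hl => ?_
  have hl0 := hu l (mem_of_mem_erase hl)
  rw [Lagrange.basisDivisor, Polynomial.eval_mul, Polynomial.eval_C, Polynomial.eval_sub,
    Polynomial.eval_X, Polynomial.eval_C, ← mul_div_mul_left _ _ (neg_ne_zero.2 (inv_ne_zero hl0)),
    inv_mul_eq_div]
  congr 1 <;> field_simp <;> ring

lemma pow_mul_prod_eq_sum_pfCoeff (hu : ∀ k ∈ s, u k ≠ 0) (hinj : Set.InjOn u s)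
    (hdeg : m + #t < #s) (z : ℂ) :
    z ^ m * ∏ j ∈ t, (1 - z * y j) =
      ∑ k ∈ s, pfCoeff s t u y m k * ∏ l ∈ s.erase k, (1 - z * u l) := by
  let f : Polynomial ℂ := .X ^ m * ∏ j ∈ t, (1 - .X * .C (y j))
  have heval : ∀ w, f.eval w = w ^ m * ∏ j ∈ t, (1 - w * y j) := fun w => by
    simp only [f, Polynomial.eval_mul, Polynomial.eval_pow, Polynomial.eval_X, Polynomial.eval_prod,
      Polynomial.eval_sub, Polynomial.eval_one, Polynomial.eval_C]
  have hf : f.degree < #s := by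
    have hprod : (∏ j ∈ t, (1 - .X * .C (y j)) : Polynomial ℂ).degree ≤ (#t : ℕ) :=
      (Polynomial.degree_prod_le _ _).trans
        ((sum_le_card_nsmul _ _ 1 fun j _ => by compute_degree).trans (by simp))
    refine (Polynomial.degree_mul_le _ _).trans_lt ?_
    refine (add_le_add (Polynomial.degree_X_pow_le m) hprod).trans_lt ?_
    exact_mod_cast hdeg
  have hinj' : Set.InjOn (fun k => (u k)⁻¹) s := fun i hi j hj h => hinj hi hj (inv_injective h)
  rw [← heval, Lagrange.eq_interpolate hinj' hf, Lagrange.interpolate_apply,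
    Polynomial.eval_finsetSum]
  refine sum_congr rfl fun k _ => ?_
  rw [Polynomial.eval_mul, Polynomial.eval_C, heval, eval_basis_inv hu k, pfCoeff]
  ring

lemma pow_mul_prod_div_prod_eq_sum_pfCoeff (hu : ∀ k ∈ s, u k ≠ 0) (hinj : Set.InjOn u s)
    (hdeg : m + #t < #s) {z : ℂ} (hz : ∀ k ∈ s, 1 - z * u k ≠ 0) :
    z ^ m * (∏ j ∈ t, (1 - z * y j)) / ∏ k ∈ s, (1 - z * u k) =
      ∑ k ∈ s, pfCoeff s t u y m k * (1 - z * u k)⁻¹ := by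
  rw [pow_mul_prod_eq_sum_pfCoeff hu hinj hdeg, sum_div]
  refine sum_congr rfl fun k hk => ?_
  have hk0 := hz k hk
  have hrest : ∏ l ∈ s.erase k, (1 - z * u l) ≠ 0 :=
    prod_ne_zero_iff.2 fun l hl => hz l (mem_of_mem_erase hl)
  rw [← mul_prod_erase s _ hk]
  field_simp

lemma logDeriv_prod_one_sub_mul {z : ℂ} (hz : ∀ j ∈ t, 1 - z * y j ≠ 0) :
    logDeriv (fun w => ∏ j ∈ t, (1 - w * y j)) z = -∑ j ∈ t, y j / (1 - z * y j) := by
  rw [logDeriv_prod hz fun j _ => by fun_prop, ← sum_neg_distrib]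
  refine sum_congr rfl fun j _ => ?_
  have hderiv : HasDerivAt (fun w => 1 - w * y j) (-y j) z := by
    simpa using ((hasDerivAt_id z).mul_const (y j)).const_sub 1
  rw [logDeriv_apply, hderiv.deriv, neg_div]

lemma logDeriv_pow_mul_prod_one_sub_mul {z : ℂ} (hz0 : z ≠ 0) (hz : ∀ j ∈ t, 1 - z * y j ≠ 0) :
    logDeriv (fun w => w ^ m * ∏ j ∈ t, (1 - w * y j)) z =
      m / z - ∑ j ∈ t, y j / (1 - z * y j) := by
  rw [logDeriv_mul (f := fun w => w ^ m) z (pow_ne_zero _ hz0) (prod_ne_zero_iff.2 hz)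
    (by fun_prop) (by fun_prop), logDeriv_fun_pow differentiableAt_fun_id, logDeriv_id',
    logDeriv_prod_one_sub_mul hz]
  ring

lemma div_eq_logDeriv_sub_logDeriv {f g r : ℂ → ℂ} {a c v : ℂ} (hva : v * a = 1)
    (h : ∀ w, f w = c * g w + (1 - w * a) * r w) (hf : f v ≠ 0) (hg : g v ≠ 0)
    (hgd : DifferentiableAt ℂ g v) (hrd : DifferentiableAt ℂ r v) :
    r v / g v = c * (v * (logDeriv g v - logDeriv f v)) := by
  have hfg : f v = c * g v := by rw [h, hva, sub_self, zero_mul, add_zero]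
  have hlin : HasDerivAt (fun w => 1 - w * a) (-a) v := by
    simpa using ((hasDerivAt_id v).mul_const a).const_sub 1
  have hderiv : deriv f v = c * deriv g v - a * r v := by
    rw [funext h]
    refine (((hgd.hasDerivAt.const_mul c).add (hlin.mul hrd.hasDerivAt)).congr_deriv ?_).deriv
    rw [hva]
    ring
  rw [← div_mul_cancel₀ (deriv f v) hf, ← div_mul_cancel₀ (deriv g v) hg, hfg, ← logDeriv_apply,
    ← hfg, ← logDeriv_apply] at hderiv
  rw [div_eq_iff hg]
  linear_combination v * hderiv - r v * hva - v * logDeriv f v * hfg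

/-- The expansion at its own pole `(u o)⁻¹`; the polar term `k = o` vanishes since `0⁻¹ = 0`. -/
lemma sum_pfCoeff_mul_inv_at_pole (hu : ∀ k ∈ s, u k ≠ 0) (hinj : Set.InjOn u s)
    (hdeg : m + #t < #s) (ho : o ∈ s) (hy : ∀ j ∈ t, 1 - (u o)⁻¹ * y j ≠ 0) :
    ∑ k ∈ s, pfCoeff s t u y m k * (1 - (u o)⁻¹ * u k)⁻¹ =
      pfCoeff s t u y m o * (∑ j ∈ t, (u o)⁻¹ * y j / (1 - (u o)⁻¹ * y j)
        - ∑ l ∈ s.erase o, (u o)⁻¹ * u l / (1 - (u o)⁻¹ * u l) - m) := by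
  set v := (u o)⁻¹
  have ho0 := hu o ho
  have hv0 : v ≠ 0 := inv_ne_zero ho0
  have hvu : v * u o = 1 := inv_mul_cancel₀ ho0
  have hpole : ∀ l ∈ s.erase o, 1 - v * u l ≠ 0 := fun l hl h0 =>
    ne_of_mem_erase hl (hinj (mem_of_mem_erase hl) ho (by
      rw [← mul_right_inj' hv0, hvu]; exact (sub_eq_zero.1 h0).symm))
  set c := pfCoeff s t u y m
  let num : ℂ → ℂ := fun w => w ^ m * ∏ j ∈ t, (1 - w * y j)
  let den : ℂ → ℂ := fun w => ∏ l ∈ s.erase o, (1 - w * u l)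
  let rest : ℂ → ℂ := fun w =>
    ∑ k ∈ s.erase o, c k * ∏ l ∈ (s.erase o).erase k, (1 - w * u l)
  have hden : den v ≠ 0 := prod_ne_zero_iff.2 hpole
  have hnum : ∀ w, num w = c o * den w + (1 - w * u o) * rest w := fun w => by
    simp only [num, pow_mul_prod_eq_sum_pfCoeff hu hinj hdeg, ← add_sum_erase s _ ho, den, rest,
      mul_sum, c]
    refine congrArg _ (sum_congr rfl fun k hk => ?_)
    rw [← mul_prod_erase (s.erase k) _ (mem_erase.2 ⟨(ne_of_mem_erase hk).symm, ho⟩),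
      erase_right_comm]
    ring
  have hrest : rest v / den v = c o * (v * (logDeriv den v - logDeriv num v)) :=
    div_eq_logDeriv_sub_logDeriv hvu hnum
      (mul_ne_zero (pow_ne_zero _ hv0) (prod_ne_zero_iff.2 hy)) hden (by fun_prop) (by fun_prop)
  rw [← add_sum_erase s _ ho, hvu, sub_self, inv_zero, mul_zero, zero_add]
  calc _ = rest v / den v := by
        rw [sum_div]
        refine sum_congr rfl fun k hk => ?_
        have hk0 := hpole k hk
        have hrest_k : ∏ l ∈ (s.erase o).erase k, (1 - v * u l) ≠ 0 :=
          prod_ne_zero_iff.2 fun l hl => hpole l (mem_of_mem_erase hl)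
        simp only [den, ← mul_prod_erase _ _ hk]
        field_simp
    _ = _ := by
        rw [hrest, logDeriv_prod_one_sub_mul hpole, logDeriv_pow_mul_prod_one_sub_mul hv0 hy]
        simp only [mul_div_assoc, ← mul_sum]
        field_simp
        ring

end PartialFractions

section Windows

/-- The triangular number `n (n + 1) / 2`, extended to all integers. -/
def tri (n : ℤ) : ℤ := n * (n + 1) / 2

lemma two_mul_tri (n : ℤ) : 2 * tri n = n * (n + 1) :=
  Int.mul_ediv_cancel' (Int.even_mul_succ_self n).two_dvd

lemma tri_add (m n : ℤ) : tri (m + n) = tri m + tri n + m * n := by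
  linarith [two_mul_tri m, two_mul_tri n, two_mul_tri (m + n)]

lemma tri_add_one (n : ℤ) : tri (n + 1) = tri n + (n + 1) := by
  linarith [two_mul_tri n, two_mul_tri (n + 1)]

lemma tri_neg (n : ℤ) : tri (-n) = tri n - n := by
  linarith [two_mul_tri n, two_mul_tri (-n)]

variable {p x : ℂ}

lemma prod_Ico_zero_eq_qPoch (B : ℕ) : ∏ k ∈ Ico (0 : ℤ) B, (1 - x * p ^ k) = qPoch p x B := by
  induction B with
  | zero => simp [qPoch_zero]
  | succ B ih =>
    rw [Nat.cast_succ, ← insert_Ico_right_eq_Ico_add_one (Int.natCast_nonneg B),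
      prod_insert right_notMem_Ico, ih, qPoch_succ, zpow_natCast, mul_comm]

lemma prod_Ico_neg_eq_qPoch_mul (hp0 : p ≠ 0) (hx : x ≠ 0) (A B : ℕ) :
    ∏ k ∈ Ico (-A : ℤ) B, (1 - x * p ^ k) =
      qPoch p x B * qPoch p (p / x) A * ((-x) ^ A / p ^ tri A) := by
  induction A with
  | zero => simp [prod_Ico_zero_eq_qPoch, qPoch_zero, tri]
  | succ A ih =>
    have htri : tri (A + 1 : ℕ) = tri A + (A + 1 : ℕ) := mod_cast tri_add_one A
    have hcons : Ico (-(A + 1 : ℕ) : ℤ) B = insert (-(A + 1 : ℕ) : ℤ) (Ico (-A : ℤ) B) := by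
      rw [← insert_Ico_add_one_left_eq_Ico (by omega)]
      congr 2; omega
    have hpA := zpow_ne_zero (tri A) hp0
    rw [hcons, prod_insert (by simp), ih, qPoch_succ, htri, zpow_add₀ hp0, zpow_neg, zpow_natCast,
      pow_succ (-x)]
    field_simp
    ring

lemma prod_Ico_neg_erase_zero (hp0 : p ≠ 0) (A B : ℕ) :
    ∏ k ∈ (Ico (-A : ℤ) (B + 1)).erase 0, (1 - p ^ k) =
      qPoch p p B * qPoch p p A * ((-1) ^ A / p ^ tri A) := by
  have hsplit : (Ico (-A : ℤ) (B + 1)).erase 0 =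
      Ico (-A : ℤ) (0 : ℕ) ∪ Ico (0 + 1 : ℤ) (B + 1) := by
    ext k; simp only [mem_erase, mem_Ico, mem_union]; omega
  have hdisj : Disjoint (Ico (-A : ℤ) (0 : ℕ)) (Ico (0 + 1 : ℤ) (B + 1)) :=
    disjoint_left.2 fun k hk hk' => by simp only [mem_Ico] at hk hk'; omega
  have hneg := prod_Ico_neg_eq_qPoch_mul hp0 one_ne_zero A 0
  have hpos : ∏ k ∈ Ico (0 : ℤ) B, (1 - p ^ (k + 1)) = qPoch p p B := by
    simp only [← prod_Ico_zero_eq_qPoch, zpow_add_one₀ hp0, mul_comm p]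
  simp only [one_mul, div_one, qPoch_zero] at hneg
  rw [hsplit, prod_union hdisj, hneg, ← prod_Ico_add' (fun k : ℤ => 1 - p ^ k), hpos]
  ring

lemma exists_norm_le_of_tendsto {u : ℕ → ℂ} {a : ℂ} (h : Tendsto u atTop (𝓝 a)) :
    ∃ C, ∀ n, ‖u n‖ ≤ C := by
  obtain ⟨C, hC⟩ := (Metric.isBounded_range_of_tendsto u h).exists_norm_le
  exact ⟨C, fun n => hC _ ⟨n, rfl⟩⟩

/-- Tannery's theorem for sums over growing windows, with coefficients depending only on the
distances of `n` to the two ends of the window. -/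
lemma tendsto_sum_window {g : ℤ → ℂ} (hg : Summable g) {α β : ℕ → ℂ} {a b : ℂ}
    (hα : Tendsto α atTop (𝓝 a)) (hβ : Tendsto β atTop (𝓝 b)) :
    Tendsto (fun N : ℕ => ∑ n ∈ Ico (-N : ℤ) (N + 1), α (N + n).toNat * β (N - n).toNat * g n)
      atTop (𝓝 (a * b * ∑' n, g n)) := by
  obtain ⟨A, hA⟩ := exists_norm_le_of_tendsto hα
  obtain ⟨B, hB⟩ := exists_norm_le_of_tendsto hβ
  let F : ℕ → ℤ → ℂ := fun N => (Ico (-N : ℤ) (N + 1) : Set ℤ).indicator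
    fun n => α (N + n).toNat * β (N - n).toNat * g n
  have hF : ∀ N, ∑' n, F N n =
      ∑ n ∈ Ico (-N : ℤ) (N + 1), α (N + n).toNat * β (N - n).toNat * g n :=
    fun N => (sum_eq_tsum_indicator _ _).symm
  have hlim : ∀ n, Tendsto (F · n) atTop (𝓝 (a * b * g n)) := fun n => by
    have hplus : Tendsto (fun N : ℕ => ((N : ℤ) + n).toNat) atTop atTop :=
      tendsto_atTop_mono (fun N => by omega) (tendsto_sub_atTop_nat n.natAbs)
    have hminus : Tendsto (fun N : ℕ => ((N : ℤ) - n).toNat) atTop atTop :=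
      tendsto_atTop_mono (fun N => by omega) (tendsto_sub_atTop_nat n.natAbs)
    refine (((hα.comp hplus).mul (hβ.comp hminus)).mul_const (g n)).congr' ?_
    filter_upwards [eventually_ge_atTop n.natAbs] with N hN
    have hmem : n ∈ Ico (-N : ℤ) (N + 1) := mem_Ico.2 ⟨by omega, by omega⟩
    simp only [F, Set.indicator_of_mem (mem_coe.2 hmem), Function.comp_apply]
  simp only [← hF, ← tsum_mul_left]
  refine tendsto_tsum_of_dominated_convergence (hg.norm.mul_left (A * B)) hlim
    (.of_forall fun N n => ?_)
  refine (norm_indicator_le_norm_self _ _).trans ?_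
  rw [norm_mul, norm_mul]
  gcongr
  · exact (norm_nonneg _).trans (hA 0)
  · exact hA _
  · exact hB _

end Windows

section LambertSeries

variable {p x : ℂ}

/-- The Lambert series `∑ₙ x pⁿ / (1 - x pⁿ)`. -/
def lambert (p x : ℂ) : ℂ := ∑' n : ℕ, x * p ^ n / (1 - x * p ^ n)

/-- The logarithmic derivative `x θ'(x) / θ(x)` of `thetaProd p`, as a difference of two Lambert
series. -/
def thetaLogDeriv (p x : ℂ) : ℂ := lambert p (p / x) - lambert p x

lemma summable_lambert (hp : ‖p‖ < 1) (x : ℂ) :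
    Summable fun n : ℕ => x * p ^ n / (1 - x * p ^ n) := by
  have hpow : Tendsto (fun n : ℕ => x * p ^ n) atTop (𝓝 0) := by
    simpa using (tendsto_pow_atTop_nhds_zero_of_norm_lt_one hp).const_mul x
  have hinv : Tendsto (fun n : ℕ => (1 - x * p ^ n)⁻¹) atTop (𝓝 1) := by
    simpa using (hpow.const_sub 1).inv₀ (by simp)
  refine summable_of_isBigO_nat (summable_norm_geometric hp x) ?_
  simpa [div_eq_mul_inv] using
    (Asymptotics.isBigO_refl (fun n : ℕ => x * p ^ n) atTop).norm_right.mul (hinv.isBigO_one ℝ)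

lemma lambert_eq_add (hp : ‖p‖ < 1) (x : ℂ) :
    lambert p x = x / (1 - x) + lambert p (x * p) := by
  rw [lambert, (summable_lambert hp x).tsum_eq_zero_add, pow_zero, mul_one, lambert]
  simp only [pow_succ', mul_assoc]

/-- By the convention `1 / 0 = 0`. -/
lemma thetaLogDeriv_one (hp : ‖p‖ < 1) : thetaLogDeriv p 1 = 0 := by
  rw [thetaLogDeriv, lambert_eq_add hp 1]
  simp

lemma sum_Ico_neg_eq (hp0 : p ≠ 0) (hx0 : x ≠ 0) (hx : ∀ i : ℕ, p / x * p ^ i ≠ 1) (A B : ℕ) :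
    ∑ k ∈ Ico (-A : ℤ) B, x * p ^ k / (1 - x * p ^ k) =
      ∑ i ∈ range B, x * p ^ i / (1 - x * p ^ i) -
        ∑ i ∈ range A, p / x * p ^ i / (1 - p / x * p ^ i) - A := by
  induction A with
  | zero =>
    rw [range_zero, sum_empty, Nat.cast_zero, Nat.cast_zero, neg_zero, sub_zero, sub_zero]
    induction B with
    | zero => simp
    | succ B ih =>
      rw [Nat.cast_succ, ← insert_Ico_right_eq_Ico_add_one (Int.natCast_nonneg B),
        sum_insert right_notMem_Ico, ih, sum_range_succ, zpow_natCast, add_comm]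
  | succ A ih =>
    have hcons : Ico (-(A + 1 : ℕ) : ℤ) B = insert (-(A + 1 : ℕ) : ℤ) (Ico (-A : ℤ) B) := by
      rw [← insert_Ico_add_one_left_eq_Ico (by omega)]
      congr 2; omega
    have hreflect : x * p ^ (-(A + 1 : ℕ) : ℤ) / (1 - x * p ^ (-(A + 1 : ℕ) : ℤ)) =
        -(p / x * p ^ A / (1 - p / x * p ^ A)) - 1 := by
      have hinv : x * p ^ (-(A + 1 : ℕ) : ℤ) = (p / x * p ^ A)⁻¹ := by
        rw [zpow_neg, zpow_natCast, pow_succ]; field_simp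
      have h1 : 1 - p / x * p ^ A ≠ 0 := sub_ne_zero.2 (hx A).symm
      have h2 : p / x * p ^ A ≠ 0 := by positivity
      rw [hinv]
      generalize p / x * p ^ A = w at *
      have h3 : w - 1 ≠ 0 := fun h => h1 (by linear_combination -h)
      field_simp
      ring
    rw [hcons, sum_insert (by simp), ih, hreflect, sum_range_succ, Nat.cast_succ]
    ring

lemma tendsto_sum_window_thetaLogDeriv (hp : ‖p‖ < 1) (hp0 : p ≠ 0) (hx0 : x ≠ 0)
    (hx : ∀ i : ℕ, p / x * p ^ i ≠ 1) {e : ℕ → ℕ} (he : Tendsto e atTop atTop):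
    Tendsto (fun N : ℕ => ∑ k ∈ Ico (-N : ℤ) (e N), x * p ^ k / (1 - x * p ^ k) + N) atTop
      (𝓝 (-thetaLogDeriv p x)) := by
  rw [thetaLogDeriv, neg_sub]
  refine ((((summable_lambert hp x).tendsto_sum_tsum_nat).comp he).sub
    ((summable_lambert hp (p / x)).tendsto_sum_tsum_nat)).congr fun N => ?_
  rw [sum_Ico_neg_eq hp0 hx0 hx, sub_add_cancel]
  rfl
end LambertSeries

section Appell

/-- The Appell–Lerch sum `∑ₙ rⁿ p ^ (d n (n + 1) / 2) / (1 - y pⁿ)` of level `d`. If `y pⁿ = 1`, the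
polar term is omitted, since `0⁻¹ = 0`. -/
def appell (d : ℕ) (p r y : ℂ) : ℂ := ∑' n : ℤ, r ^ n * (p ^ tri n) ^ d * (1 - y * p ^ n)⁻¹

variable {σ τ : Type*} {p z : ℂ} {a : σ → ℂ} {b : τ → ℂ} {d N A B : ℕ} {n : ℤ} {o : σ}

/-- The reciprocals of the zeros of `∏ᵢ θ(z aᵢ)`. -/
def latticePoint (p : ℂ) (a : σ → ℂ) (k : σ × ℤ) : ℂ := a k.1 * p ^ k.2

lemma latticePoint_injective (hp : ‖p‖ < 1) (hp0 : p ≠ 0) (ha : ∀ i, a i ≠ 0)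
    (hsep : ∀ i l, i ≠ l → OffLattice p (a i / a l)) : Function.Injective (latticePoint p a) := by
  rintro ⟨i, n⟩ ⟨l, m⟩ (h : a i * p ^ n = a l * p ^ m)
  obtain rfl | hil := eq_or_ne i l
  · have hnorm := congrArg norm (mul_left_cancel₀ (ha i) h)
    rw [norm_zpow, norm_zpow] at hnorm
    rw [zpow_right_injective₀ (norm_pos_iff.2 hp0) hp.ne hnorm]
  · refine absurd ?_ (hsep i l hil (n - m))
    have hpm := zpow_ne_zero m hp0
    have hal := ha l
    rw [zpow_sub₀ hp0]
    field_simp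
    exact h

variable [Fintype σ] [Fintype τ]

/-- The indices `(i, n)` of the zeros `z = (aᵢ pⁿ)⁻¹` of `∏ᵢ θ(z aᵢ)` in the
window `-N ≤ n ≤ N`. -/
def poleWindow (σ : Type*) [Fintype σ] (N : ℕ) : Finset (σ × ℤ) := univ ×ˢ Ico (-N : ℤ) (N + 1)

/-- The indices `(j, n)` of the zeros `z = (bⱼ pⁿ)⁻¹` of `∏ⱼ θ(z bⱼ)` in the
window `-N ≤ n < N`. -/
def zeroWindow (τ : Type*) [Fintype τ] (N : ℕ) : Finset (τ × ℤ) := univ ×ˢ Ico (-N : ℤ) N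

/-- The base `r` of the Appell–Lerch sum attached to the pole `z = (a i)⁻¹`. -/
def thetaMultiplier (d : ℕ) (a : σ → ℂ) (b : τ → ℂ) (i : σ) : ℂ :=
  (-a i) ^ d * ((∏ j, b j) / ∏ l, a l)

/-- The normalisation common to all truncated partial fraction coefficients. -/
def windowScale (p : ℂ) (a : σ → ℂ) (b : τ → ℂ) (d N : ℕ) : ℂ :=
  ((-1) ^ d * ((∏ j, b j) / ∏ l, a l)) ^ N * (p ^ tri N) ^ d

lemma prod_window_shift (hp0 : p ≠ 0) (c x : ℂ) (k₁ k₂ : ℤ) :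
    ∏ k ∈ Ico k₁ k₂, (1 - (c * p ^ n)⁻¹ * (x * p ^ k)) =
      ∏ k ∈ Ico (k₁ - n) (k₂ - n), (1 - x / c * p ^ k) := by
  rw [sub_eq_add_neg, sub_eq_add_neg, ← prod_Ico_add' (fun k => 1 - x / c * p ^ k)]
  refine prod_congr rfl fun k _ => ?_
  rw [← sub_eq_add_neg, zpow_sub₀ hp0]
  ring

lemma prod_zeroWindow_eq (hp0 : p ≠ 0) (hb : ∀ j, b j ≠ 0) {c : ℂ} (hc : c ≠ 0)
    (hA : (A : ℤ) = N + n) (hB : (B : ℤ) = N - n) :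
    ∏ k ∈ zeroWindow τ N, (1 - (c * p ^ n)⁻¹ * latticePoint p b k) =
      (∏ j, qPoch p (b j / c) B) * (∏ j, qPoch p (p / (b j / c)) A) *
        ∏ j, ((-(b j / c)) ^ A / p ^ tri A) := by
  rw [zeroWindow, prod_product, ← prod_mul_distrib, ← prod_mul_distrib]
  refine prod_congr rfl fun j _ => ?_
  simp only [latticePoint, prod_window_shift hp0]
  rw [← prod_Ico_neg_eq_qPoch_mul hp0 (div_ne_zero (hb j) hc), hA, hB, neg_add, sub_eq_add_neg]

lemma prod_div_prod_eq_thetaMultiplier_pow (hcard : Fintype.card σ = Fintype.card τ + d)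
    (hp0 : p ≠ 0) (ha : ∀ i, a i ≠ 0) (i : σ) (A : ℕ) :
    (∏ j, ((-(b j / a i)) ^ A / p ^ tri A)) / ∏ l, ((-(a l / a i)) ^ A / p ^ tri A) =
      thetaMultiplier d a b i ^ A * (p ^ tri A) ^ d := by
  have hai : -a i ≠ 0 := neg_ne_zero.2 (ha i)
  have hprod : ∏ l, a l ≠ 0 := prod_ne_zero_iff.2 fun l _ => ha l
  simp only [← div_neg, prod_div_distrib, prod_pow, prod_const, card_univ, hcard, pow_add,
    thetaMultiplier, mul_pow, div_pow]
  field_simp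

lemma thetaMultiplier_pow_eq_windowScale_mul (hp0 : p ≠ 0) (ha : ∀ i, a i ≠ 0) (hb : ∀ j, b j ≠ 0)
    (i : σ) (hA : (A : ℤ) = N + n) :
    (a i * p ^ n)⁻¹ ^ (N * d) * (thetaMultiplier d a b i ^ A * (p ^ tri A) ^ d) =
      windowScale p a b d N * (thetaMultiplier d a b i ^ n * (p ^ tri n) ^ d) := by
  have hmult : thetaMultiplier d a b i ≠ 0 := mul_ne_zero (pow_ne_zero _ (neg_ne_zero.2 (ha i)))
    (div_ne_zero (prod_ne_zero_iff.2 fun j _ => hb j) (prod_ne_zero_iff.2 fun l _ => ha l))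
  have hscale : thetaMultiplier d a b i ^ N =
      (a i ^ N) ^ d * ((-1) ^ d * ((∏ j, b j) / ∏ l, a l)) ^ N := by
    rw [thetaMultiplier, neg_pow (a i)]; ring
  have hpole : a i ^ N * p ^ (N * n) ≠ 0 :=
    mul_ne_zero (pow_ne_zero _ (ha i)) (zpow_ne_zero _ hp0)
  have hpow : (a i * p ^ n) ^ N = a i ^ N * p ^ (N * n) := by
    rw [mul_pow, ← zpow_natCast (p ^ n), ← zpow_mul, mul_comm n]
  rw [windowScale, ← zpow_natCast (thetaMultiplier d a b i) A, hA, zpow_add₀ hmult, zpow_natCast,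
    hscale, tri_add, zpow_add₀ hp0, zpow_add₀ hp0, pow_mul, inv_pow, hpow, inv_pow,
    inv_mul_eq_iff_eq_mul₀ (pow_ne_zero _ hpole)]
  ring

lemma card_zeroWindow_lt [Nonempty σ] (hcard : Fintype.card σ = Fintype.card τ + d) (N : ℕ) :
    N * d + #(zeroWindow τ N) < #(poleWindow σ N) := by
  have hpos : 0 < Fintype.card σ := Fintype.card_pos
  have hI : ((N : ℤ) - -N).toNat = 2 * N := by omega
  have hI' : ((N : ℤ) + 1 - -N).toNat = 2 * N + 1 := by omega
  rw [zeroWindow, poleWindow, card_product, card_product, Int.card_Ico, Int.card_Ico, hI, hI',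
    card_univ, card_univ]
  nlinarith

lemma windowScale_ne_zero (hp0 : p ≠ 0) (ha : ∀ i, a i ≠ 0) (hb : ∀ j, b j ≠ 0) :
    windowScale p a b d N ≠ 0 :=
  mul_ne_zero (pow_ne_zero _ (mul_ne_zero (pow_ne_zero _ (by norm_num))
    (div_ne_zero (prod_ne_zero_iff.2 fun j _ => hb j) (prod_ne_zero_iff.2 fun l _ => ha l))))
    (pow_ne_zero _ (zpow_ne_zero _ hp0))

lemma window_quotient_eq (hcard : Fintype.card σ = Fintype.card τ + d) (hp0 : p ≠ 0)
    (ha : ∀ i, a i ≠ 0) (hb : ∀ j, b j ≠ 0) (hz : z ≠ 0) (N : ℕ) :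
    z ^ (N * d) * (∏ k ∈ zeroWindow τ N, (1 - z * latticePoint p b k)) /
        ∏ k ∈ poleWindow σ N, (1 - z * latticePoint p a k) =
      windowScale p a b d N * ((∏ j, qPoch p (z * b j) N * qPoch p (p / (z * b j)) N) /
        ∏ i, qPoch p (z * a i) (N + 1) * qPoch p (p / (z * a i)) N) := by
  have hzeros : ∏ k ∈ zeroWindow τ N, (1 - z * latticePoint p b k) =
      (∏ j, qPoch p (z * b j) N * qPoch p (p / (z * b j)) N) *
        ∏ j, ((-(z * b j)) ^ N / p ^ tri N) := by
    rw [zeroWindow, prod_product, ← prod_mul_distrib]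
    simp only [latticePoint, ← mul_assoc, ← prod_Ico_neg_eq_qPoch_mul hp0 (mul_ne_zero hz (hb _))]
  have hpoles : ∏ k ∈ poleWindow σ N, (1 - z * latticePoint p a k) =
      (∏ i, qPoch p (z * a i) (N + 1) * qPoch p (p / (z * a i)) N) *
        ∏ i, ((-(z * a i)) ^ N / p ^ tri N) := by
    rw [poleWindow, prod_product, ← prod_mul_distrib]
    simp only [latticePoint, ← mul_assoc, ← prod_Ico_neg_eq_qPoch_mul hp0 (mul_ne_zero hz (ha _)),
      Nat.cast_succ]
  have hprod : ∏ l, a l ≠ 0 := prod_ne_zero_iff.2 fun l _ => ha l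
  have hmonomial : z ^ (N * d) * (∏ j, ((-(z * b j)) ^ N / p ^ tri N)) /
      ∏ i, ((-(z * a i)) ^ N / p ^ tri N) = windowScale p a b d N := by
    have hz' : -z ≠ 0 := neg_ne_zero.2 hz
    have hzpow : z ^ (N * d) = ((-z) ^ d) ^ N * ((-1) ^ d) ^ N := by
      rw [← mul_pow, ← mul_pow, neg_mul_neg, mul_one, ← pow_mul, mul_comm]
    simp only [← neg_mul, prod_div_distrib, prod_pow, prod_const, card_univ, hcard, pow_add,
      windowScale, mul_pow, div_pow, prod_mul_distrib, hzpow]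
    field_simp
  rw [hzeros, hpoles, ← hmonomial]
  ring

lemma tendsto_sum_zeroWindow_sub_sum_poleWindow (hcard : Fintype.card σ = Fintype.card τ + d)
    (hp : ‖p‖ < 1) (hp0 : p ≠ 0) (ha : ∀ i, a i ≠ 0) (hb : ∀ j, b j ≠ 0) {c : ℂ} (hc : c ≠ 0)
    (hac : ∀ i, ∀ n : ℕ, p / (c * a i) * p ^ n ≠ 1)
    (hbc : ∀ j, ∀ n : ℕ, p / (c * b j) * p ^ n ≠ 1) :
    Tendsto (fun N : ℕ =>
      ∑ k ∈ zeroWindow τ N, c * latticePoint p b k / (1 - c * latticePoint p b k) -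
        ∑ k ∈ poleWindow σ N, c * latticePoint p a k / (1 - c * latticePoint p a k) -
          ((N * d : ℕ) : ℂ)) atTop
      (𝓝 (∑ i, thetaLogDeriv p (c * a i) - ∑ j, thetaLogDeriv p (c * b j))) := by
  have hzeros := tendsto_finsetSum univ fun j _ => tendsto_sum_window_thetaLogDeriv hp hp0
    (mul_ne_zero hc (hb j)) (hbc j) tendsto_id
  have hpoles := tendsto_finsetSum univ fun i _ => tendsto_sum_window_thetaLogDeriv hp hp0
    (mul_ne_zero hc (ha i)) (hac i) (tendsto_add_atTop_nat 1)
  convert hzeros.sub hpoles using 2 with N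
  · rw [zeroWindow, poleWindow, sum_product, sum_product]
    simp only [latticePoint, sum_add_distrib, sum_const, card_univ, hcard, nsmul_eq_mul, id,
      mul_assoc]
    push_cast
    ring
  · simp only [sum_neg_distrib]
    ring

variable [DecidableEq σ]

/-- The coefficient of the Appell–Lerch sum attached to the pole `z = (a i)⁻¹` in the partial
fraction expansion of `∏ⱼ θ(z bⱼ) / ∏ᵢ θ(z aᵢ)`. -/
def thetaResidue (p : ℂ) (a : σ → ℂ) (b : τ → ℂ) (i : σ) : ℂ :=
  (∏ j, thetaProd p (b j / a i)) /
    (qPochInf p p ^ 2 * ∏ l ∈ univ.erase i, thetaProd p (a l / a i))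

/-- The dependence of the truncated partial fraction coefficient at `(i, n)` on `N + n`. -/
def leftFactor (p : ℂ) (a : σ → ℂ) (b : τ → ℂ) (i : σ) (A : ℕ) : ℂ :=
  (∏ j, qPoch p (p / (b j / a i)) A) /
    (qPoch p p A * ∏ l ∈ univ.erase i, qPoch p (p / (a l / a i)) A)

/-- The dependence of the truncated partial fraction coefficient at `(i, n)` on `N - n`. -/
def rightFactor (p : ℂ) (a : σ → ℂ) (b : τ → ℂ) (i : σ) (B : ℕ) : ℂ :=
  (∏ j, qPoch p (b j / a i) B) /
    (qPoch p p B * ∏ l ∈ univ.erase i, qPoch p (a l / a i) (B + 1))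

lemma prod_erase_univ_product (s : Finset ℤ) (n : ℤ) (i : σ) (f : σ × ℤ → ℂ) :
    ∏ k ∈ (univ ×ˢ s).erase (i, n), f k =
      (∏ k ∈ s.erase n, f (i, k)) * ∏ l ∈ univ.erase i, ∏ k ∈ s, f (l, k) := by
  have hsplit : (univ ×ˢ s).erase (i, n) = {i} ×ˢ s.erase n ∪ univ.erase i ×ˢ s := by
    ext ⟨l, k⟩
    obtain rfl | hl := eq_or_ne l i
    · simp
    · simp [hl, hl.symm]
  have hdisj : Disjoint ({i} ×ˢ s.erase n) (univ.erase i ×ˢ s) :=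
    disjoint_product.2 (.inl (by simp))
  rw [hsplit, prod_union hdisj, prod_product, prod_singleton, prod_product]

lemma prod_poleWindow_erase_eq (hp0 : p ≠ 0) (ha : ∀ i, a i ≠ 0) (i : σ)
    (hA : (A : ℤ) = N + n) (hB : (B : ℤ) = N - n) :
    ∏ k ∈ (poleWindow σ N).erase (i, n),
        (1 - (latticePoint p a (i, n))⁻¹ * latticePoint p a k) =
      (qPoch p p B * ∏ l ∈ univ.erase i, qPoch p (a l / a i) (B + 1)) *
        (qPoch p p A * ∏ l ∈ univ.erase i, qPoch p (p / (a l / a i)) A) *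
        ∏ l, ((-(a l / a i)) ^ A / p ^ tri A) := by
  have hown : ∏ k ∈ (Ico (-N : ℤ) (N + 1)).erase n, (1 - (a i * p ^ n)⁻¹ * (a i * p ^ k)) =
      qPoch p p B * qPoch p p A * ((-1) ^ A / p ^ tri A) := by
    rw [← prod_Ico_neg_erase_zero hp0]
    refine prod_nbij' (· - n) (· + n) ?_ ?_ ?_ ?_ fun k _ => ?_
    rotate_right
    · rw [zpow_sub₀ hp0]
      have := ha i
      field_simp
    all_goals intro k hk; simp only [mem_erase, mem_Ico] at hk ⊢; omega
  have hother : ∀ l, ∏ k ∈ Ico (-N : ℤ) (N + 1), (1 - (a i * p ^ n)⁻¹ * (a l * p ^ k)) =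
      qPoch p (a l / a i) (B + 1) * qPoch p (p / (a l / a i)) A *
        ((-(a l / a i)) ^ A / p ^ tri A) := fun l => by
    rw [prod_window_shift hp0, ← prod_Ico_neg_eq_qPoch_mul hp0 (div_ne_zero (ha l) (ha i)),
      Nat.cast_succ, hA, hB]
    congr 2 <;> ring
  rw [poleWindow, prod_erase_univ_product]
  simp only [latticePoint, hown, hother, prod_mul_distrib]
  rw [← mul_prod_erase univ _ (mem_univ i), div_self (ha i)]
  ring

lemma pfCoeff_window (hcard : Fintype.card σ = Fintype.card τ + d) (hp0 : p ≠ 0)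
    (ha : ∀ i, a i ≠ 0) (hb : ∀ j, b j ≠ 0) (i : σ) (hn : n ∈ Ico (-N : ℤ) (N + 1)) :
    pfCoeff (poleWindow σ N) (zeroWindow τ N) (latticePoint p a) (latticePoint p b) (N * d) (i, n) =
      windowScale p a b d N * (leftFactor p a b i (N + n).toNat *
        rightFactor p a b i (N - n).toNat * (thetaMultiplier d a b i ^ n * (p ^ tri n) ^ d)) := by
  rw [mem_Ico] at hn
  have hA : ((N + n).toNat : ℤ) = N + n := Int.toNat_of_nonneg (by omega)
  have hB : ((N - n).toNat : ℤ) = N - n := Int.toNat_of_nonneg (by omega)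
  rw [pfCoeff, prod_poleWindow_erase_eq hp0 ha i hA hB, latticePoint,
    prod_zeroWindow_eq hp0 hb (ha i) hA hB, mul_left_comm (windowScale p a b d N),
    ← thetaMultiplier_pow_eq_windowScale_mul hp0 ha hb i hA,
    ← prod_div_prod_eq_thetaMultiplier_pow hcard hp0 ha, leftFactor, rightFactor]
  ring

lemma tendsto_leftFactor (hp : ‖p‖ < 1) (hsep : ∀ i l, i ≠ l → OffLattice p (a i / a l)) (i : σ) :
    Tendsto (leftFactor p a b i) atTop (𝓝 ((∏ j, qPochInf p (p / (b j / a i))) /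
      (qPochInf p p * ∏ l ∈ univ.erase i, qPochInf p (p / (a l / a i))))) := by
  refine (tendsto_finsetProd _ fun j _ => tendsto_qPoch hp _).div
    ((tendsto_qPoch hp p).mul (tendsto_finsetProd _ fun l _ => tendsto_qPoch hp _))
    (mul_ne_zero (qPochInf_self_ne_zero hp) (prod_ne_zero_iff.2 fun l hl => ?_))
  exact qPochInf_ne_zero hp (hsep l i (ne_of_mem_erase hl)).div_ne_one_of_nat

lemma tendsto_rightFactor (hp : ‖p‖ < 1) (hsep : ∀ i l, i ≠ l → OffLattice p (a i / a l)) (i : σ) :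
    Tendsto (rightFactor p a b i) atTop (𝓝 ((∏ j, qPochInf p (b j / a i)) /
      (qPochInf p p * ∏ l ∈ univ.erase i, qPochInf p (a l / a i)))) := by
  refine (tendsto_finsetProd _ fun j _ => tendsto_qPoch hp _).div
    ((tendsto_qPoch hp p).mul (tendsto_finsetProd _ fun l _ =>
      (tendsto_qPoch hp _).comp (tendsto_add_atTop_nat 1)))
    (mul_ne_zero (qPochInf_self_ne_zero hp) (prod_ne_zero_iff.2 fun l hl => ?_))
  exact qPochInf_ne_zero hp (hsep l i (ne_of_mem_erase hl)).ne_one_of_nat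

lemma tendsto_sum_poleWindow (hp : ‖p‖ < 1) (hsep : ∀ i l, i ≠ l → OffLattice p (a i / a l))
    (hsum : ∀ i, Summable fun n : ℤ =>
      thetaMultiplier d a b i ^ n * (p ^ tri n) ^ d * (1 - z * a i * p ^ n)⁻¹) :
    Tendsto (fun N : ℕ => ∑ i, ∑ n ∈ Ico (-N : ℤ) (N + 1),
      leftFactor p a b i (N + n).toNat * rightFactor p a b i (N - n).toNat *
        (thetaMultiplier d a b i ^ n * (p ^ tri n) ^ d * (1 - z * a i * p ^ n)⁻¹)) atTop
      (𝓝 (∑ i, thetaResidue p a b i * appell d p (thetaMultiplier d a b i) (z * a i))) := by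
  refine tendsto_finsetSum _ fun i _ => ?_
  convert tendsto_sum_window (hsum i) (tendsto_leftFactor (b := b) hp hsep i)
    (tendsto_rightFactor (b := b) hp hsep i) using 3
  · simp only [thetaResidue, thetaProd, prod_mul_distrib]
    ring
  · rfl

lemma sum_pfCoeff_window (hcard : Fintype.card σ = Fintype.card τ + d) (hp0 : p ≠ 0)
    (ha : ∀ i, a i ≠ 0) (hb : ∀ j, b j ≠ 0) (N : ℕ) :
    ∑ k ∈ poleWindow σ N, pfCoeff (poleWindow σ N) (zeroWindow τ N) (latticePoint p a)
        (latticePoint p b) (N * d) k * (1 - z * latticePoint p a k)⁻¹ =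
      windowScale p a b d N * ∑ i, ∑ n ∈ Ico (-N : ℤ) (N + 1),
        leftFactor p a b i (N + n).toNat * rightFactor p a b i (N - n).toNat *
          (thetaMultiplier d a b i ^ n * (p ^ tri n) ^ d * (1 - z * a i * p ^ n)⁻¹) := by
  rw [mul_sum, poleWindow, sum_product, ← poleWindow]
  refine sum_congr rfl fun i _ => ?_
  rw [mul_sum]
  refine sum_congr rfl fun n hn => ?_
  rw [pfCoeff_window hcard hp0 ha hb i hn, latticePoint]
  ring

theorem prod_thetaProd_div_prod_thetaProd [Nonempty σ]
    (hcard : Fintype.card σ = Fintype.card τ + d) (hp : ‖p‖ < 1) (hp0 : p ≠ 0)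
    (ha : ∀ i, a i ≠ 0) (hb : ∀ j, b j ≠ 0) (hsep : ∀ i l, i ≠ l → OffLattice p (a i / a l))
    (hz : z ≠ 0) (hza : ∀ i, OffLattice p (z * a i))
    (hsum : ∀ i, Summable fun n : ℤ =>
      thetaMultiplier d a b i ^ n * (p ^ tri n) ^ d * (1 - z * a i * p ^ n)⁻¹) :
    (∏ j, thetaProd p (z * b j)) / ∏ i, thetaProd p (z * a i) =
      ∑ i, thetaResidue p a b i * appell d p (thetaMultiplier d a b i) (z * a i) := by
  have hlim : Tendsto (fun N : ℕ => (∏ j, qPoch p (z * b j) N * qPoch p (p / (z * b j)) N) /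
      ∏ i, qPoch p (z * a i) (N + 1) * qPoch p (p / (z * a i)) N) atTop
      (𝓝 ((∏ j, thetaProd p (z * b j)) / ∏ i, thetaProd p (z * a i))) :=
    (tendsto_finsetProd _ fun j _ => (tendsto_qPoch hp _).mul (tendsto_qPoch hp _)).div
      (tendsto_finsetProd _ fun i _ => ((tendsto_qPoch hp _).comp (tendsto_add_atTop_nat 1)).mul
        (tendsto_qPoch hp _)) (prod_ne_zero_iff.2 fun i _ => thetaProd_ne_zero hp (hza i))
  refine tendsto_nhds_unique hlim ((tendsto_sum_poleWindow hp hsep hsum).congr fun N => ?_)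
  refine mul_left_cancel₀ (windowScale_ne_zero (d := d) (N := N) hp0 ha hb) ?_
  rw [← sum_pfCoeff_window hcard hp0 ha hb, ← window_quotient_eq hcard hp0 ha hb hz]
  refine (pow_mul_prod_div_prod_eq_sum_pfCoeff (fun k _ => ?_)
    (latticePoint_injective hp hp0 ha hsep).injOn (card_zeroWindow_lt hcard N) fun k _ => ?_).symm
  · exact mul_ne_zero (ha _) (zpow_ne_zero _ hp0)
  · rw [latticePoint, ← mul_assoc]
    exact (hza k.1).one_sub_ne_zero k.2

lemma sum_window_at_pole (hcard : Fintype.card σ = Fintype.card τ + d)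
    (hp : ‖p‖ < 1) (hp0 : p ≠ 0) (ha : ∀ i, a i ≠ 0) (hb : ∀ j, b j ≠ 0)
    (hsep : ∀ i l, i ≠ l → OffLattice p (a i / a l)) (o : σ) (hbo : ∀ j, OffLattice p (b j / a o))
    (N : ℕ) :
    ∑ i, ∑ n ∈ Ico (-N : ℤ) (N + 1),
      leftFactor p a b i (N + n).toNat * rightFactor p a b i (N - n).toNat *
        (thetaMultiplier d a b i ^ n * (p ^ tri n) ^ d * (1 - (a o)⁻¹ * a i * p ^ n)⁻¹) =
      leftFactor p a b o N * rightFactor p a b o N *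
        (∑ k ∈ zeroWindow τ N, (a o)⁻¹ * latticePoint p b k / (1 - (a o)⁻¹ * latticePoint p b k) -
          ∑ k ∈ poleWindow σ N, (a o)⁻¹ * latticePoint p a k / (1 - (a o)⁻¹ * latticePoint p a k) -
            ((N * d : ℕ) : ℂ)) := by
  have := Nonempty.intro o
  have ho : (o, (0 : ℤ)) ∈ poleWindow σ N := by simp [poleWindow]
  have hpoint : latticePoint p a (o, 0) = a o := by rw [latticePoint, zpow_zero, mul_one]
  have hmem : (0 : ℤ) ∈ Ico (-N : ℤ) (N + 1) := mem_Ico.2 ⟨by omega, by omega⟩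
  have hpole := sum_pfCoeff_mul_inv_at_pole (m := N * d) (u := latticePoint p a)
    (y := latticePoint p b) (fun k _ => mul_ne_zero (ha k.1) (zpow_ne_zero k.2 hp0))
    (latticePoint_injective hp hp0 ha hsep).injOn (card_zeroWindow_lt hcard N) ho fun k _ => by
      rw [hpoint, latticePoint, ← mul_assoc, ← div_eq_inv_mul]
      exact (hbo k.1).one_sub_ne_zero k.2
  rw [sum_pfCoeff_window hcard hp0 ha hb, pfCoeff_window hcard hp0 ha hb o hmem, hpoint,
    sum_erase _ (by rw [hpoint, inv_mul_cancel₀ (ha o), sub_self, div_zero]), mul_assoc] at hpole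
  refine (mul_left_cancel₀ (windowScale_ne_zero hp0 ha hb) hpole).trans ?_
  simp [tri]

theorem sum_thetaResidue_mul_appell_at_pole (hcard : Fintype.card σ = Fintype.card τ + d)
    (hp : ‖p‖ < 1) (hp0 : p ≠ 0) (ha : ∀ i, a i ≠ 0) (hb : ∀ j, b j ≠ 0)
    (hsep : ∀ i l, i ≠ l → OffLattice p (a i / a l)) (o : σ) (hbo : ∀ j, OffLattice p (b j / a o))
    (hsum : ∀ i, Summable fun n : ℤ =>
      thetaMultiplier d a b i ^ n * (p ^ tri n) ^ d * (1 - (a o)⁻¹ * a i * p ^ n)⁻¹) :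
    ∑ i, thetaResidue p a b i * appell d p (thetaMultiplier d a b i) ((a o)⁻¹ * a i) =
      thetaResidue p a b o *
        (∑ i, thetaLogDeriv p ((a o)⁻¹ * a i) - ∑ j, thetaLogDeriv p ((a o)⁻¹ * b j)) := by
  have hac : ∀ i, ∀ n : ℕ, p / ((a o)⁻¹ * a i) * p ^ n ≠ 1 := fun i n => by
    obtain rfl | hi := eq_or_ne i o
    · rw [inv_mul_cancel₀ (ha i), div_one, ← pow_succ']
      exact fun h => (norm_pow_lt_one hp n.succ_ne_zero).ne (by rw [h, norm_one])
    · rw [← div_eq_inv_mul]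
      exact (hsep i o hi).div_ne_one_of_nat n
  have hbc : ∀ j, ∀ n : ℕ, p / ((a o)⁻¹ * b j) * p ^ n ≠ 1 := fun j n => by
    rw [← div_eq_inv_mul]
    exact (hbo j).div_ne_one_of_nat n
  have hcoeff : Tendsto (fun N => leftFactor p a b o N * rightFactor p a b o N) atTop
      (𝓝 (thetaResidue p a b o)) := by
    convert (tendsto_leftFactor (b := b) hp hsep o).mul (tendsto_rightFactor hp hsep o) using 2
    simp only [thetaResidue, thetaProd, prod_mul_distrib]
    ring
  have hlogDeriv := tendsto_sum_zeroWindow_sub_sum_poleWindow hcard hp hp0 ha hb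
    (inv_ne_zero (ha o)) hac hbc
  refine tendsto_nhds_unique (tendsto_sum_poleWindow hp hsep hsum)
    ((hcoeff.mul hlogDeriv).congr fun N => ?_)
  exact (sum_window_at_pole hcard hp hp0 ha hb hsep o hbo N).symm

end Appell

section Kronecker

variable {p r x y : ℂ} {d : ℕ}

lemma summable_pow_mul_zpow_tri (hp : ‖p‖ < 1) (hp0 : p ≠ 0) (hr : r ≠ 0) :
    Summable fun n : ℕ => r ^ n * p ^ tri n := by
  refine summable_of_ratio_test_tendsto_lt_one one_pos (.of_forall fun n =>
    mul_ne_zero (pow_ne_zero n hr) (zpow_ne_zero _ hp0)) (l := 0) ?_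
  have hlim : Tendsto (fun n : ℕ => ‖r * p * p ^ n‖) atTop (𝓝 0) := by
    simpa using ((tendsto_pow_atTop_nhds_zero_of_norm_lt_one hp).const_mul (r * p)).norm
  refine hlim.congr fun n => ?_
  have htri : tri (n + 1 : ℕ) = tri n + (n + 1) := mod_cast tri_add_one n
  rw [← norm_div, htri, zpow_add₀ hp0, zpow_add_one₀ hp0, zpow_natCast, pow_succ]
  have := zpow_ne_zero (tri n) hp0
  congr 1
  field_simp

lemma summable_zpow_mul_zpow_tri (hp : ‖p‖ < 1) (hp0 : p ≠ 0) (hr : r ≠ 0) :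
    Summable fun n : ℤ => r ^ n * p ^ tri n := by
  refine .of_nat_of_neg (by simpa using summable_pow_mul_zpow_tri hp hp0 hr) ?_
  refine (summable_pow_mul_zpow_tri hp hp0 (inv_ne_zero (mul_ne_zero hr hp0))).congr fun n => ?_
  rw [tri_neg, zpow_sub₀ hp0, zpow_neg, zpow_natCast, zpow_natCast, inv_pow, mul_pow]
  field_simp

lemma inv_one_sub_mul_zpow_neg (hp0 : p ≠ 0) (hy : y ≠ 0) (n : ℕ) :
    (1 - y * p ^ (-n : ℤ))⁻¹ = -(y⁻¹ * p ^ n * (1 - y⁻¹ * p ^ n)⁻¹) := by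
  have hfactor : 1 - y * p ^ (-n : ℤ) = -(y * (p ^ n)⁻¹ * (1 - y⁻¹ * p ^ n)) := by
    rw [zpow_neg, zpow_natCast]
    field_simp
    ring
  rw [hfactor, inv_neg, mul_inv, mul_inv, inv_inv]

lemma exists_norm_inv_one_sub_le (hp : ‖p‖ < 1) (y : ℂ) :
    ∃ C, ∀ n : ℕ, ‖(1 - y * p ^ n)⁻¹‖ ≤ C := by
  refine exists_norm_le_of_tendsto (a := (1 - y * 0)⁻¹) ?_
  exact (((tendsto_pow_atTop_nhds_zero_of_norm_lt_one hp).const_mul y).const_sub 1).inv₀ (by simp)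

lemma summable_mul_inv_one_sub_zpow {f : ℤ → ℂ} (hp : ‖p‖ < 1) (hp0 : p ≠ 0) (hy : y ≠ 0)
    (hf : Summable f) : Summable fun n : ℤ => f n * (1 - y * p ^ n)⁻¹ := by
  obtain ⟨C, hC⟩ := exists_norm_inv_one_sub_le hp y
  obtain ⟨D, hD⟩ := exists_norm_inv_one_sub_le hp y⁻¹
  have hbound : ∀ n : ℤ, ‖(1 - y * p ^ n)⁻¹‖ ≤ max C (‖y⁻¹‖ * D) := fun n => by
    obtain ⟨m, rfl | rfl⟩ := n.eq_nat_or_neg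
    · rw [zpow_natCast]
      exact (hC m).trans (le_max_left _ _)
    · rw [inv_one_sub_mul_zpow_neg hp0 hy, norm_neg, norm_mul, norm_mul]
      refine le_max_of_le_right (mul_le_mul ?_ (hD m) (norm_nonneg _) (norm_nonneg _))
      rw [norm_pow]
      exact mul_le_of_le_one_right (norm_nonneg _) (pow_le_one₀ (norm_nonneg _) hp.le)
  refine .of_norm_bounded (hf.norm.mul_right (max C (‖y⁻¹‖ * D))) fun n => ?_
  rw [norm_mul]
  exact mul_le_mul_of_nonneg_left (hbound n) (norm_nonneg _)

lemma summable_appell (hp : ‖p‖ < 1) (hp0 : p ≠ 0) (hr : r ≠ 0) (hy : y ≠ 0) (hd : d ≠ 0) :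
    Summable fun n : ℤ => r ^ n * (p ^ tri n) ^ d * (1 - y * p ^ n)⁻¹ := by
  refine summable_mul_inv_one_sub_zpow hp hp0 hy ?_
  refine (summable_zpow_mul_zpow_tri (norm_pow_lt_one hp hd) (pow_ne_zero d hp0) hr).congr
    fun n => ?_
  rw [← zpow_natCast, ← zpow_natCast, zpow_comm]

lemma summable_zpow_mul_inv_one_sub (hp : ‖p‖ < 1) (hp0 : p ≠ 0) (hy : y ≠ 0) (hpx : ‖p‖ < ‖x‖)
    (hx : ‖x‖ < 1) : Summable fun n : ℤ => x ^ n * (1 - y * p ^ n)⁻¹ := by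
  obtain ⟨C, hC⟩ := exists_norm_inv_one_sub_le hp y
  obtain ⟨D, hD⟩ := exists_norm_inv_one_sub_le hp y⁻¹
  have hx0 : 0 < ‖x‖ := (norm_nonneg _).trans_lt hpx
  have hpx' : ‖p / x‖ < 1 := by rwa [norm_div, div_lt_one hx0]
  refine .of_nat_of_neg ?_ ?_
  · refine .of_norm_bounded ((summable_geometric_of_lt_one (norm_nonneg _) hx).mul_right C)
      fun n => ?_
    rw [norm_mul, zpow_natCast, zpow_natCast, norm_pow]
    exact mul_le_mul_of_nonneg_left (hC n) (by positivity)
  · refine .of_norm_bounded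
      ((summable_geometric_of_lt_one (norm_nonneg _) hpx').mul_right (‖y⁻¹‖ * D)) fun n => ?_
    have hterm : x ^ (-n : ℤ) * (1 - y * p ^ (-n : ℤ))⁻¹ =
        -((p / x) ^ n * (y⁻¹ * (1 - y⁻¹ * p ^ n)⁻¹)) := by
      rw [inv_one_sub_mul_zpow_neg hp0 hy, zpow_neg, zpow_natCast, div_pow]
      ring
    rw [hterm, norm_neg, norm_mul, norm_mul, norm_pow]
    gcongr
    exact hD n

theorem thetaProd_mul_div_thetaProd (hp : ‖p‖ < 1) (hp0 : p ≠ 0) (hy : OffLattice p y)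
    (hy0 : y ≠ 0) (hpx : ‖p‖ < ‖x‖) (hx : ‖x‖ < 1) :
    thetaProd p (x * y) / thetaProd p y =
      thetaProd p x / qPochInf p p ^ 2 * ∑' n : ℤ, x ^ n * (1 - y * p ^ n)⁻¹ := by
  have hx0 : x ≠ 0 := norm_pos_iff.1 ((norm_nonneg _).trans_lt hpx)
  have hmult : thetaMultiplier 0 (fun _ : Unit => 1) (fun _ : Unit => x) () = x := by
    simp [thetaMultiplier]
  have h := prod_thetaProd_div_prod_thetaProd (σ := Unit) (τ := Unit) (d := 0) (z := y)
    (a := fun _ => 1) (b := fun _ => x) rfl hp hp0 (fun _ => one_ne_zero) (fun _ => hx0)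
    (fun _ _ h => absurd rfl h) hy0 (fun _ => by rwa [mul_one]) fun _ => by
      simpa [hmult] using summable_zpow_mul_inv_one_sub hp hp0 hy0 hpx hx
  simpa [thetaResidue, appell, hmult, mul_comm y] using h

end Kronecker

section TripleProduct

variable {p r x : ℂ}

/-- The Gaussian binomial coefficient `[m choose k]` evaluated at `p`. -/
def gaussBinom (p : ℂ) : ℕ → ℕ → ℂ
  | _, 0 => 1
  | 0, _ + 1 => 0
  | m + 1, k + 1 => gaussBinom p m (k + 1) + p ^ (m - k) * gaussBinom p m k

lemma gaussBinom_eq_zero_of_lt (p : ℂ) {m k : ℕ} (h : m < k) : gaussBinom p m k = 0 := by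
  induction m generalizing k with
  | zero => obtain ⟨k, rfl⟩ := Nat.exists_eq_succ_of_ne_zero h.ne'; rfl
  | succ m ih =>
    obtain ⟨k, rfl⟩ := Nat.exists_eq_succ_of_ne_zero (Nat.ne_zero_of_lt h)
    rw [gaussBinom, ih (by omega), ih (by omega), mul_zero, add_zero]

lemma gaussBinom_mul_qPoch_mul_qPoch (p : ℂ) (k j : ℕ) :
    gaussBinom p (k + j) k * (qPoch p p k * qPoch p p j) = qPoch p p (k + j) := by
  match k, j with
  | 0, j => simp [gaussBinom, qPoch_zero]
  | k + 1, 0 =>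
    have ih := gaussBinom_mul_qPoch_mul_qPoch p k 0
    rw [add_zero] at ih ⊢
    rw [gaussBinom, gaussBinom_eq_zero_of_lt p (Nat.lt_succ_self k), Nat.sub_self, qPoch_succ]
    linear_combination (1 - p * p ^ k) * ih
  | k + 1, j + 1 =>
    have ih₁ := gaussBinom_mul_qPoch_mul_qPoch p k (j + 1)
    have ih₂ := gaussBinom_mul_qPoch_mul_qPoch p (k + 1) j
    rw [show k + 1 + j = k + (j + 1) by ring] at ih₂
    rw [show k + 1 + (j + 1) = k + (j + 1) + 1 by ring, gaussBinom, Nat.add_sub_cancel_left]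
    simp only [qPoch_succ] at ih₁ ih₂ ⊢
    linear_combination p ^ (j + 1) * (1 - p * p ^ k) * ih₁ + (1 - p * p ^ j) * ih₂

lemma qPoch_eq_sum_gaussBinom (p x : ℂ) (m : ℕ) :
    qPoch p x m = ∑ k ∈ range (m + 1), gaussBinom p m k * ((-x) ^ k * p ^ k.choose 2) := by
  induction m with
  | zero => simp [qPoch_zero, gaussBinom]
  | succ m ih =>
    have hshift : ∑ k ∈ range (m + 1), gaussBinom p m k * ((-x) ^ k * p ^ k.choose 2) =
        ∑ k ∈ range (m + 1),
          gaussBinom p m (k + 1) * ((-x) ^ (k + 1) * p ^ (k + 1).choose 2) + 1 := by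
      rw [sum_range_succ' _ m, sum_range_succ _ m, gaussBinom_eq_zero_of_lt p (Nat.lt_succ_self m)]
      simp [gaussBinom]
    rw [qPoch_succ, mul_one_sub, ih, sum_range_succ' _ (m + 1), sum_mul]
    nth_rw 1 [hshift]
    rw [add_sub_right_comm, ← sum_sub_distrib]
    refine congr_arg₂ _ (sum_congr rfl fun k hk => ?_) (by simp [gaussBinom])
    have hpow : p ^ m = p ^ (m - k) * p ^ k := by
      rw [← pow_add, Nat.sub_add_cancel (mem_range_succ_iff.1 hk)]
    rw [gaussBinom, hpow, Nat.choose_succ_succ' k 1, Nat.choose_one_right]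
    ring

lemma cast_choose_two (k : ℕ) : (k.choose 2 : ℤ) = tri k - k := by
  induction k with
  | zero => rfl
  | succ k ih =>
    rw [Nat.choose_succ_succ' k 1, Nat.choose_one_right, Nat.cast_add, ih, Nat.cast_succ,
      tri_add_one]
    ring

lemma qPoch_self_ne_zero (hp : ‖p‖ < 1) (k : ℕ) : qPoch p p k ≠ 0 :=
  left_ne_zero_of_mul (qPochInf_eq_qPoch_mul hp p k ▸ qPochInf_self_ne_zero hp)

lemma qPoch_mul_qPoch_div_eq_sum (hp : ‖p‖ < 1) (hp0 : p ≠ 0) (hx : x ≠ 0) (N : ℕ) :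
    qPoch p x N * qPoch p (p / x) N =
      qPoch p p (2 * N) * ∑ n ∈ Ico (-N : ℤ) (N + 1), (qPoch p p (N + n).toNat)⁻¹ *
        (qPoch p p (N - n).toNat)⁻¹ * ((-x) ^ n * p ^ (tri n - n)) := by
  have hwindow : ∏ k ∈ Ico (-N : ℤ) N, (1 - x * p ^ k) = qPoch p (x * p ^ (-N : ℤ)) (2 * N) := by
    rw [← prod_Ico_zero_eq_qPoch, Nat.cast_mul, Nat.cast_ofNat,
      show Ico (-N : ℤ) N = Ico (0 + -N : ℤ) (2 * N + -N) by congr 1 <;> ring, ← prod_Ico_add']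
    exact prod_congr rfl fun k _ => by rw [zpow_add₀ hp0]; ring
  have hx' : -x ≠ 0 := neg_ne_zero.2 hx
  have hpN := zpow_ne_zero (tri N) hp0
  have hscale : (-x) ^ N / p ^ tri N ≠ 0 := div_ne_zero (pow_ne_zero N hx') hpN
  rw [← mul_left_inj' hscale, ← prod_Ico_neg_eq_qPoch_mul hp0 hx, hwindow,
    qPoch_eq_sum_gaussBinom, mul_sum, sum_mul]
  refine sum_nbij' (fun k => (k : ℤ) - N) (fun n => (N + n).toNat)
    (fun k hk => ?_) (fun n hn => ?_) (fun k hk => ?_) (fun n hn => ?_) fun k hk => ?_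
  any_goals simp only [mem_range, mem_Ico] at *; omega
  obtain ⟨j, hj⟩ := Nat.exists_eq_add_of_le (mem_range_succ_iff.1 hk)
  have hA : (N + ((k : ℤ) - N)).toNat = k := by omega
  have hB : (N - ((k : ℤ) - N)).toNat = j := by omega
  have hk0 := qPoch_self_ne_zero hp k
  have hj0 := qPoch_self_ne_zero hp j
  have hpow : p ^ (tri (k - N) - (k - N)) =
      (p ^ (-N : ℤ)) ^ k * p ^ k.choose 2 * p ^ tri N := by
    have htri : tri (k - N) = tri k + (tri N - N) + k * -N := by
      rw [sub_eq_add_neg, tri_add, tri_neg]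
    rw [← zpow_natCast p (k.choose 2), cast_choose_two, ← zpow_natCast _ k, ← zpow_mul,
      ← zpow_add₀ hp0, ← zpow_add₀ hp0, htri]
    congr 1
    ring
  rw [hA, hB, hj, ← gaussBinom_mul_qPoch_mul_qPoch, hpow, zpow_sub₀ hx', zpow_natCast, zpow_natCast,
    ← neg_mul, mul_pow]
  field_simp

theorem jacobi_triple_product (hp : ‖p‖ < 1) (hp0 : p ≠ 0) (hx : x ≠ 0) :
    qPochInf p p * thetaProd p x = ∑' n : ℤ, (-x) ^ n * p ^ (tri n - n) := by
  have hJ := qPochInf_self_ne_zero hp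
  have hsum : Summable fun n : ℤ => (-x) ^ n * p ^ (tri n - n) := by
    refine (summable_zpow_mul_zpow_tri hp hp0 (div_ne_zero (neg_ne_zero.2 hx) hp0)).congr
      fun n => ?_
    rw [zpow_sub₀ hp0, div_zpow, div_mul_eq_mul_div, mul_div_assoc]
  have hinv : Tendsto (fun A => (qPoch p p A)⁻¹) atTop (𝓝 (qPochInf p p)⁻¹) :=
    (tendsto_qPoch hp p).inv₀ hJ
  have hdouble : Tendsto (fun N => qPoch p p (2 * N)) atTop (𝓝 (qPochInf p p)) :=
    (tendsto_qPoch hp p).comp (tendsto_id.const_mul_atTop' two_pos)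
  have hlim := (hdouble.mul (tendsto_sum_window hsum hinv hinv)).congr fun N =>
    (qPoch_mul_qPoch_div_eq_sum hp hp0 hx N).symm
  rw [thetaProd, tendsto_nhds_unique ((tendsto_qPoch hp x).mul (tendsto_qPoch hp (p / x))) hlim]
  field_simp

/-- The theta series `∑ₙ (-x)ⁿ r ^ (n (n - 1))` of nome `r`. -/
def thetaSeries (r x : ℂ) : ℂ := ∑' n : ℤ, (-x) ^ n * r ^ (n * n - n)

lemma summable_thetaSeries (hr : ‖r‖ < 1) (hr0 : r ≠ 0) (hx : x ≠ 0) :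
    Summable fun n : ℤ => (-x) ^ n * r ^ (n * n - n) := by
  refine (summable_zpow_mul_zpow_tri (norm_pow_lt_one hr two_ne_zero) (pow_ne_zero 2 hr0)
    (div_ne_zero (neg_ne_zero.2 hx) (pow_ne_zero 2 hr0))).congr fun n => ?_
  rw [div_zpow, ← zpow_natCast r 2, ← zpow_mul, ← zpow_mul, div_mul_eq_mul_div, mul_div_assoc,
    ← zpow_sub₀ hr0]
  congr 2
  push_cast
  linarith [two_mul_tri n]

lemma thetaSeries_eq (hr : ‖r‖ < 1) (hr0 : r ≠ 0) (hx : x ≠ 0) :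
    thetaSeries r x = qPochInf (r ^ 2) (r ^ 2) * thetaProd (r ^ 2) x := by
  rw [jacobi_triple_product (norm_pow_lt_one hr two_ne_zero) (pow_ne_zero 2 hr0) hx, thetaSeries]
  refine tsum_congr fun n => ?_
  rw [← zpow_natCast r 2, ← zpow_mul]
  congr 2
  push_cast
  linarith [two_mul_tri n]

end TripleProduct

section ThreeTermRelation

variable {p r x y u v : ℂ}

/-- The change of summation variables `(m, n) = (u + v, u - v)` or `(u + v, u - v + 1)` on `ℤ × ℤ`,
according to the parity of `m + n`. -/
def parityEquiv : (ℤ × ℤ) ⊕ (ℤ × ℤ) ≃ ℤ × ℤ where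
  toFun := Sum.elim (fun a => (a.1 + a.2, a.1 - a.2)) fun a => (a.1 + a.2, a.1 - a.2 + 1)
  invFun b := if (b.1 + b.2) % 2 = 0 then Sum.inl ((b.1 + b.2) / 2, (b.1 - b.2) / 2)
    else Sum.inr ((b.1 + b.2 - 1) / 2, (b.1 - b.2 + 1) / 2)
  left_inv := by
    rintro (⟨a, b⟩ | ⟨a, b⟩)
    · have h : (a + b + (a - b)) % 2 = 0 := by omega
      simp only [Sum.elim_inl, h, if_true]
      congr 2 <;> omega
    · have h : ¬(a + b + (a - b + 1)) % 2 = 0 := by omega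
      simp only [Sum.elim_inr, h, if_false]
      congr 2 <;> omega
  right_inv := by
    rintro ⟨a, b⟩
    dsimp only
    split_ifs with h
    · simp only [Sum.elim_inl]
      ext <;> dsimp only <;> omega
    · simp only [Sum.elim_inr]
      ext <;> dsimp only <;> omega

lemma tsum_int_prod_eq_add_parity {f : ℤ × ℤ → ℂ} (hf : Summable f) :
    ∑' z, f z = ∑' z : ℤ × ℤ, f (z.1 + z.2, z.1 - z.2) +
      ∑' z : ℤ × ℤ, f (z.1 + z.2, z.1 - z.2 + 1) := by
  have hsum : Summable fun c => f (parityEquiv c) := parityEquiv.summable_iff.2 hf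
  rw [← parityEquiv.tsum_eq, Summable.tsum_sum (f := fun c => f (parityEquiv c))
    (hsum.comp_injective Sum.inl_injective) (hsum.comp_injective Sum.inr_injective)]
  rfl

lemma neg_mul_zpow_mul_neg_div_zpow (hx : x ≠ 0) (hy : y ≠ 0) (a b : ℤ) :
    (-(x * y)) ^ (a + b) * (-(x / y)) ^ (a - b) = (x ^ 2) ^ a * (y ^ 2) ^ b := by
  have hprod : -(x * y) * -(x / y) = x ^ 2 := by field_simp
  have hquot : -(x * y) / -(x / y) = y ^ 2 := by field_simp
  rw [zpow_add₀ (neg_ne_zero.2 (mul_ne_zero hx hy)),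
    zpow_sub₀ (neg_ne_zero.2 (div_ne_zero hx hy)), ← hprod, ← hquot, mul_zpow, div_zpow]
  ring

lemma thetaSeries_mul_thetaSeries_div (hr : ‖r‖ < 1) (hr0 : r ≠ 0) (hx : x ≠ 0) (hy : y ≠ 0) :
    thetaSeries r (x * y) * thetaSeries r (x / y) =
      thetaSeries (r ^ 2) (-x ^ 2) * thetaSeries (r ^ 2) (-(y * r) ^ 2) -
      x / y * (thetaSeries (r ^ 2) (-(x * r) ^ 2) * thetaSeries (r ^ 2) (-y ^ 2)) := by
  have hnorm {r x : ℂ} (hr : ‖r‖ < 1) (hr0 : r ≠ 0) (hx : x ≠ 0) :=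
    (summable_thetaSeries hr hr0 hx).norm
  have hr2 : ‖r ^ 2‖ < 1 := norm_pow_lt_one hr two_ne_zero
  have hneg {z : ℂ} (hz : z ≠ 0) : -z ^ 2 ≠ 0 := neg_ne_zero.2 (pow_ne_zero 2 hz)
  have hr20 : r ^ 2 ≠ 0 := pow_ne_zero 2 hr0
  have hxy := hnorm hr hr0 (mul_ne_zero hx hy)
  have hxdy := hnorm hr hr0 (div_ne_zero hx hy)
  have hY : -(x / y) ≠ 0 := neg_ne_zero.2 (div_ne_zero hx hy)
  have hmul := neg_mul_zpow_mul_neg_div_zpow hx hy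
  have hpow (a : ℤ) : (r ^ 2) ^ a = r ^ (2 * a) := by rw [zpow_mul, zpow_ofNat]
  simp only [thetaSeries, neg_neg]
  rw [tsum_mul_tsum_of_summable_norm hxy hxdy,
    tsum_mul_tsum_of_summable_norm (by simpa using hnorm hr2 hr20 (hneg hx))
      (by simpa using hnorm hr2 hr20 (hneg (mul_ne_zero hy hr0))),
    tsum_mul_tsum_of_summable_norm (by simpa using hnorm hr2 hr20 (hneg (mul_ne_zero hx hr0)))
      (by simpa using hnorm hr2 hr20 (hneg hy)),
    tsum_int_prod_eq_add_parity (summable_mul_of_summable_norm hxy hxdy), ← tsum_mul_left,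
    sub_eq_add_neg, ← tsum_neg]
  congr 1 <;> refine tsum_congr fun ⟨a, b⟩ => ?_
  · have hexp : r ^ ((a + b) * (a + b) - (a + b)) * r ^ ((a - b) * (a - b) - (a - b)) =
        r ^ (2 * (a * a - a)) * (r ^ (2 * b) * r ^ (2 * (b * b - b))) := by
      simp only [← zpow_add₀ hr0]
      congr 1
      ring
    rw [mul_mul_mul_comm, hmul, hexp, mul_pow, mul_zpow, hpow, hpow, hpow]
    ring
  · have hexp : r ^ ((a + b) * (a + b) - (a + b)) *
        r ^ ((a - b + 1) * (a - b + 1) - (a - b + 1)) =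
          r ^ (2 * a) * r ^ (2 * (a * a - a)) * r ^ (2 * (b * b - b)) := by
      simp only [← zpow_add₀ hr0]
      congr 1
      ring
    rw [mul_mul_mul_comm, zpow_add_one₀ hY, ← mul_assoc ((-(x * y)) ^ (a + b)), hmul, hexp,
      mul_pow, mul_zpow, hpow, hpow, hpow]
    ring

/-- Weierstrass' three-term relation. -/
theorem thetaProd_three_term (hp : ‖p‖ < 1) (hp0 : p ≠ 0) (hx : x ≠ 0) (hy : y ≠ 0) (hu : u ≠ 0)
    (hv : v ≠ 0) :
    y * (thetaProd p (x * y) * thetaProd p (x / y) * (thetaProd p (u * v) * thetaProd p (u / v))) -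
    u * (thetaProd p (x * u) * thetaProd p (x / u) * (thetaProd p (y * v) * thetaProd p (y / v))) +
    u * (thetaProd p (x * v) * thetaProd p (x / v) * (thetaProd p (y * u) * thetaProd p (y / u)))
      = 0 := by
  obtain ⟨r, rfl⟩ : ∃ r, r ^ 2 = p := IsAlgClosed.exists_pow_nat_eq p two_pos
  have hr0 : r ≠ 0 := by rintro rfl; simp at hp0
  have hr : ‖r‖ < 1 := by rwa [norm_pow, sq_lt_one_iff₀ (norm_nonneg r)] at hp
  have hJ := qPochInf_self_ne_zero hp
  have hprod {a b : ℂ} (ha : a ≠ 0) (hb : b ≠ 0) :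
      thetaProd (r ^ 2) (a * b) * thetaProd (r ^ 2) (a / b) =
        thetaSeries r (a * b) * thetaSeries r (a / b) / qPochInf (r ^ 2) (r ^ 2) ^ 2 := by
    rw [thetaSeries_eq hr hr0 (mul_ne_zero ha hb), thetaSeries_eq hr hr0 (div_ne_zero ha hb)]
    field_simp
  rw [hprod hx hy, hprod hu hv, hprod hx hu, hprod hy hv, hprod hx hv, hprod hy hu,
    thetaSeries_mul_thetaSeries_div hr hr0 hx hy, thetaSeries_mul_thetaSeries_div hr hr0 hx hu,
    thetaSeries_mul_thetaSeries_div hr hr0 hx hv, thetaSeries_mul_thetaSeries_div hr hr0 hy hu,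
    thetaSeries_mul_thetaSeries_div hr hr0 hy hv, thetaSeries_mul_thetaSeries_div hr hr0 hu hv]
  field_simp
  ring

end ThreeTermRelation

section ThetaConstants

variable {q : ℂ}

/-- The theta constants of level ten, `thetaTen q a = [q ^ a; q ^ 10]_∞`. -/
def thetaTen (q : ℂ) (a : ℤ) : ℂ := thetaProd (q ^ 10) (q ^ a)

lemma offLattice_zpow (hq : ‖q‖ < 1) (hq0 : q ≠ 0) {m : ℕ} {a : ℤ} (h : ¬(m : ℤ) ∣ a) :
    OffLattice (q ^ m) (q ^ a) := by
  intro n hn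
  rw [← zpow_natCast, ← zpow_mul, ← zpow_add₀ hq0] at hn
  have hnorm := congrArg norm hn
  rw [norm_zpow, norm_one, zpow_eq_one_iff_right₀ (norm_nonneg q) hq.ne] at hnorm
  exact h ⟨-n, by linarith⟩

lemma offLattice_neg_zpow (hq : ‖q‖ < 1) (hq0 : q ≠ 0) {m : ℕ} {a : ℤ} (h : ¬(m : ℤ) ∣ a) :
    OffLattice (q ^ m) (-q ^ a) := by
  intro n hn
  refine offLattice_zpow (q := q ^ 2) (norm_pow_lt_one hq two_ne_zero) (pow_ne_zero 2 hq0) h n ?_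
  have hsq : (-q ^ a * (q ^ m) ^ n) ^ 2 = 1 := by rw [hn, one_pow]
  rw [← hsq, mul_pow, neg_sq, pow_right_comm q 2 m, ← zpow_natCast, ← zpow_natCast (q ^ a),
    ← zpow_natCast ((q ^ m) ^ n), zpow_comm, zpow_comm _ n]
  norm_cast

lemma thetaTen_ne_zero (hq : ‖q‖ < 1) (hq0 : q ≠ 0) {a : ℤ} (h : ¬10 ∣ a) : thetaTen q a ≠ 0 :=
  thetaProd_ne_zero (norm_pow_lt_one hq (by norm_num)) (offLattice_zpow hq hq0 h)

lemma thetaTen_ten_sub (hq0 : q ≠ 0) (a : ℤ) : thetaTen q (10 - a) = thetaTen q a := by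
  rw [thetaTen, zpow_sub₀ hq0, zpow_ofNat, thetaProd_div (pow_ne_zero 10 hq0), thetaTen]

lemma thetaTen_neg (hq : ‖q‖ < 1) (hq0 : q ≠ 0) (a : ℤ) :
    thetaTen q (-a) = -thetaTen q a / q ^ a := by
  rw [thetaTen, zpow_neg, thetaProd_inv (norm_pow_lt_one hq (by norm_num)) (zpow_ne_zero a hq0),
    thetaTen]

lemma thetaTen_three_term (hq : ‖q‖ < 1) (hq0 : q ≠ 0) (a b c d : ℤ) :
    q ^ b * (thetaTen q (a + b) * thetaTen q (a - b) * (thetaTen q (c + d) * thetaTen q (c - d))) -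
    q ^ c * (thetaTen q (a + c) * thetaTen q (a - c) * (thetaTen q (b + d) * thetaTen q (b - d))) +
    q ^ c * (thetaTen q (a + d) * thetaTen q (a - d) * (thetaTen q (b + c) * thetaTen q (b - c)))
      = 0 := by
  have hne (n : ℤ) : q ^ n ≠ 0 := zpow_ne_zero n hq0
  simpa only [thetaTen, zpow_add₀ hq0, zpow_sub₀ hq0] using
    thetaProd_three_term (norm_pow_lt_one hq (by norm_num)) (pow_ne_zero 10 hq0) (hne a) (hne b)
      (hne c) (hne d)

lemma thetaTen_relation_four (hq : ‖q‖ < 1) (hq0 : q ≠ 0) :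
    thetaTen q 1 * thetaTen q 4 ^ 2 * thetaTen q 5 =
      thetaTen q 2 * thetaTen q 3 ^ 2 * thetaTen q 4 -
        q * thetaTen q 1 * thetaTen q 2 ^ 2 * thetaTen q 3 := by
  have h := thetaTen_three_term hq hq0 3 2 4 0
  have h7 := thetaTen_ten_sub hq0 3
  have h6 := thetaTen_ten_sub hq0 4
  have hn1 := thetaTen_neg hq hq0 1
  have hn2 := thetaTen_neg hq hq0 2
  norm_num [zpow_ofNat] at h h7 h6 hn1 hn2
  rw [h7, h6, hn1, hn2] at h
  field_simp at h
  apply mul_left_cancel₀ (pow_ne_zero 2 hq0)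
  linear_combination h

lemma thetaTen_relation_two (hq : ‖q‖ < 1) (hq0 : q ≠ 0) :
    thetaTen q 1 * thetaTen q 3 * thetaTen q 4 ^ 2 =
      thetaTen q 2 ^ 2 * thetaTen q 3 * thetaTen q 5 -
        q * thetaTen q 1 ^ 2 * thetaTen q 2 * thetaTen q 4 := by
  have h := thetaTen_three_term hq hq0 2 1 4 0
  have h6 := thetaTen_ten_sub hq0 4
  have hn2 := thetaTen_neg hq hq0 2
  have hn3 := thetaTen_neg hq hq0 3
  norm_num [zpow_ofNat] at h h6 hn2 hn3
  rw [h6, hn2, hn3] at h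
  field_simp at h
  apply mul_left_cancel₀ hq0
  linear_combination h

lemma thetaProd_five_eq_mul (hq : ‖q‖ < 1) (hq0 : q ≠ 0) (a : ℤ) :
    thetaProd (q ^ 5) (q ^ a) = thetaTen q a * thetaTen q (5 - a) := by
  rw [thetaProd_eq_even_mul_odd (norm_pow_lt_one hq (by norm_num)) (pow_ne_zero 5 hq0), ← pow_mul,
    ← zpow_natCast q 5, ← zpow_add₀ hq0, ← thetaTen_ten_sub hq0 (5 - a), thetaTen, thetaTen]
  congr 3
  push_cast
  ring

lemma thetaProd_five_mul_neg (hq : ‖q‖ < 1) (a : ℤ) :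
    thetaProd (q ^ 5) (q ^ a) * thetaProd (q ^ 5) (-q ^ a) = thetaTen q (2 * a) := by
  rw [thetaProd_mul_neg (norm_pow_lt_one hq (by norm_num)), ← pow_mul, thetaTen, mul_comm 2 a,
    zpow_mul, zpow_ofNat]

lemma thetaProd_five_neg (hq : ‖q‖ < 1) (hq0 : q ≠ 0) {a : ℤ} (ha : ¬5 ∣ a) :
    thetaProd (q ^ 5) (-q ^ a) = thetaTen q (2 * a) / (thetaTen q a * thetaTen q (5 - a)) := by
  have h1 := thetaTen_ne_zero hq hq0 (a := a) (by omega)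
  have h2 := thetaTen_ne_zero hq hq0 (a := 5 - a) (by omega)
  rw [eq_div_iff (mul_ne_zero h1 h2), ← thetaProd_five_mul_neg hq, thetaProd_five_eq_mul hq hq0,
    mul_comm]

lemma qPochInf_five_sq (hq : ‖q‖ < 1) (hq0 : q ≠ 0) :
    qPochInf (q ^ 5) (q ^ 5) ^ 2 = qPochInf (q ^ 10) (q ^ 10) ^ 2 * thetaTen q 5 := by
  rw [qPochInf_eq_even_mul_odd (norm_pow_lt_one hq (by norm_num)), thetaTen, thetaProd, zpow_ofNat,
    show q ^ 10 / q ^ 5 = q ^ 5 by field_simp, ← pow_mul, ← pow_add]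
  ring

lemma thetaProd_neg_one {p : ℂ} (hp : ‖p‖ < 1) :
    thetaProd p (-1) = 2 * (qPochInf (p ^ 2) (p ^ 2) / qPochInf p p) ^ 2 := by
  have hJ := qPochInf_self_ne_zero hp
  rw [thetaProd, qPochInf_eq_mul hp, div_neg, div_one, neg_one_mul, ← qPochInf_mul_neg hp p,
    mul_div_cancel_left₀ _ hJ]
  ring

lemma thetaProd_five_neg_one (hq : ‖q‖ < 1) (hq0 : q ≠ 0) :
    thetaProd (q ^ 5) (-1) = 2 / thetaTen q 5 := by
  have h5 := thetaTen_ne_zero hq hq0 (a := 5) (by norm_num)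
  have hJ := qPochInf_self_ne_zero (norm_pow_lt_one hq (by norm_num : 10 ≠ 0))
  rw [thetaProd_neg_one (norm_pow_lt_one hq (by norm_num)), div_pow, ← pow_mul,
    qPochInf_five_sq hq hq0]
  field_simp

end ThetaConstants

section AppellPair

variable {p z ζ : ℂ}

/-- The symmetric combination of two Appell–Lerch sums of level two that the partial fraction
expansion with poles at `z = 1, ζ, ζ⁻¹` expresses through `appell 2 p (-1) z`. -/
def appellPair (p ζ z : ℂ) : ℂ :=
  ζ ^ 2 * appell 2 p (-ζ ^ 2) (z * ζ) + appell 2 p (-(ζ ^ 2)⁻¹) (z * ζ⁻¹)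

lemma offLattice_div_vec (hp0 : p ≠ 0) (h1 : OffLattice p ζ) (h2 : OffLattice p (ζ ^ 2))
    (i l : Fin 3) (hil : i ≠ l) : OffLattice p (![1, ζ, ζ⁻¹] i / ![1, ζ, ζ⁻¹] l) := by
  have h1' := h1.inv hp0
  have h2' := h2.inv hp0
  have hinv : ζ⁻¹ / ζ = (ζ ^ 2)⁻¹ := by rw [← inv_pow, sq, div_eq_mul_inv]
  fin_cases i <;> fin_cases l <;> simp_all [← sq]

lemma vec_ne_zero (hζ : ζ ≠ 0) (i : Fin 3) : ![1, ζ, ζ⁻¹] i ≠ 0 := by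
  fin_cases i <;> simp [hζ]

lemma thetaMultiplier_vec (hζ : ζ ≠ 0) (i : Fin 3) :
    thetaMultiplier 2 ![1, ζ, ζ⁻¹] (fun _ : Unit => -1) i = -![1, ζ, ζ⁻¹] i ^ 2 := by
  simp [thetaMultiplier, Fin.prod_univ_three, hζ]

lemma sum_thetaResidue_mul_appell_vec (hp : ‖p‖ < 1) (hζ : ζ ≠ 0)
    (h1 : OffLattice p ζ) (h2 : OffLattice p (ζ ^ 2)) (hm : OffLattice p (-ζ)) (z : ℂ) :
    ∑ i, thetaResidue p ![1, ζ, ζ⁻¹] (fun _ : Unit => -1) i *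
        appell 2 p (thetaMultiplier 2 ![1, ζ, ζ⁻¹] (fun _ : Unit => -1) i) (z * ![1, ζ, ζ⁻¹] i) =
      thetaProd p (-ζ) / (qPochInf p p ^ 2 * thetaProd p ζ * thetaProd p (ζ ^ 2)) *
        (appellPair p ζ z -
          ζ * (thetaProd p (-1) * thetaProd p (ζ ^ 2) / (thetaProd p ζ * thetaProd p (-ζ))) *
            appell 2 p (-1) z) := by
  have hJ := qPochInf_self_ne_zero hp
  have hθ1 := thetaProd_ne_zero hp h1
  have hθ2 := thetaProd_ne_zero hp h2
  have hθm := thetaProd_ne_zero hp hm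
  have hinv : thetaProd p ζ⁻¹ = -thetaProd p ζ / ζ := thetaProd_inv hp hζ
  have hinv2 : thetaProd p (ζ⁻¹ / ζ) = -thetaProd p (ζ ^ 2) / ζ ^ 2 := by
    rw [← thetaProd_inv hp (pow_ne_zero 2 hζ), ← inv_pow, sq, div_eq_mul_inv]
  have hneg : thetaProd p (-1 / ζ) = thetaProd p (-ζ) / ζ := by
    rw [show -1 / ζ = (-ζ)⁻¹ by rw [inv_neg, neg_div, one_div], thetaProd_inv hp (neg_ne_zero.2 hζ),
      neg_div_neg_eq]
  have herase0 : (univ.erase 0 : Finset (Fin 3)) = {1, 2} := rfl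
  have herase1 : (univ.erase 1 : Finset (Fin 3)) = {0, 2} := rfl
  have herase2 : (univ.erase 2 : Finset (Fin 3)) = {0, 1} := rfl
  simp only [thetaMultiplier_vec hζ, thetaResidue, Fin.sum_univ_three, herase0, herase1, herase2,
    univ_unique, prod_singleton]
  simp only [Matrix.cons_val_zero, Matrix.cons_val_one, Matrix.cons_val, mem_singleton,
    Fin.reduceEq, not_false_eq_true, prod_insert, prod_singleton, zero_ne_one, div_one, one_pow,
    mul_one, one_mul, one_div, div_inv_eq_mul, neg_mul, inv_pow, hinv, hinv2, hneg, appellPair,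
    ← sq]
  field_simp
  ring

theorem appellPair_eq (hp : ‖p‖ < 1) (hp0 : p ≠ 0) (hζ : ζ ≠ 0) (h1 : OffLattice p ζ)
    (h2 : OffLattice p (ζ ^ 2)) (hm : OffLattice p (-ζ)) (hz : z ≠ 0) (hz0 : OffLattice p z)
    (hz1 : OffLattice p (z * ζ)) (hz2 : OffLattice p (z * ζ⁻¹)) :
    appellPair p ζ z =
      ζ * (thetaProd p (-1) * thetaProd p (ζ ^ 2) / (thetaProd p ζ * thetaProd p (-ζ))) *
        appell 2 p (-1) z +
      qPochInf p p ^ 2 * thetaProd p ζ * thetaProd p (ζ ^ 2) * thetaProd p (-z) /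
        (thetaProd p (-ζ) * thetaProd p z * thetaProd p (z * ζ) * thetaProd p (z * ζ⁻¹)) := by
  have hexp := prod_thetaProd_div_prod_thetaProd (σ := Fin 3) (τ := Unit) (d := 2)
    (a := ![1, ζ, ζ⁻¹]) (b := fun _ => -1) (z := z) rfl hp hp0 (vec_ne_zero hζ) (by simp)
    (offLattice_div_vec hp0 h1 h2) hz (by intro i; fin_cases i <;> simpa) fun i => by
      rw [thetaMultiplier_vec hζ]
      exact summable_appell hp hp0 (neg_ne_zero.2 (pow_ne_zero 2 (vec_ne_zero hζ i)))
        (mul_ne_zero hz (vec_ne_zero hζ i)) two_ne_zero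
  have hJ := qPochInf_self_ne_zero hp
  have hθ1 := thetaProd_ne_zero hp h1
  have hθ2 := thetaProd_ne_zero hp h2
  have hθm := thetaProd_ne_zero hp hm
  rw [sum_thetaResidue_mul_appell_vec hp hζ h1 h2 hm] at hexp
  refine sub_eq_iff_eq_add'.1 (mul_left_cancel₀
    (div_ne_zero hθm (mul_ne_zero (mul_ne_zero (pow_ne_zero 2 hJ) hθ1) hθ2)) (hexp.symm.trans ?_))
  simp only [univ_unique, prod_singleton, Fin.prod_univ_three, Matrix.cons_val, mul_neg_one,
    mul_one]
  field_simp

theorem appellPair_self (hp : ‖p‖ < 1) (hp0 : p ≠ 0) (hζ : ζ ≠ 0) (h1 : OffLattice p ζ)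
    (h2 : OffLattice p (ζ ^ 2)) (hm : OffLattice p (-ζ)) :
    appellPair p ζ ζ =
      ζ * (thetaProd p (-1) * thetaProd p (ζ ^ 2) / (thetaProd p ζ * thetaProd p (-ζ))) *
        appell 2 p (-1) ζ +
      (thetaLogDeriv p ζ + thetaLogDeriv p (ζ ^ 2) - thetaLogDeriv p (-ζ)) := by
  have hexp := sum_thetaResidue_mul_appell_at_pole (σ := Fin 3) (τ := Unit) (d := 2)
    (a := ![1, ζ, ζ⁻¹]) (b := fun _ => -1) rfl hp hp0 (vec_ne_zero hζ) (by simp)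
    (offLattice_div_vec hp0 h1 h2) 2 (by simpa using hm) fun i => by
      rw [thetaMultiplier_vec hζ]
      exact summable_appell hp hp0 (neg_ne_zero.2 (pow_ne_zero 2 (vec_ne_zero hζ i)))
        (mul_ne_zero (inv_ne_zero (vec_ne_zero hζ 2)) (vec_ne_zero hζ i)) two_ne_zero
  have hJ := qPochInf_self_ne_zero hp
  have hθ1 := thetaProd_ne_zero hp h1
  have hθ2 := thetaProd_ne_zero hp h2
  have hθm := thetaProd_ne_zero hp hm
  have hpole : (![1, ζ, ζ⁻¹] 2)⁻¹ = ζ := inv_inv ζ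
  have hresidue : thetaResidue p ![1, ζ, ζ⁻¹] (fun _ : Unit => -1) 2 =
      thetaProd p (-ζ) / (qPochInf p p ^ 2 * thetaProd p ζ * thetaProd p (ζ ^ 2)) := by
    rw [thetaResidue, show (univ.erase 2 : Finset (Fin 3)) = {0, 1} from rfl]
    simp [mul_assoc, ← sq]
  rw [hpole, sum_thetaResidue_mul_appell_vec hp hζ h1 h2 hm, hresidue] at hexp
  refine sub_eq_iff_eq_add'.1 (mul_left_cancel₀
    (div_ne_zero hθm (mul_ne_zero (mul_ne_zero (pow_ne_zero 2 hJ) hθ1) hθ2)) (hexp.trans ?_))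
  simp only [univ_unique, sum_singleton, Fin.sum_univ_three, Matrix.cons_val, mul_neg_one, mul_one,
    mul_inv_cancel₀ hζ, thetaLogDeriv_one hp, add_zero, ← sq]

end AppellPair

section LevelFive

variable {q : ℂ}

lemma thetaProd_five_ratio (hq : ‖q‖ < 1) (hq0 : q ≠ 0) {a : ℤ} (ha : ¬5 ∣ a) :
    thetaProd (q ^ 5) (-1) * thetaProd (q ^ 5) (q ^ (2 * a)) /
        (thetaProd (q ^ 5) (q ^ a) * thetaProd (q ^ 5) (-q ^ a)) =
      2 * (thetaTen q (5 - 2 * a) / thetaTen q 5) := by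
  have h := thetaTen_ne_zero hq hq0 (a := 2 * a) (by omega)
  rw [thetaProd_five_mul_neg hq, thetaProd_five_neg_one hq hq0, thetaProd_five_eq_mul hq hq0]
  field_simp

lemma appellPair_five_eq (hq : ‖q‖ < 1) (hq0 : q ≠ 0) {a c : ℤ} (ha : ¬5 ∣ a) (hc : ¬5 ∣ c)
    (hadd : ¬5 ∣ c + a) (hsub : ¬5 ∣ c - a) :
    appellPair (q ^ 5) (q ^ a) (q ^ c) =
      2 * q ^ a * (thetaTen q (5 - 2 * a) / thetaTen q 5) *
        appell 2 (q ^ 5) (-1) (q ^ c) +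
      qPochInf (q ^ 10) (q ^ 10) ^ 2 * thetaTen q 5 * thetaProd (q ^ 5) (q ^ a) *
        thetaProd (q ^ 5) (q ^ (2 * a)) * thetaProd (q ^ 5) (-q ^ c) /
        (thetaProd (q ^ 5) (-q ^ a) * thetaProd (q ^ 5) (q ^ c) * thetaProd (q ^ 5) (q ^ (c + a)) *
          thetaProd (q ^ 5) (q ^ (c - a))) := by
  have hsq : (q ^ a) ^ 2 = q ^ (2 * a) := by rw [mul_comm, zpow_mul, zpow_ofNat]
  have hadd' : q ^ c * q ^ a = q ^ (c + a) := (zpow_add₀ hq0 c a).symm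
  have hsub' : q ^ c * (q ^ a)⁻¹ = q ^ (c - a) := by rw [zpow_sub₀ hq0, div_eq_mul_inv]
  have hoff {n : ℤ} (hn : ¬5 ∣ n) : OffLattice (q ^ 5) (q ^ n) := offLattice_zpow hq hq0 hn
  have h := appellPair_eq (norm_pow_lt_one hq (by norm_num)) (pow_ne_zero 5 hq0)
    (zpow_ne_zero a hq0) (hoff ha) (hsq ▸ hoff (by omega)) (offLattice_neg_zpow hq hq0 ha)
    (zpow_ne_zero c hq0) (hoff hc) (hadd' ▸ hoff hadd) (hsub' ▸ hoff hsub)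
  rw [h, hsq, hadd', hsub', thetaProd_five_ratio hq hq0 ha, qPochInf_five_sq hq hq0]
  ring

lemma appellPair_five_self (hq : ‖q‖ < 1) (hq0 : q ≠ 0) {a : ℤ} (ha : ¬5 ∣ a) :
    appellPair (q ^ 5) (q ^ a) (q ^ a) =
      2 * q ^ a * (thetaTen q (5 - 2 * a) / thetaTen q 5) *
        appell 2 (q ^ 5) (-1) (q ^ a) +
      (thetaLogDeriv (q ^ 5) (q ^ a) + thetaLogDeriv (q ^ 5) (q ^ (2 * a)) -
        thetaLogDeriv (q ^ 5) (-q ^ a)) := by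
  have hsq : (q ^ a) ^ 2 = q ^ (2 * a) := by rw [mul_comm, zpow_mul, zpow_ofNat]
  have hoff {n : ℤ} (hn : ¬5 ∣ n) : OffLattice (q ^ 5) (q ^ n) := offLattice_zpow hq hq0 hn
  rw [appellPair_self (norm_pow_lt_one hq (by norm_num)) (pow_ne_zero 5 hq0) (zpow_ne_zero a hq0)
    (hoff ha) (hsq ▸ hoff (by omega)) (offLattice_neg_zpow hq hq0 ha), hsq,
    thetaProd_five_ratio hq hq0 ha]
  ring

lemma thetaTen_relation_cubic (hq : ‖q‖ < 1) (hq0 : q ≠ 0) :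
    thetaTen q 2 ^ 4 * thetaTen q 3 ^ 3 * thetaTen q 5 ^ 2 =
      thetaTen q 1 ^ 2 * thetaTen q 4 ^ 3 *
        (thetaTen q 2 * thetaTen q 3 * thetaTen q 5 ^ 2 +
          4 * q * thetaTen q 1 * thetaTen q 2 * thetaTen q 3 ^ 2 -
          2 * q * thetaTen q 1 ^ 2 * thetaTen q 4 * thetaTen q 5) := by
  have h1 := thetaTen_ne_zero hq hq0 (a := 1) (by norm_num)
  have h4 := thetaTen_ne_zero hq hq0 (a := 4) (by norm_num)
  have hrel2 := thetaTen_relation_two hq hq0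
  have hrel4 := thetaTen_relation_four hq hq0
  apply mul_left_cancel₀ (mul_ne_zero h1 h4)
  generalize thetaTen q 1 = b₁, thetaTen q 2 = b₂, thetaTen q 3 = b₃, thetaTen q 4 = b₄,
    thetaTen q 5 = b₅ at *
  linear_combination (-(b₁ * b₄ * ((b₂ ^ 2 * b₃ * b₅ + b₁ * b₄ * (b₃ * b₄ + q * b₁ * b₂)) * b₃)) +
      b₁ ^ 2 * b₄ ^ 2 * b₃ * (b₃ * b₄ - q * b₁ * b₂)) * hrel2 -
    b₁ ^ 2 * b₄ ^ 2 * (b₂ * b₃ * b₅ - 2 * q * b₁ ^ 2 * b₄) * hrel4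

lemma appellPair_five_one_two (hq : ‖q‖ < 1) (hq0 : q ≠ 0) :
    appellPair (q ^ 5) q (q ^ 2) =
      2 * q * (thetaTen q 3 / thetaTen q 5) * appell 2 (q ^ 5) (-1) (q ^ 2) +
      qPochInf (q ^ 10) (q ^ 10) ^ 2 *
        (thetaTen q 4 / thetaTen q 2 ^ 2 - q * thetaTen q 1 / (thetaTen q 2 * thetaTen q 3)) := by
  have hne {a : ℤ} (ha : ¬10 ∣ a) : thetaTen q a ≠ 0 := thetaTen_ne_zero hq hq0 ha
  have h2 := hne (a := 2) (by norm_num)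
  have h3 := hne (a := 3) (by norm_num)
  have h5 := hne (a := 5) (by norm_num)
  have hrel := thetaTen_relation_four hq hq0
  have h := appellPair_five_eq hq hq0 (a := 1) (c := 2) (by norm_num) (by norm_num) (by norm_num)
    (by norm_num)
  rw [thetaProd_five_neg hq hq0 (a := 1) (by norm_num),
    thetaProd_five_neg hq hq0 (a := 2) (by norm_num)] at h
  simp only [thetaProd_five_eq_mul hq hq0] at h
  norm_num [zpow_ofNat] at h
  rw [h]
  field_simp
  linear_combination qPochInf (q ^ 10) (q ^ 10) ^ 2 * thetaTen q 5 * hrel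

lemma appellPair_five_two_one (hq : ‖q‖ < 1) (hq0 : q ≠ 0) :
    appellPair (q ^ 5) (q ^ 2) q =
      2 * q ^ 2 * (thetaTen q 1 / thetaTen q 5) * appell 2 (q ^ 5) (-1) q -
      q * qPochInf (q ^ 10) (q ^ 10) ^ 2 *
        (thetaTen q 5 / (thetaTen q 2 * thetaTen q 3) +
          4 * q * thetaTen q 1 / (thetaTen q 2 * thetaTen q 5) -
          2 * q * thetaTen q 1 ^ 2 * thetaTen q 4 / (thetaTen q 2 ^ 2 * thetaTen q 3 ^ 2)) := by
  have hne {a : ℤ} (ha : ¬10 ∣ a) : thetaTen q a ≠ 0 := thetaTen_ne_zero hq hq0 ha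
  have h1 := hne (a := 1) (by norm_num)
  have h2 := hne (a := 2) (by norm_num)
  have h3 := hne (a := 3) (by norm_num)
  have h4 := hne (a := 4) (by norm_num)
  have h5 := hne (a := 5) (by norm_num)
  have hrel := thetaTen_relation_cubic hq hq0
  have h6 := thetaTen_ten_sub hq0 4
  have hneg := thetaTen_neg hq hq0 1
  have h := appellPair_five_eq hq hq0 (a := 2) (c := 1) (by norm_num) (by norm_num) (by norm_num)
    (by norm_num)
  rw [thetaProd_five_neg hq hq0 (a := 1) (by norm_num),
    thetaProd_five_neg hq hq0 (a := 2) (by norm_num)] at h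
  simp only [thetaProd_five_eq_mul hq hq0] at h
  norm_num [zpow_ofNat] at h h6 hneg
  rw [h, h6, hneg]
  field_simp
  linear_combination -qPochInf (q ^ 10) (q ^ 10) ^ 2 * hrel

lemma appellPair_five_one_one (hq : ‖q‖ < 1) (hq0 : q ≠ 0) :
    appellPair (q ^ 5) q q =
      2 * q * (thetaTen q 3 / thetaTen q 5) * appell 2 (q ^ 5) (-1) q +
      (thetaLogDeriv (q ^ 5) q + thetaLogDeriv (q ^ 5) (q ^ 2) - thetaLogDeriv (q ^ 5) (-q)) := by
  have h := appellPair_five_self hq hq0 (a := 1) (by norm_num)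
  norm_num [zpow_ofNat] at h
  exact h

lemma appellPair_five_two_two (hq : ‖q‖ < 1) (hq0 : q ≠ 0) :
    appellPair (q ^ 5) (q ^ 2) (q ^ 2) =
      2 * q ^ 2 * (thetaTen q 1 / thetaTen q 5) * appell 2 (q ^ 5) (-1) (q ^ 2) +
      (thetaLogDeriv (q ^ 5) (q ^ 2) + thetaLogDeriv (q ^ 5) (q ^ 4) -
        thetaLogDeriv (q ^ 5) (-q ^ 2)) := by
  have h := appellPair_five_self hq hq0 (a := 2) (by norm_num)
  norm_num [zpow_ofNat] at h
  exact h

end LevelFive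

section LambertFive

variable {p q y : ℂ}

lemma hasSum_lambert (hp : ‖p‖ < 1) (hy : ‖y‖ < 1) :
    HasSum (fun k : ℕ => y ^ (k + 1) / (1 - p ^ (k + 1))) (lambert p y) := by
  have hsum : Summable fun z : ℕ × ℕ => (y * p ^ z.1) ^ (z.2 + 1) := by
    have hbound : Summable fun z : ℕ × ℕ => ‖p‖ ^ z.1 * ‖y‖ ^ (z.2 + 1) :=
      (summable_geometric_of_lt_one (norm_nonneg _) hp).mul_of_nonneg
        ((summable_nat_add_iff 1).2 (summable_geometric_of_lt_one (norm_nonneg _) hy))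
        (fun _ => by positivity) (fun _ => by positivity)
    refine hbound.of_norm_bounded fun z => ?_
    rw [norm_pow, norm_mul, norm_pow, mul_pow, mul_comm, ← pow_mul]
    gcongr ?_ * _
    exact pow_le_pow_of_le_one (norm_nonneg _) hp.le (Nat.le_mul_of_pos_right _ (by omega))
  have hlambert : lambert p y = ∑' z : ℕ × ℕ, (y * p ^ z.1) ^ (z.2 + 1) := by
    rw [hsum.tsum_prod, lambert]
    refine tsum_congr fun n => ?_
    have hlt : ‖y * p ^ n‖ < 1 := by
      rw [norm_mul, norm_pow]
      exact mul_lt_one_of_nonneg_of_lt_one_left (norm_nonneg _) hy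
        (pow_le_one₀ (norm_nonneg _) hp.le)
    simp only [pow_succ' (y * p ^ n)]
    rw [tsum_mul_left, tsum_geometric_of_norm_lt_one hlt, div_eq_mul_inv]
  rw [hlambert]
  refine ((Equiv.prodComm ℕ ℕ).hasSum_iff.2 hsum.hasSum).prod_fiberwise fun k => ?_
  have hgeom := (hasSum_geometric_of_norm_lt_one (norm_pow_lt_one hp k.succ_ne_zero)).mul_left
    (y ^ (k + 1))
  rw [← div_eq_mul_inv] at hgeom
  refine hgeom.congr_fun fun n => ?_
  simp only [Function.comp, Equiv.prodComm_apply, Prod.swap, Nat.succ_eq_add_one]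
  ring

lemma hasSum_lambert_add_lambert_neg (hp : ‖p‖ < 1) (hy : ‖y‖ < 1) :
    HasSum (fun k : ℕ => 2 * ((y ^ 2) ^ (k + 1) / (1 - (p ^ 2) ^ (k + 1))))
      (lambert p y + lambert p (-y)) := by
  have hadd := (hasSum_lambert hp hy).add (hasSum_lambert (y := -y) hp (by rwa [norm_neg]))
  have hinj : Function.Injective fun k : ℕ => 2 * k + 1 := fun a b h => by simpa using h
  rw [← hinj.hasSum_iff] at hadd
  · refine hadd.congr_fun fun k => ?_
    rw [Function.comp, show 2 * k + 1 + 1 = 2 * (k + 1) by ring, pow_mul (-y), neg_sq]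
    simp only [pow_mul]
    ring
  · rintro k hk
    obtain ⟨m, rfl⟩ | ⟨m, rfl⟩ := Nat.even_or_odd k
    · rw [Odd.neg_pow ⟨m, by ring⟩]
      ring
    · exact absurd ⟨m, rfl⟩ hk

lemma offLattice_neg_one (hq : ‖q‖ < 1) : OffLattice q (-1) := by
  intro n hn
  have hn0 : n ≠ 0 := by
    rintro rfl
    norm_num at hn
  have hone : ‖q‖ ^ n = 1 := by simpa using congrArg norm hn
  exact hn0 ((zpow_eq_one_iff_right₀ (norm_nonneg _) hq.ne).1 hone)

private lemma norm_pow_lt_norm_pow (hq : ‖q‖ < 1) (hq0 : q ≠ 0) {m n : ℕ} (h : n < m) :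
    ‖q ^ m‖ < ‖q ^ n‖ := by
  rw [norm_pow, norm_pow]
  exact pow_lt_pow_right_of_lt_one₀ (norm_pos_iff.2 hq0) hq h

lemma tsum_kronecker_neg_one (hq : ‖q‖ < 1) (hq0 : q ≠ 0) :
    2 * ∑' n : ℤ, (q ^ 2) ^ n * (1 - -1 * (q ^ 5) ^ n)⁻¹ = qPochInf (q ^ 10) (q ^ 10) ^ 2 *
      (thetaTen q 5 ^ 2 * thetaTen q 4 / (thetaTen q 2 ^ 2 * thetaTen q 3 ^ 2)) := by
  have h2 := thetaTen_ne_zero hq hq0 (a := 2) (by norm_num)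
  have h3 := thetaTen_ne_zero hq hq0 (a := 3) (by norm_num)
  have h5 := thetaTen_ne_zero hq hq0 (a := 5) (by norm_num)
  have hp := norm_pow_lt_one hq (m := 5) (by norm_num)
  have hkron := thetaProd_mul_div_thetaProd hp (by positivity)
    (offLattice_neg_one hp) (by simp)
    (norm_pow_lt_norm_pow hq hq0 (by norm_num : 2 < 5)) (norm_pow_lt_one hq two_ne_zero)
  have hJ : qPochInf (q ^ 10) (q ^ 10) ≠ 0 :=
    qPochInf_self_ne_zero (norm_pow_lt_one hq (by norm_num))
  have htwo := thetaProd_five_eq_mul hq hq0 2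
  have hneg := thetaProd_five_neg hq hq0 (a := 2) (by norm_num)
  norm_num [zpow_ofNat] at htwo hneg
  rw [mul_neg_one, hneg, thetaProd_five_neg_one hq hq0, htwo, qPochInf_five_sq hq hq0] at hkron
  field_simp at hkron ⊢
  linear_combination -hkron

lemma tsum_kronecker_four (hq : ‖q‖ < 1) (hq0 : q ≠ 0) :
    ∑' n : ℤ, (q ^ 5) ^ n * (1 - q ^ 4 * (q ^ 10) ^ n)⁻¹ =
      qPochInf (q ^ 10) (q ^ 10) ^ 2 * (thetaTen q 1 / (thetaTen q 4 * thetaTen q 5)) := by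
  have h4 := thetaTen_ne_zero hq hq0 (a := 4) (by norm_num)
  have h5 := thetaTen_ne_zero hq hq0 (a := 5) (by norm_num)
  have hp := norm_pow_lt_one hq (m := 10) (by norm_num)
  have hlat : OffLattice (q ^ 10) (q ^ 4) := by
    simpa [zpow_ofNat] using offLattice_zpow hq hq0 (m := 10) (a := 4) (by norm_num)
  have hkron := thetaProd_mul_div_thetaProd hp (by positivity) hlat (by positivity)
    (norm_pow_lt_norm_pow hq hq0 (by norm_num : 5 < 10))
    (norm_pow_lt_one hq (m := 5) (by norm_num))
  have hJ : qPochInf (q ^ 10) (q ^ 10) ≠ 0 := qPochInf_self_ne_zero hp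
  have hnine : thetaTen q 9 = thetaTen q 1 := by simpa using thetaTen_ten_sub hq0 1
  have htheta : ∀ n : ℕ, thetaProd (q ^ 10) (q ^ n) = thetaTen q n := fun n => by
    rw [thetaTen, zpow_natCast]
  rw [← pow_add, htheta, htheta, htheta] at hkron
  push_cast at hkron
  rw [hnine] at hkron
  field_simp at hkron ⊢
  linear_combination -hkron

private lemma kronecker_neg_one_term {Q : ℂ} (hQ : Q ≠ 0) (h : 1 - Q ^ 5 ≠ 0)
    (h' : 1 + Q ^ 5 ≠ 0) :
    Q ^ 2 * (1 - -1 * Q ^ 5)⁻¹ + (Q ^ 2)⁻¹ * (1 - -1 * (Q ^ 5)⁻¹)⁻¹ =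
      Q ^ 3 / (1 - Q ^ 5) - Q ^ 2 / (1 - Q ^ 5) + 2 * (Q ^ 2 / (1 - Q ^ 10)) -
        2 * (Q ^ 8 / (1 - Q ^ 10)) := by
  have hinv : 1 - -1 * (Q ^ 5)⁻¹ = (1 + Q ^ 5) / Q ^ 5 := by field_simp; ring
  rw [hinv, show 1 - Q ^ 10 = (1 - Q ^ 5) * (1 + Q ^ 5) by ring, neg_one_mul, sub_neg_eq_add,
    inv_div]
  field_simp
  ring

lemma tsum_int_eq_nonneg_add_neg {f : ℤ → ℂ} (hf : Summable f) :
    ∑' n, f n = ∑' k : ℕ, f k + ∑' k : ℕ, f (-((k : ℤ) + 1)) :=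
  tsum_of_nat_of_neg_add_one (hf.comp_injective Nat.cast_injective)
    (hf.comp_injective (i := fun k : ℕ => -((k : ℤ) + 1)) fun a b h => by simpa using h)

lemma tsum_int_eq_zero_add {f : ℤ → ℂ} (hf : Summable f) :
    ∑' n, f n = f 0 + ∑' k : ℕ, (f (k + 1) + f (-((k : ℤ) + 1))) := by
  have hpos : Summable fun k : ℕ => f (k + 1) :=
    hf.comp_injective (i := fun k : ℕ => (k : ℤ) + 1) fun a b h => by simpa using h
  have hneg : Summable fun k : ℕ => f (-((k : ℤ) + 1)) :=
    hf.comp_injective (i := fun k : ℕ => -((k : ℤ) + 1)) fun a b h => by simpa using h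
  rw [tsum_of_add_one_of_neg_add_one hpos hneg, add_right_comm, ← hpos.tsum_add hneg, add_comm]

lemma tsum_kronecker_neg_one_eq_lambert (hq : ‖q‖ < 1) (hq0 : q ≠ 0) :
    ∑' n : ℤ, (q ^ 2) ^ n * (1 - -1 * (q ^ 5) ^ n)⁻¹ =
      1 / 2 + (lambert (q ^ 5) (q ^ 3) - lambert (q ^ 5) (q ^ 2) +
        (lambert (q ^ 5) q + lambert (q ^ 5) (-q)) -
        (lambert (q ^ 5) (q ^ 4) + lambert (q ^ 5) (-q ^ 4))) := by
  have hp := norm_pow_lt_one hq (m := 5) (by norm_num)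
  have hlam (c : ℕ) (hc : c ≠ 0) := hasSum_lambert hp (norm_pow_lt_one hq hc)
  have hlam' (c : ℕ) (hc : c ≠ 0) := hasSum_lambert_add_lambert_neg hp (norm_pow_lt_one hq hc)
  have hrhs := (((hlam 3 (by norm_num)).sub (hlam 2 (by norm_num))).add
    (hlam' 1 (by norm_num))).sub (hlam' 4 (by norm_num))
  have hsum := summable_zpow_mul_inv_one_sub hp (by positivity) (y := -1) (by simp)
    (norm_pow_lt_norm_pow hq hq0 (by norm_num : 2 < 5)) (norm_pow_lt_one hq two_ne_zero)
  rw [pow_one] at hrhs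
  rw [tsum_int_eq_zero_add hsum, ← hrhs.tsum_eq]
  congr 1
  · norm_num
  · refine tsum_congr fun k => ?_
    have hpow (c : ℕ) : (q ^ c) ^ (k + 1) = (q ^ (k + 1)) ^ c := pow_right_comm q c (k + 1)
    have hterm := kronecker_neg_one_term (pow_ne_zero (k + 1) hq0)
      (hpow 5 ▸ one_sub_pow_ne_zero hp k.succ_ne_zero)
      (hpow 5 ▸ one_add_pow_ne_zero hp k.succ_ne_zero)
    simp only [zpow_neg, ← Nat.cast_succ, zpow_natCast, Nat.succ_eq_add_one,
      ← pow_mul q 5 2, ← pow_mul q 4 2, hpow]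
    exact hterm

private lemma two_mul_div_one_sub_sq {Q : ℂ} (h : 1 - Q ≠ 0) (h' : 1 + Q ≠ 0) :
    2 * Q / (1 - Q ^ 2) = Q / (1 - Q) - -Q / (1 - -Q) := by
  rw [sub_neg_eq_add, show 1 - Q ^ 2 = (1 - Q) * (1 + Q) by ring]
  field_simp
  ring

private lemma kronecker_four_term_nonneg (hq : ‖q‖ < 1) (k : ℕ) :
    2 * q ^ 2 * ((q ^ 5) ^ k * (1 - q ^ 4 * (q ^ 10) ^ k)⁻¹) =
      q ^ 2 * (q ^ 5) ^ k / (1 - q ^ 2 * (q ^ 5) ^ k) -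
        -q ^ 2 * (q ^ 5) ^ k / (1 - -q ^ 2 * (q ^ 5) ^ k) := by
  simp only [← pow_mul, ← pow_add, neg_mul]
  rw [← two_mul_div_one_sub_sq (one_sub_pow_ne_zero hq (by omega))
    (one_add_pow_ne_zero hq (by omega))]
  ring

private lemma kronecker_four_term_neg (hq : ‖q‖ < 1) (hq0 : q ≠ 0) (k : ℕ) :
    2 * q ^ 2 * (((q ^ 5) ^ (k + 1))⁻¹ * (1 - q ^ 4 * ((q ^ 10) ^ (k + 1))⁻¹)⁻¹) =
      -q ^ 3 * (q ^ 5) ^ k / (1 - -q ^ 3 * (q ^ 5) ^ k) -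
        q ^ 3 * (q ^ 5) ^ k / (1 - q ^ 3 * (q ^ 5) ^ k) := by
  simp only [← pow_mul, ← pow_add, neg_mul]
  have hden : 1 - q ^ 4 * (q ^ (10 * (k + 1)))⁻¹ =
      -((1 - (q ^ (3 + 5 * k)) ^ 2) / (q ^ (3 + 5 * k)) ^ 2) := by
    field_simp; ring
  have hnum : 2 * q ^ 2 * (q ^ (5 * (k + 1)))⁻¹ = 2 / q ^ (3 + 5 * k) := by field_simp; ring
  rw [← mul_assoc, hnum, hden, ← neg_sub (_ / _) (_ / _), ← two_mul_div_one_sub_sq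
    (one_sub_pow_ne_zero hq (by omega)) (one_add_pow_ne_zero hq (by omega))]
  have hQ : q ^ (3 + 5 * k) ≠ 0 := by positivity
  generalize q ^ (3 + 5 * k) = Q at hQ
  rw [inv_neg, inv_div]
  field_simp

lemma tsum_kronecker_four_eq_lambert (hq : ‖q‖ < 1) (hq0 : q ≠ 0) :
    2 * q ^ 2 * ∑' n : ℤ, (q ^ 5) ^ n * (1 - q ^ 4 * (q ^ 10) ^ n)⁻¹ =
      (lambert (q ^ 5) (q ^ 2) - lambert (q ^ 5) (-q ^ 2)) +
        (lambert (q ^ 5) (-q ^ 3) - lambert (q ^ 5) (q ^ 3)) := by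
  have hlam := summable_lambert (norm_pow_lt_one hq (m := 5) (by norm_num))
  have hsum := summable_zpow_mul_inv_one_sub (norm_pow_lt_one hq (m := 10) (by norm_num))
    (by positivity) (y := q ^ 4) (by positivity)
    (norm_pow_lt_norm_pow hq hq0 (by norm_num : 5 < 10)) (norm_pow_lt_one hq (m := 5) (by norm_num))
  rw [tsum_int_eq_nonneg_add_neg hsum, mul_add, ← tsum_mul_left, ← tsum_mul_left]
  simp only [lambert]
  rw [← (hlam (q ^ 2)).tsum_sub (hlam (-q ^ 2)), ← (hlam (-q ^ 3)).tsum_sub (hlam (q ^ 3))]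
  congr 1 <;> refine tsum_congr fun k => ?_
  · rw [zpow_natCast, zpow_natCast, kronecker_four_term_nonneg hq]
  · rw [zpow_neg, zpow_neg, ← Nat.cast_succ, zpow_natCast, zpow_natCast,
      kronecker_four_term_neg hq hq0]

/-- The zeroth component of the 5-dissection: the four Lambert series that survive in the two
coalescing Appell pairs combine into theta quotients. -/
lemma appellPair_five_zeroth (hq : ‖q‖ < 1) (hq0 : q ≠ 0) :
    1 + 4 * appellPair (q ^ 5) (q ^ 2) (q ^ 2) + 2 * appellPair (q ^ 5) q q =
      8 * q ^ 2 * (thetaTen q 1 / thetaTen q 5) * appell 2 (q ^ 5) (-1) (q ^ 2) +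
        4 * q * (thetaTen q 3 / thetaTen q 5) * appell 2 (q ^ 5) (-1) q +
        qPochInf (q ^ 10) (q ^ 10) ^ 2 *
          (thetaTen q 5 ^ 2 * thetaTen q 4 / (thetaTen q 2 ^ 2 * thetaTen q 3 ^ 2) -
            8 * q * thetaTen q 3 / (thetaTen q 2 * thetaTen q 5) +
            8 * q * thetaTen q 1 * thetaTen q 4 / (thetaTen q 2 ^ 2 * thetaTen q 3)) := by
  have h2 := thetaTen_ne_zero hq hq0 (a := 2) (by norm_num)
  have h3 := thetaTen_ne_zero hq hq0 (a := 3) (by norm_num)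
  have h4 := thetaTen_ne_zero hq hq0 (a := 4) (by norm_num)
  have h5 := thetaTen_ne_zero hq hq0 (a := 5) (by norm_num)
  have hrel : thetaTen q 1 * thetaTen q 4 / (thetaTen q 2 ^ 2 * thetaTen q 3) =
      thetaTen q 3 / (thetaTen q 2 * thetaTen q 5) -
        q * (thetaTen q 1 / (thetaTen q 4 * thetaTen q 5)) := by
    field_simp
    linear_combination thetaTen_relation_four hq hq0
  have hk := tsum_kronecker_neg_one hq hq0
  have hk' := tsum_kronecker_four_eq_lambert hq hq0
  rw [tsum_kronecker_neg_one_eq_lambert hq hq0] at hk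
  rw [tsum_kronecker_four hq hq0] at hk'
  rw [appellPair_five_two_two hq hq0, appellPair_five_one_one hq hq0]
  simp only [thetaLogDeriv]
  rw [show q ^ 5 / q = q ^ 4 by field_simp, show q ^ 5 / q ^ 2 = q ^ 3 by field_simp,
    show q ^ 5 / q ^ 4 = q by field_simp, show q ^ 5 / -q = -q ^ 4 by field_simp,
    show q ^ 5 / -q ^ 2 = -q ^ 3 by field_simp]
  linear_combination hk + 4 * hk' - 8 * q * qPochInf (q ^ 10) (q ^ 10) ^ 2 * hrel

end LambertFive

section Dissection

variable {q t : ℂ}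

lemma tsum_int_eq_tsum_mod_five {f : ℤ → ℂ} (hf : Summable f) :
    ∑' n, f n = ∑' j : ℤ, f (5 * j) + (∑' j : ℤ, f (5 * j + 1) + ∑' j : ℤ, f (5 * j + -1)) +
      (∑' j : ℤ, f (5 * j + 2) + ∑' j : ℤ, f (5 * j + -2)) := by
  have hsum : Summable fun z : Fin 5 × ℤ => f (z.2 * 5 + (z.1 : ℕ)) :=
    ((Equiv.prodComm (Fin 5) ℤ).trans (Int.divModEquiv 5).symm).summable_iff.2 hf
  have hsplit : ∑' n, f n = ∑' z : Fin 5 × ℤ, f (z.2 * 5 + (z.1 : ℕ)) := by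
    rw [← (Int.divModEquiv 5).symm.tsum_eq f, ← (Equiv.prodComm (Fin 5) ℤ).tsum_eq]
    rfl
  have hthree : ∑' j : ℤ, f (5 * j + -2) = ∑' j : ℤ, f (5 * j + 3) := by
    rw [← (Equiv.addRight (1 : ℤ)).tsum_eq]
    exact tsum_congr fun j => congrArg f (by simp only [Equiv.coe_addRight]; ring)
  have hfour : ∑' j : ℤ, f (5 * j + -1) = ∑' j : ℤ, f (5 * j + 4) := by
    rw [← (Equiv.addRight (1 : ℤ)).tsum_eq]
    exact tsum_congr fun j => congrArg f (by simp only [Equiv.coe_addRight]; ring)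
  rw [hsplit, hsum.tsum_prod, tsum_fintype, Fin.sum_univ_five, hthree, hfour]
  simp only [Fin.isValue, Fin.coe_ofNat_eq_mod, Nat.reduceMod, Nat.cast_zero, add_zero,
    Nat.cast_one, Nat.cast_ofNat, mul_comm _ (5 : ℤ)]
  ring

/-- The Appell-type sum `∑_{k ≠ 0} (-1)ᵏ t^(k² + bk) / (1 - t^(5k))`; the term `k = 0` vanishes
because `1 / 0 = 0`. -/
def rankSum (t : ℂ) (b : ℤ) : ℂ := ∑' k : ℤ, (-1) ^ k * t ^ (k * k + b * k) * (1 - (t ^ 5) ^ k)⁻¹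

lemma summable_rankSum (ht : ‖t‖ < 1) (ht0 : t ≠ 0) (b : ℤ) :
    Summable fun k : ℤ => (-1) ^ k * t ^ (k * k + b * k) * (1 - (t ^ 5) ^ k)⁻¹ := by
  have htheta : Summable fun k : ℤ => (-1) ^ k * t ^ (k * k + b * k) := by
    refine (summable_thetaSeries ht ht0 (zpow_ne_zero (b + 1) ht0)).congr fun k => ?_
    rw [neg_eq_neg_one_mul, mul_zpow, mul_assoc, ← zpow_mul, ← zpow_add₀ ht0]
    congr 2
    ring
  simpa using summable_mul_inv_one_sub_zpow (norm_pow_lt_one ht (m := 5) (by norm_num))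
    (pow_ne_zero 5 ht0) one_ne_zero htheta

lemma neg_one_zpow_five_mul_add (j c : ℤ) : (-1 : ℂ) ^ (5 * j + c) = (-1) ^ c * (-1) ^ j := by
  rw [zpow_add₀ (by norm_num), zpow_mul]
  norm_num
  ring

/-- Centring the residues of `k` at `c` makes the exponent `k² + (5 - 2c) k` even in the
remainder `a`. -/
lemma rankSum_residue (ht0 : t ≠ 0) (a c : ℤ) :
    ∑' j : ℤ, (-1) ^ (5 * j + a + c) * t ^ ((5 * j + a + c) * (5 * j + a + c) +
        (5 - 2 * c) * (5 * j + a + c)) * (1 - (t ^ 5) ^ (5 * j + a + c))⁻¹ =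
      (-1) ^ (a + c) * t ^ (a * a - c * c) * (t ^ 5) ^ (a + c) *
        appell 2 ((t ^ 5) ^ 5) (-(t ^ 5) ^ (2 * a)) ((t ^ 5) ^ (a + c)) := by
  rw [appell, ← tsum_mul_left]
  refine tsum_congr fun j => ?_
  have hden : (t ^ 5) ^ (5 * j + a + c) = (t ^ 5) ^ (a + c) * ((t ^ 5) ^ 5) ^ j := by
    rw [add_assoc, add_comm, zpow_add₀ (pow_ne_zero 5 ht0), zpow_mul, zpow_ofNat]
  have hnum : t ^ ((5 * j + a + c) * (5 * j + a + c) + (5 - 2 * c) * (5 * j + a + c)) =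
      t ^ (a * a - c * c) * (t ^ 5) ^ (a + c) *
        (((t ^ 5) ^ (2 * a)) ^ j * (((t ^ 5) ^ 5) ^ tri j) ^ 2) := by
    have htwo (x : ℂ) : x ^ 2 = x ^ (2 : ℤ) := by norm_cast
    have hfive (x : ℂ) : x ^ 5 = x ^ (5 : ℤ) := by norm_cast
    simp only [htwo, hfive, ← zpow_mul, ← zpow_add₀ ht0]
    congr 1
    linear_combination (-25 : ℤ) * two_mul_tri j
  rw [hden, hnum, add_assoc, neg_one_zpow_five_mul_add, neg_eq_neg_one_mul ((t ^ 5) ^ (2 * a)),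
    mul_zpow]
  ring

lemma rankSum_five_sub_two_mul (ht : ‖t‖ < 1) (ht0 : t ≠ 0) (c : ℤ) :
    rankSum t (5 - 2 * c) = (-1) ^ c * (t ^ (c * c))⁻¹ * ((t ^ 5) ^ c *
        appell 2 ((t ^ 5) ^ 5) (-1) ((t ^ 5) ^ c) -
      t * ((t ^ 5) ^ c / t ^ 5) * appellPair ((t ^ 5) ^ 5) (t ^ 5) ((t ^ 5) ^ c) +
      t ^ 4 * ((t ^ 5) ^ c / (t ^ 5) ^ 2) *
        appellPair ((t ^ 5) ^ 5) ((t ^ 5) ^ 2) ((t ^ 5) ^ c)) := by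
  have hq0 : t ^ 5 ≠ 0 := pow_ne_zero 5 ht0
  have h0 := rankSum_residue ht0 0 c
  have h1 := rankSum_residue ht0 1 c
  have h2 := rankSum_residue ht0 2 c
  have hneg1 := rankSum_residue ht0 (-1) c
  have hneg2 := rankSum_residue ht0 (-2) c
  have hsum := (Equiv.addRight c).summable_iff.2 (summable_rankSum ht ht0 (5 - 2 * c))
  rw [rankSum, ← (Equiv.addRight c).tsum_eq]
  refine (tsum_int_eq_tsum_mod_five hsum).trans ?_
  simp only [add_zero, zero_add] at h0
  simp only [Function.comp, Equiv.coe_addRight]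
  rw [h0, h1, h2, hneg1, hneg2]
  simp only [appellPair, zpow_add₀ hq0, zpow_sub₀ ht0,
    zpow_add₀ (neg_ne_zero.2 (one_ne_zero (α := ℂ)))]
  norm_num [zpow_neg, zpow_ofNat, ← pow_mul]
  field_simp
  ring

/-- `θ(t) D(t)`, where `θ(t) = ∑ (-1)ⁿ t^(n²)` and `D` is the generating function of
`N̄(0,5,n) - N̄(2,5,n)`. -/
def rankNumerator (t : ℂ) : ℂ := 1 + 4 * rankSum t 1 + 2 * rankSum t 3

lemma rankNumerator_eq_dissection (ht : ‖t‖ < 1) (ht0 : t ≠ 0) :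
    rankNumerator t = (1 + 4 * appellPair ((t ^ 5) ^ 5) ((t ^ 5) ^ 2) ((t ^ 5) ^ 2) +
        2 * appellPair ((t ^ 5) ^ 5) (t ^ 5) (t ^ 5)) +
      4 * t * t ^ 5 * appell 2 ((t ^ 5) ^ 5) (-1) ((t ^ 5) ^ 2) -
      4 * t ^ 2 * appellPair ((t ^ 5) ^ 5) (t ^ 5) ((t ^ 5) ^ 2) -
      2 * t ^ 3 * (appellPair ((t ^ 5) ^ 5) ((t ^ 5) ^ 2) (t ^ 5) / t ^ 5) -
      2 * t ^ 4 * appell 2 ((t ^ 5) ^ 5) (-1) (t ^ 5) := by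
  have h1 := rankSum_five_sub_two_mul ht ht0 2
  have h3 := rankSum_five_sub_two_mul ht ht0 1
  norm_num [zpow_ofNat] at h1 h3
  rw [rankNumerator, h1, h3]
  field_simp
  ring

lemma thetaSeries_residue (ht0 : t ≠ 0) (a : ℤ) :
    ∑' j : ℤ, (-t) ^ (5 * j + a) * t ^ ((5 * j + a) * (5 * j + a) - (5 * j + a)) =
      (-1) ^ a * t ^ (a * a) * thetaSeries ((t ^ 5) ^ 5) ((t ^ 5) ^ (5 + 2 * a)) := by
  rw [thetaSeries, ← tsum_mul_left]
  refine tsum_congr fun j => ?_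
  have hexp : t ^ (5 * j + a) * t ^ ((5 * j + a) * (5 * j + a) - (5 * j + a)) =
      t ^ (a * a) * (((t ^ 5) ^ (5 + 2 * a)) ^ j * ((t ^ 5) ^ 5) ^ (j * j - j)) := by
    have hfive (x : ℂ) : x ^ 5 = x ^ (5 : ℤ) := by norm_cast
    simp only [hfive, ← zpow_mul, ← zpow_add₀ ht0]
    congr 1
    ring
  rw [neg_eq_neg_one_mul t, neg_eq_neg_one_mul ((t ^ 5) ^ _), mul_zpow, mul_zpow,
    neg_one_zpow_five_mul_add]
  linear_combination (-1) ^ a * (-1) ^ j * hexp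

lemma thetaSeries_self_eq_dissection (ht : ‖t‖ < 1) (ht0 : t ≠ 0) :
    thetaSeries t t = qPochInf ((t ^ 5) ^ 10) ((t ^ 5) ^ 10) *
      (thetaTen (t ^ 5) 5 - 2 * t * thetaTen (t ^ 5) 3 + 2 * t ^ 4 * thetaTen (t ^ 5) 1) := by
  have hq := norm_pow_lt_one ht (m := 5) (by norm_num)
  have hq0 : t ^ 5 ≠ 0 := pow_ne_zero 5 ht0
  have htheta (a : ℤ) : thetaSeries ((t ^ 5) ^ 5) ((t ^ 5) ^ a) =
      qPochInf ((t ^ 5) ^ 10) ((t ^ 5) ^ 10) * thetaTen (t ^ 5) a := by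
    rw [thetaSeries_eq (norm_pow_lt_one hq (by norm_num)) (pow_ne_zero 5 hq0)
      (zpow_ne_zero a hq0), ← pow_mul (t ^ 5) 5 2, thetaTen]
  have h7 := thetaTen_ten_sub hq0 3
  have h9 := thetaTen_ten_sub hq0 1
  have h0 := thetaSeries_residue ht0 0
  simp only [add_zero] at h0
  conv_lhs => rw [thetaSeries]
  rw [tsum_int_eq_tsum_mod_five (summable_thetaSeries ht ht0 ht0), h0,
    thetaSeries_residue ht0, thetaSeries_residue ht0, thetaSeries_residue ht0,
    thetaSeries_residue ht0]
  simp only [htheta]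
  norm_num [zpow_ofNat] at h7 h9 ⊢
  rw [h7, h9]
  ring

/-- The components, as functions of `q = t⁵`, of the 5-dissection of the generating function of
`N̄(0,5,n) - N̄(2,5,n)`: entry `c` collects the exponents congruent to `c` modulo `5`. -/
def rankComponent (q : ℂ) : Fin 5 → ℂ :=
  let J := qPochInf (q ^ 10) (q ^ 10)
  ![J * (thetaTen q 5 * thetaTen q 4 / (thetaTen q 2 ^ 2 * thetaTen q 3 ^ 2)),
    4 * q * appell 2 (q ^ 5) (-1) (q ^ 2) / (J * thetaTen q 5) +
      2 * J * (thetaTen q 4 / (thetaTen q 2 ^ 2 * thetaTen q 3)),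
    0,
    2 * J / (thetaTen q 2 * thetaTen q 3),
    -2 * appell 2 (q ^ 5) (-1) q / (J * thetaTen q 5) +
      4 * J / (thetaTen q 2 * thetaTen q 5) -
      2 * J * (thetaTen q 1 * thetaTen q 4 / (thetaTen q 2 ^ 2 * thetaTen q 3 ^ 2))]

theorem rankNumerator_eq_thetaSeries_mul (ht : ‖t‖ < 1) (ht0 : t ≠ 0) :
    rankNumerator t = thetaSeries t t * ∑ c : Fin 5, t ^ (c : ℕ) * rankComponent (t ^ 5) c := by
  have hq := norm_pow_lt_one ht (m := 5) (by norm_num)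
  have hq0 : t ^ 5 ≠ 0 := pow_ne_zero 5 ht0
  have h2 := thetaTen_ne_zero hq hq0 (a := 2) (by norm_num)
  have h3 := thetaTen_ne_zero hq hq0 (a := 3) (by norm_num)
  have h5 := thetaTen_ne_zero hq hq0 (a := 5) (by norm_num)
  have hJ : qPochInf ((t ^ 5) ^ 10) ((t ^ 5) ^ 10) ≠ 0 :=
    qPochInf_self_ne_zero (norm_pow_lt_one hq (by norm_num))
  rw [rankNumerator_eq_dissection ht ht0, thetaSeries_self_eq_dissection ht ht0,
    appellPair_five_zeroth hq hq0, appellPair_five_one_two hq hq0,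
    appellPair_five_two_one hq hq0, Fin.sum_univ_five]
  simp only [rankComponent, Matrix.cons_val, Fin.isValue, Fin.coe_ofNat_eq_mod, Nat.reduceMod]
  generalize appell _ _ _ (t ^ 5) = A
  generalize appell _ _ _ ((t ^ 5) ^ 2) = B
  generalize thetaTen (t ^ 5) 1 = T₁ at *
  generalize thetaTen (t ^ 5) 2 = T₂ at *
  generalize thetaTen (t ^ 5) 3 = T₃ at *
  generalize thetaTen (t ^ 5) 4 = T₄ at *
  generalize thetaTen (t ^ 5) 5 = T₅ at *
  generalize qPochInf _ _ = J at *
  field_simp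
  ring

end Dissection

section Counting

lemma overN_eq_sum (s m n : ℕ) : overN s m n = ∑ p : Nat.Partition n,
    if ((p.parts.sup : ℤ) - (Multiset.card p.parts : ℤ)) % (m : ℤ) = (s : ℤ) % (m : ℤ)
      then 2 ^ #p.parts.toFinset else 0 := by
  rw [overN, card_filter, sum_sigma]
  refine sum_congr rfl fun p _ => ?_
  split_ifs <;> simp

/-- The number of overpartitions of `n` into exactly `m` parts with all parts at most `l`. -/
def boundedCount (n l m : ℕ) : ℕ := ∑ p : Nat.Partition n,
  if p.parts.sup ≤ l ∧ Multiset.card p.parts = m then 2 ^ #p.parts.toFinset else 0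

/-- The number of overpartitions of `n` into exactly `m` parts with largest part `l`. -/
def exactCount (n l m : ℕ) : ℕ := ∑ p : Nat.Partition n,
  if p.parts.sup = l ∧ Multiset.card p.parts = m then 2 ^ #p.parts.toFinset else 0

lemma boundedCount_succ (n l m : ℕ) :
    boundedCount n (l + 1) m = boundedCount n l m + exactCount n (l + 1) m := by
  rw [boundedCount, boundedCount, exactCount, ← sum_add_distrib]
  refine sum_congr rfl fun p _ => ?_
  split_ifs <;> omega

lemma exactCount_zero_left (n m : ℕ) : exactCount n 0 m = boundedCount n 0 m := by
  simp only [exactCount, boundedCount, nonpos_iff_eq_zero]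

lemma sup_mem_of_ne_zero {s : Multiset ℕ} (h : s.sup ≠ 0) : s.sup ∈ s := by
  induction s using Multiset.induction with
  | empty => simp at h
  | cons a s ih =>
    rw [Multiset.sup_cons] at h ⊢
    rcases le_total a s.sup with hle | hle
    · rw [sup_of_le_right hle] at h ⊢
      exact Multiset.mem_cons_of_mem (ih h)
    · rw [sup_of_le_left hle]
      exact Multiset.mem_cons_self a s

lemma parts_eq_zero_of_sup_eq_zero {n : ℕ} {p : Nat.Partition n} (h : p.parts.sup = 0) :
    p.parts = 0 := by
  refine Multiset.eq_zero_of_forall_notMem fun a ha => ?_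
  have hle := Multiset.le_sup ha
  have hpos := p.parts_pos ha
  omega

lemma exactCount_of_lt {n l : ℕ} (m : ℕ) (h : n < l) : exactCount n l m = 0 := by
  refine sum_eq_zero fun p _ => if_neg ?_
  rintro ⟨hsup, -⟩
  have hle := Nat.Partition.le_of_mem_parts (sup_mem_of_ne_zero (s := p.parts) (by omega))
  omega

lemma exactCount_succ_zero (n l : ℕ) : exactCount n (l + 1) 0 = 0 := by
  refine sum_eq_zero fun p _ => if_neg ?_
  rintro ⟨hsup, hcard⟩
  simp [Multiset.card_eq_zero.1 hcard] at hsup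

lemma boundedCount_zero_succ (n m : ℕ) : boundedCount n 0 (m + 1) = 0 := by
  refine sum_eq_zero fun p _ => if_neg ?_
  rintro ⟨hsup, hcard⟩
  simp [parts_eq_zero_of_sup_eq_zero (Nat.le_zero.1 hsup)] at hcard

lemma boundedCount_zero_right (n l : ℕ) : boundedCount n l 0 = if n = 0 then 1 else 0 := by
  split_ifs with hn
  · subst hn
    simp [boundedCount]
  · refine sum_eq_zero fun p _ => if_neg ?_
    rintro ⟨-, hcard⟩
    apply hn
    rw [← p.parts_sum, Multiset.card_eq_zero.1 hcard, Multiset.sum_zero]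

lemma exactCount_eq_sum_insert (n l m : ℕ) :
    exactCount (n + (l + 1)) (l + 1) (m + 1) = ∑ p : Nat.Partition n,
      if p.parts.sup ≤ l + 1 ∧ Multiset.card p.parts = m
        then 2 ^ #(insert (l + 1) p.parts.toFinset) else 0 := by
  let remove := Nat.Partition.partitionWithPartEquiv (n := n + (l + 1)) (a := l + 1)
    (by omega) (by omega)
  have hmem (p : Nat.Partition (n + (l + 1)))
      (hp : p.parts.sup = l + 1 ∧ Multiset.card p.parts = m + 1) : l + 1 ∈ p.parts := by
    have hsup := sup_mem_of_ne_zero (s := p.parts) (by omega)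
    rwa [hp.1] at hsup
  have hsub : exactCount (n + (l + 1)) (l + 1) (m + 1) =
      ∑ p : {p : Nat.Partition (n + (l + 1)) // l + 1 ∈ p.parts},
        if p.1.parts.sup = l + 1 ∧ Multiset.card p.1.parts = m + 1
          then 2 ^ #p.1.parts.toFinset else 0 := by
    rw [← sum_subtype (univ.filter fun p : Nat.Partition (n + (l + 1)) => l + 1 ∈ p.parts)
      (by simp) fun p => if p.parts.sup = l + 1 ∧ Multiset.card p.parts = m + 1
        then 2 ^ #p.parts.toFinset else 0]
    refine (sum_filter_of_ne fun p _ hp => ?_).symm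
    exact hmem p (by_contra fun hcon => hp (if_neg hcon))
  rw [hsub]
  trans ∑ p : Nat.Partition (n + (l + 1) - (l + 1)),
    if p.parts.sup ≤ l + 1 ∧ Multiset.card p.parts = m
      then 2 ^ #(insert (l + 1) p.parts.toFinset) else 0
  · refine (Fintype.sum_equiv remove.symm _ _ fun p => ?_).symm
    rw [Nat.Partition.partitionWithPartEquiv_symm_apply_parts]
    simp
  · rw [Nat.add_sub_cancel]

lemma exactCount_add_succ (n l m : ℕ) : exactCount (n + (l + 1)) (l + 1) (m + 1) =
    boundedCount n (l + 1) m + boundedCount n l m := by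
  rw [exactCount_eq_sum_insert, boundedCount, boundedCount, ← sum_add_distrib]
  refine sum_congr rfl fun p _ => ?_
  by_cases hcard : Multiset.card p.parts = m
  swap
  · simp [hcard]
  simp only [hcard, and_true]
  rcases lt_trichotomy p.parts.sup (l + 1) with hsup | hsup | hsup
  · have hnot : l + 1 ∉ p.parts.toFinset := fun hmem =>
      (Multiset.le_sup (Multiset.mem_toFinset.1 hmem)).not_gt hsup
    rw [card_insert_of_notMem hnot, if_pos hsup.le, if_pos hsup.le,
      if_pos (Nat.lt_succ_iff.1 hsup)]
    ring
  · have hmem : l + 1 ∈ p.parts.toFinset := by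
      rw [Multiset.mem_toFinset, ← hsup]
      exact sup_mem_of_ne_zero (by omega)
    rw [insert_eq_of_mem hmem, if_pos hsup.le, if_neg (by omega), add_zero]
  · rw [if_neg (by omega), if_neg (by omega), if_neg (by omega)]

lemma card_partition_le (n : ℕ) : Fintype.card (Nat.Partition n) ≤ 2 ^ n := by
  refine (Fintype.card_le_of_surjective _ (Nat.Partition.ofComposition_surj (n := n))).trans ?_
  rw [composition_card]
  exact Nat.pow_le_pow_right two_pos (Nat.sub_le n 1)

lemma card_toFinset_parts_le {n : ℕ} (p : Nat.Partition n) : #p.parts.toFinset ≤ n := by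
  refine (Multiset.toFinset_card_le _).trans ?_
  conv_rhs => rw [← p.parts_sum]
  simpa using Multiset.card_nsmul_le_sum (s := p.parts) (a := 1) fun x hx => p.parts_pos hx

lemma sum_two_pow_card_le (n : ℕ) : ∑ p : Nat.Partition n, 2 ^ #p.parts.toFinset ≤ 4 ^ n := by
  calc ∑ p : Nat.Partition n, 2 ^ #p.parts.toFinset
      ≤ Fintype.card (Nat.Partition n) • 2 ^ n :=
        sum_le_card_nsmul _ _ _ fun p _ =>
          Nat.pow_le_pow_right two_pos (card_toFinset_parts_le p)
    _ ≤ 2 ^ n * 2 ^ n := Nat.mul_le_mul_right _ (card_partition_le n)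
    _ = 4 ^ n := (mul_pow 2 2 n).symm

lemma boundedCount_le (n l m : ℕ) : boundedCount n l m ≤ 4 ^ n :=
  (sum_le_sum fun p _ => by split_ifs <;> simp).trans (sum_two_pow_card_le n)

lemma exactCount_le (n l m : ℕ) : exactCount n l m ≤ 4 ^ n :=
  (sum_le_sum fun p _ => by split_ifs <;> simp).trans (sum_two_pow_card_le n)

end Counting

section GeneratingFunctions

variable {t : ℂ}

lemma summable_mul_pow_of_norm_le (ht : ‖t‖ < 1 / 8) {a : ℕ → ℂ} (ha : ∀ n, ‖a n‖ ≤ 4 ^ n) :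
    Summable fun n => a n * t ^ n := by
  have hgeom : Summable fun n : ℕ => (4 * ‖t‖) ^ n :=
    summable_geometric_of_lt_one (by positivity) (by linarith)
  refine Summable.of_norm_bounded hgeom fun n => ?_
  rw [norm_mul, norm_pow, mul_pow]
  exact mul_le_mul_of_nonneg_right (ha n) (by positivity)

lemma summable_boundedCount (ht : ‖t‖ < 1 / 8) (l m : ℕ) :
    Summable fun n => (boundedCount n l m : ℂ) * t ^ n :=
  summable_mul_pow_of_norm_le ht fun n => by
    rw [Complex.norm_natCast]
    exact_mod_cast boundedCount_le n l m

lemma summable_exactCount (ht : ‖t‖ < 1 / 8) (l m : ℕ) :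
    Summable fun n => (exactCount n l m : ℂ) * t ^ n :=
  summable_mul_pow_of_norm_le ht fun n => by
    rw [Complex.norm_natCast]
    exact_mod_cast exactCount_le n l m

/-- The generating function of `boundedCount`. -/
def boundedGF (t : ℂ) (l m : ℕ) : ℂ := ∑' n, (boundedCount n l m : ℂ) * t ^ n

/-- The generating function of `exactCount`. -/
def exactGF (t : ℂ) (l m : ℕ) : ℂ := ∑' n, (exactCount n l m : ℂ) * t ^ n

/-- The generating function of the overpartitions into at most `m` parts, all at most `l`. -/
def boxGF (t : ℂ) (l m : ℕ) : ℂ := ∑ k ∈ range (m + 1), boundedGF t l k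

lemma boundedGF_succ_left (ht : ‖t‖ < 1 / 8) (l m : ℕ) :
    boundedGF t (l + 1) m = boundedGF t l m + exactGF t (l + 1) m := by
  rw [boundedGF, boundedGF, exactGF,
    ← (summable_boundedCount ht l m).tsum_add (summable_exactCount ht (l + 1) m)]
  exact tsum_congr fun n => by rw [boundedCount_succ, Nat.cast_add, add_mul]

lemma exactGF_succ_succ (ht : ‖t‖ < 1 / 8) (l m : ℕ) :
    exactGF t (l + 1) (m + 1) = t ^ (l + 1) * (boundedGF t (l + 1) m + boundedGF t l m) := by
  have hlow : ∑ n ∈ range (l + 1), (exactCount n (l + 1) (m + 1) : ℂ) * t ^ n = 0 :=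
    sum_eq_zero fun n hn => by simp [exactCount_of_lt _ (mem_range.1 hn)]
  rw [exactGF, ← (summable_exactCount ht _ _).sum_add_tsum_nat_add (l + 1), hlow, zero_add,
    boundedGF, boundedGF,
    ← (summable_boundedCount ht (l + 1) m).tsum_add (summable_boundedCount ht l m),
    ← tsum_mul_left]
  refine tsum_congr fun n => ?_
  rw [exactCount_add_succ, pow_add, Nat.cast_add]
  ring

lemma boundedGF_zero_right (l : ℕ) : boundedGF t l 0 = 1 := by
  rw [boundedGF, tsum_eq_single 0 fun n hn => by simp [boundedCount_zero_right, hn]]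
  simp [boundedCount_zero_right]

lemma boundedGF_zero_succ (m : ℕ) : boundedGF t 0 (m + 1) = 0 := by
  simp [boundedGF, boundedCount_zero_succ]

lemma exactGF_zero_left (m : ℕ) : exactGF t 0 m = boundedGF t 0 m := by
  simp only [exactGF, boundedGF, exactCount_zero_left]

lemma exactGF_succ_zero (l : ℕ) : exactGF t (l + 1) 0 = 0 := by
  simp [exactGF, exactCount_succ_zero]

lemma boundedGF_succ_succ (ht : ‖t‖ < 1 / 8) (l m : ℕ) : boundedGF t (l + 1) (m + 1) =
    boundedGF t l (m + 1) + t ^ (l + 1) * (boundedGF t (l + 1) m + boundedGF t l m) := by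
  rw [boundedGF_succ_left ht, exactGF_succ_succ ht]

lemma boxGF_zero_right (l : ℕ) : boxGF t l 0 = 1 := by
  simp [boxGF, boundedGF_zero_right]

lemma boxGF_zero_left (m : ℕ) : boxGF t 0 m = 1 := by
  rw [boxGF, sum_range_succ', boundedGF_zero_right, sum_eq_zero fun k _ => boundedGF_zero_succ k,
    zero_add]

lemma boxGF_succ_succ (ht : ‖t‖ < 1 / 8) (l m : ℕ) : boxGF t (l + 1) (m + 1) =
    boxGF t l (m + 1) + t ^ (l + 1) * (boxGF t (l + 1) m + boxGF t l m) := by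
  simp only [boxGF]
  rw [sum_range_succ', sum_range_succ' (fun k => boundedGF t l k) (m + 1), ← sum_add_distrib,
    mul_sum, sum_congr rfl fun k _ => boundedGF_succ_succ ht l k, sum_add_distrib,
    boundedGF_zero_right, boundedGF_zero_right]
  ring

lemma boxGF_succ_succ' (ht : ‖t‖ < 1 / 8) (l m : ℕ) : boxGF t (l + 1) (m + 1) =
    boxGF t (l + 1) m + t ^ (m + 1) * (boxGF t l (m + 1) + boxGF t l m) := by
  have hrec := boxGF_succ_succ ht
  induction l generalizing m with
  | zero =>
    induction m with
    | zero => rw [hrec]; simp only [boxGF_zero_right, boxGF_zero_left]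
    | succ m ih =>
      have hm := hrec 0 m
      rw [hrec]
      simp only [boxGF_zero_left] at hm ih ⊢
      linear_combination t * ih - hm
  | succ l ihl =>
    induction m with
    | zero =>
      have hl := hrec l 0
      have hl' := hrec (l + 1) 0
      have h0 := ihl 0
      simp only [boxGF_zero_right] at *
      linear_combination hl' + h0 - t * hl
    | succ m ihm =>
      linear_combination hrec (l + 1) (m + 1) - hrec (l + 1) m -
        t ^ (m + 1 + 1) * (hrec l (m + 1) + hrec l m) + ihl (m + 1) +
        t ^ (l + 1 + 1) * (ihm + ihl m)

-- Conjugation of overpartitions, read off from the two recurrences.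
lemma boxGF_comm (ht : ‖t‖ < 1 / 8) (l m : ℕ) : boxGF t l m = boxGF t m l := by
  induction l generalizing m with
  | zero => rw [boxGF_zero_left, boxGF_zero_right]
  | succ l ihl =>
    induction m with
    | zero => rw [boxGF_zero_left, boxGF_zero_right]
    | succ m ihm => rw [boxGF_succ_succ ht, boxGF_succ_succ' ht m l, ihl, ihm, ihl m]

lemma exactGF_eq_boxGF (ht : ‖t‖ < 1 / 8) (l m : ℕ) : exactGF t (l + 1) (m + 1) =
    boxGF t (l + 1) (m + 1) - boxGF t l (m + 1) - boxGF t (l + 1) m + boxGF t l m := by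
  simp only [boxGF, sum_range_succ _ (m + 1)]
  linear_combination -boundedGF_succ_left ht l (m + 1)

lemma exactGF_comm (ht : ‖t‖ < 1 / 8) (l m : ℕ) :
    exactGF t (l + 1) (m + 1) = exactGF t (m + 1) (l + 1) := by
  rw [exactGF_eq_boxGF ht, exactGF_eq_boxGF ht, boxGF_comm ht (l + 1) (m + 1),
    boxGF_comm ht l (m + 1), boxGF_comm ht (l + 1) m, boxGF_comm ht l m]
  ring

end GeneratingFunctions

section ClosedForms

open PowerSeries (C X rescale coeff)

variable {t : ℂ}

/-- The coefficient of `xⁱ` in the `q`-binomial series `(-x; t)_∞ / (x; t)_∞`. -/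
def binomCoeff (t : ℂ) (i : ℕ) : ℂ := qPoch t (-1) i / qPoch t t i

/-- The formal `q`-binomial series `(-X; t)_∞ / (X; t)_∞`. -/
def binomSeries (t : ℂ) : PowerSeries ℂ := PowerSeries.mk (binomCoeff t)

lemma binomCoeff_zero : binomCoeff t 0 = 1 := by
  rw [binomCoeff, qPoch_zero, qPoch_zero, div_one]

lemma binomCoeff_succ_mul (ht : ‖t‖ < 1) (n : ℕ) :
    binomCoeff t (n + 1) * (1 - t ^ (n + 1)) = binomCoeff t n * (1 + t ^ n) := by
  have hn := qPoch_self_ne_zero ht n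
  have hsub := one_sub_pow_ne_zero ht n.succ_ne_zero
  rw [binomCoeff, binomCoeff, qPoch_succ, qPoch_succ, ← pow_succ' t n]
  field_simp
  ring

lemma coeff_zero_mul_one_add (f : PowerSeries ℂ) (a : ℂ) :
    coeff 0 (f * (1 + C a * X)) = coeff 0 f := by
  simp

lemma coeff_succ_mul_one_add (f : PowerSeries ℂ) (a : ℂ) (n : ℕ) :
    coeff (n + 1) (f * (1 + C a * X)) = coeff (n + 1) f + a * coeff n f := by
  rw [mul_add, mul_one, map_add, mul_left_comm, PowerSeries.coeff_C_mul,
    PowerSeries.coeff_succ_mul_X]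

lemma one_add_C_mul_X_ne_zero (a : ℂ) : (1 + C a * X : PowerSeries ℂ) ≠ 0 := fun h => by
  simpa using congrArg (coeff 0) h

lemma rescale_C (a b : ℂ) : rescale a (C b) = C b := by
  ext n
  rw [PowerSeries.coeff_rescale, PowerSeries.coeff_C]
  split_ifs with hn <;> simp [hn]

lemma binomSeries_mul (ht : ‖t‖ < 1) :
    binomSeries t * (1 + C (-1) * X) = rescale t (binomSeries t) * (1 + C 1 * X) := by
  ext n
  cases n with
  | zero => simp only [coeff_zero_mul_one_add, PowerSeries.coeff_rescale, pow_zero, one_mul]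
  | succ n =>
    simp only [coeff_succ_mul_one_add, PowerSeries.coeff_rescale, binomSeries,
      PowerSeries.coeff_mk]
    linear_combination binomCoeff_succ_mul ht n

lemma rescale_binomSeries_mul (ht : ‖t‖ < 1) (a : ℂ) :
    rescale a (binomSeries t) * (1 + C (-a) * X) =
      rescale (a * t) (binomSeries t) * (1 + C a * X) := by
  have h := congrArg (rescale a) (binomSeries_mul ht)
  simp only [map_mul, map_add, map_one, PowerSeries.rescale_X, PowerSeries.rescale_rescale,
    rescale_C, mul_comm t a] at h
  simpa only [map_neg, map_one, neg_mul, one_mul] using h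

lemma binomSeries_mul_rescale_neg_one (ht : ‖t‖ < 1) :
    binomSeries t * rescale (-1) (binomSeries t) = 1 := by
  have hinv : binomSeries t * rescale (-1) (binomSeries t) =
      rescale t (binomSeries t * rescale (-1) (binomSeries t)) := by
    rw [map_mul, PowerSeries.rescale_rescale, mul_comm (-1) t]
    have hpos := binomSeries_mul ht
    have hneg := rescale_binomSeries_mul ht (-1)
    rw [neg_neg, mul_comm (-1) t] at hneg
    refine mul_right_cancel₀
      (mul_ne_zero (one_add_C_mul_X_ne_zero (-1)) (one_add_C_mul_X_ne_zero 1)) ?_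
    linear_combination rescale (-1) (binomSeries t) * (1 + C 1 * X) * hpos +
      rescale t (binomSeries t) * (1 + C 1 * X) * hneg
  ext n
  cases n with
  | zero => simp [binomSeries, PowerSeries.coeff_mul, binomCoeff_zero]
  | succ n =>
    have hcoeff := congrArg (coeff (n + 1)) hinv
    rw [PowerSeries.coeff_rescale] at hcoeff
    rw [PowerSeries.coeff_one, if_neg n.succ_ne_zero]
    refine mul_left_cancel₀ (one_sub_pow_ne_zero ht (Nat.add_one_ne_zero n)) ?_
    linear_combination hcoeff

lemma mk_boundedGF_succ_mul (ht : ‖t‖ < 1 / 8) (l : ℕ) :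
    PowerSeries.mk (boundedGF t (l + 1)) * (1 + C (-t ^ (l + 1)) * X) =
      PowerSeries.mk (boundedGF t l) * (1 + C (t ^ (l + 1)) * X) := by
  ext n
  cases n with
  | zero => simp only [coeff_zero_mul_one_add, PowerSeries.coeff_mk, boundedGF_zero_right]
  | succ n =>
    simp only [coeff_succ_mul_one_add, PowerSeries.coeff_mk]
    linear_combination boundedGF_succ_succ ht l n

lemma mk_boundedGF_mul_rescale (ht : ‖t‖ < 1 / 8) (l : ℕ) :
    PowerSeries.mk (boundedGF t l) * rescale (t ^ (l + 1)) (binomSeries t) =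
      rescale t (binomSeries t) := by
  induction l with
  | zero =>
    have hone : PowerSeries.mk (boundedGF t 0) = 1 := by
      ext n
      cases n with
      | zero => simp [boundedGF_zero_right]
      | succ n => simp [boundedGF_zero_succ, PowerSeries.coeff_one]
    rw [hone, one_mul, zero_add, pow_one]
  | succ l ih =>
    have hshift := rescale_binomSeries_mul (t := t) (by linarith) (t ^ (l + 1))
    rw [← pow_succ] at hshift
    refine mul_right_cancel₀ (one_add_C_mul_X_ne_zero (-t ^ (l + 1))) ?_
    linear_combination rescale (t ^ (l + 1 + 1)) (binomSeries t) * mk_boundedGF_succ_mul ht l -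
      PowerSeries.mk (boundedGF t l) * hshift + (1 + C (-t ^ (l + 1)) * X) * ih

lemma boundedGF_eq_sum (ht : ‖t‖ < 1 / 8) (l m : ℕ) : boundedGF t l m =
    ∑ x ∈ antidiagonal m, t ^ x.1 * binomCoeff t x.1 *
      ((-t ^ (l + 1)) ^ x.2 * binomCoeff t x.2) := by
  have hinv := congrArg (rescale (t ^ (l + 1)))
    (binomSeries_mul_rescale_neg_one (t := t) (by linarith))
  rw [map_mul, map_one, PowerSeries.rescale_rescale, neg_one_mul] at hinv
  have hprod : PowerSeries.mk (boundedGF t l) =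
      rescale t (binomSeries t) * rescale (-t ^ (l + 1)) (binomSeries t) := by
    linear_combination rescale (-t ^ (l + 1)) (binomSeries t) * mk_boundedGF_mul_rescale ht l -
      PowerSeries.mk (boundedGF t l) * hinv
  have hcoeff := congrArg (coeff m) hprod
  rw [PowerSeries.coeff_mul] at hcoeff
  simpa only [PowerSeries.coeff_rescale, PowerSeries.coeff_mk, binomSeries] using hcoeff

lemma exactGF_eq_sum (ht : ‖t‖ < 1 / 8) (l m : ℕ) : exactGF t (l + 1) (m + 1) =
    ∑ x ∈ antidiagonal m, (-1) ^ x.2 * (1 - t ^ (x.2 + 1)) * binomCoeff t (x.2 + 1) *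
      (t ^ x.1 * binomCoeff t x.1) * t ^ ((l + 1) * (x.2 + 1)) := by
  have hsucc := boundedGF_succ_left ht l (m + 1)
  rw [boundedGF_eq_sum ht, boundedGF_eq_sum ht, Nat.sum_antidiagonal_succ',
    Nat.sum_antidiagonal_succ', pow_zero, pow_zero] at hsucc
  rw [← sub_eq_iff_eq_add'.2 hsucc, add_sub_add_left_eq_sub, ← sum_sub_distrib]
  refine sum_congr rfl fun x _ => ?_
  rw [neg_pow, neg_pow (t ^ (l + 1)), ← pow_mul, ← pow_mul]
  ring

end ClosedForms

section BinomialSeries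

variable {t x : ℂ}

lemma exists_norm_binomCoeff_le (ht : ‖t‖ < 1) : ∃ C, ∀ n, ‖binomCoeff t n‖ ≤ C :=
  exists_norm_le_of_tendsto
    ((tendsto_qPoch ht (-1)).div (tendsto_qPoch ht t) (qPochInf_self_ne_zero ht))

lemma summable_binomCoeff_mul_pow (ht : ‖t‖ < 1) (hx : ‖x‖ < 1) :
    Summable fun i => binomCoeff t i * x ^ i := by
  obtain ⟨C, hC⟩ := exists_norm_binomCoeff_le ht
  refine Summable.of_norm_bounded
    ((summable_geometric_of_lt_one (norm_nonneg x) hx).mul_left C) fun i => ?_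
  rw [norm_mul, norm_pow]
  exact mul_le_mul_of_nonneg_right (hC i) (by positivity)

lemma norm_mul_pow_le (ht : ‖t‖ < 1) (x : ℂ) (n : ℕ) : ‖x * t ^ n‖ ≤ ‖x‖ := by
  rw [norm_mul, norm_pow]
  exact mul_le_of_le_one_right (norm_nonneg _) (pow_le_one₀ (norm_nonneg _) ht.le)

lemma tsum_binomCoeff_mul (ht : ‖t‖ < 1) (hx : ‖x‖ < 1) :
    (∑' i, binomCoeff t i * x ^ i) * (1 - x) =
      (∑' i, binomCoeff t i * (x * t) ^ i) * (1 + x) := by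
  have hxt : ‖x * t‖ < 1 := by simpa using (norm_mul_pow_le ht x 1).trans_lt hx
  have hsum := summable_binomCoeff_mul_pow ht hx
  have hsum' := summable_binomCoeff_mul_pow ht hxt
  have hstep : (∑' i, binomCoeff t (i + 1) * x ^ (i + 1)) -
      (∑' i, binomCoeff t (i + 1) * (x * t) ^ (i + 1)) =
      x * ((∑' i, binomCoeff t i * x ^ i) + ∑' i, binomCoeff t i * (x * t) ^ i) := by
    rw [← ((summable_nat_add_iff 1).2 hsum).tsum_sub ((summable_nat_add_iff 1).2 hsum'),
      ← hsum.tsum_add hsum', ← tsum_mul_left]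
    refine tsum_congr fun n => ?_
    rw [mul_pow, mul_pow]
    linear_combination x ^ (n + 1) * binomCoeff_succ_mul ht n
  have hzero := hsum.tsum_eq_zero_add
  have hzero' := hsum'.tsum_eq_zero_add
  simp only [pow_zero] at hzero hzero'
  linear_combination hzero - hzero' + hstep

lemma tsum_binomCoeff_mul_qPoch (ht : ‖t‖ < 1) (hx : ‖x‖ < 1) (n : ℕ) :
    (∑' i, binomCoeff t i * x ^ i) * qPoch t x n =
      (∑' i, binomCoeff t i * (x * t ^ n) ^ i) * qPoch t (-x) n := by
  induction n with
  | zero => simp only [qPoch_zero, pow_zero, mul_one]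
  | succ n ih =>
    have hstep := tsum_binomCoeff_mul ht ((norm_mul_pow_le ht x n).trans_lt hx)
    rw [mul_assoc x, ← pow_succ] at hstep
    rw [qPoch_succ, qPoch_succ]
    linear_combination (1 - x * t ^ n) * ih + qPoch t (-x) n * hstep

lemma tendsto_tsum_binomCoeff (ht : ‖t‖ < 1) (hx : ‖x‖ < 1) :
    Tendsto (fun n => ∑' i, binomCoeff t i * (x * t ^ n) ^ i) atTop (𝓝 1) := by
  obtain ⟨C, hC⟩ := exists_norm_binomCoeff_le ht
  have hlim : Tendsto (fun n => ∑' i, binomCoeff t i * (x * t ^ n) ^ i) atTop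
      (𝓝 (∑' i, binomCoeff t i * 0 ^ i)) := by
    refine tendsto_tsum_of_dominated_convergence (bound := fun i => C * ‖x‖ ^ i)
      ((summable_geometric_of_lt_one (norm_nonneg x) hx).mul_left C) (fun i => ?_)
      (Eventually.of_forall fun n i => ?_)
    · have harg : Tendsto (fun n => x * t ^ n) atTop (𝓝 0) := by
        simpa only [mul_zero] using (tendsto_pow_atTop_nhds_zero_of_norm_lt_one ht).const_mul x
      exact (harg.pow i).const_mul _
    · rw [norm_mul, norm_pow]
      exact mul_le_mul (hC i) (pow_le_pow_left₀ (norm_nonneg _) (norm_mul_pow_le ht x n) i)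
        (by positivity) ((norm_nonneg _).trans (hC i))
  rwa [tsum_eq_single 0 fun i hi => by rw [zero_pow hi, mul_zero], pow_zero, mul_one,
    binomCoeff_zero] at hlim

theorem tsum_binomCoeff_mul_qPochInf (ht : ‖t‖ < 1) (hx : ‖x‖ < 1) :
    (∑' i, binomCoeff t i * x ^ i) * qPochInf t x = qPochInf t (-x) := by
  have hlim := (tendsto_tsum_binomCoeff ht hx).mul (tendsto_qPoch ht (-x))
  rw [one_mul] at hlim
  exact tendsto_nhds_unique ((tendsto_qPoch ht x).const_mul _)
    (hlim.congr fun n => (tsum_binomCoeff_mul_qPoch ht hx n).symm)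

-- Gauss: `∑ (-1)ⁿ t^(n²) = (t; t)_∞ / (-t; t)_∞`, the reciprocal of the generating function of
-- all overpartitions.
lemma thetaSeries_self_mul_qPochInf (ht : ‖t‖ < 1) (ht0 : t ≠ 0) :
    thetaSeries t t * qPochInf t (-t) = qPochInf t t := by
  have hne := qPochInf_self_ne_zero (norm_pow_lt_one ht two_ne_zero)
  have hneg := qPochInf_mul_neg ht t
  have hsplit := qPochInf_eq_even_mul_odd ht t
  rw [← sq] at hsplit
  have hunit : qPochInf t (-t) * qPochInf (t ^ 2) t = 1 := by
    refine mul_right_cancel₀ hne ?_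
    linear_combination hneg - qPochInf t (-t) * hsplit
  rw [thetaSeries_eq ht ht0 ht0, thetaProd, show t ^ 2 / t = t by field_simp]
  linear_combination qPochInf (t ^ 2) (t ^ 2) * qPochInf (t ^ 2) t * hunit - hsplit

lemma thetaSeries_mul_binomCoeff_mul_tsum (ht : ‖t‖ < 1) (ht0 : t ≠ 0) (j : ℕ) :
    thetaSeries t t * (binomCoeff t (j + 1) * ∑' i, binomCoeff t i * (t ^ (j + 2)) ^ i) =
      2 / (1 + t ^ (j + 1)) := by
  have hsum := tsum_binomCoeff_mul_qPochInf ht (norm_pow_lt_one ht (m := j + 2) (by omega))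
  have hden := qPochInf_eq_qPoch_mul ht t (j + 1)
  have hnum := qPochInf_eq_qPoch_mul ht (-1) (j + 2)
  have hone := qPochInf_eq_mul ht (-1)
  have htheta := thetaSeries_self_mul_qPochInf ht ht0
  have hfin := qPoch_self_ne_zero ht (j + 1)
  rw [qPoch_succ, neg_one_mul, neg_one_mul] at hnum
  rw [neg_one_mul] at hone
  rw [← pow_succ'] at hden
  rw [binomCoeff, eq_div_iff (one_add_pow_ne_zero ht (Nat.add_one_ne_zero j))]
  refine mul_right_cancel₀ (qPochInf_self_ne_zero ht) ?_
  conv_lhs => rw [hden]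
  field_simp
  linear_combination thetaSeries t t * qPoch t (-1) (j + 1) * (1 + t ^ (j + 1)) * hsum -
    thetaSeries t t * hnum + thetaSeries t t * hone + 2 * htheta

end BinomialSeries

section FixedRank

variable {t : ℂ}

/-- The generating function of the nonempty overpartitions of rank `r`, for `r ≥ 0`. -/
def rankGF (t : ℂ) (r : ℕ) : ℂ := ∑' k, exactGF t (k + r + 1) (k + 1)

lemma tsum_sum_antidiagonal {f : ℕ × ℕ → ℂ} (hf : Summable f) :
    ∑' m, ∑ x ∈ antidiagonal m, f x = ∑' j, ∑' i, f (i, j) := by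
  have hsigma := HasAntidiagonal.sigmaAntidiagonalEquivProd.summable_iff.2 hf
  have hswap : ∑' j, ∑' i, f (i, j) = ∑' x, f x := by
    rw [← (Equiv.prodComm ℕ ℕ).tsum_eq f]
    exact hf.prod_symm.tsum_prod.symm
  rw [hswap, ← HasAntidiagonal.sigmaAntidiagonalEquivProd.tsum_eq f]
  refine (tsum_congr fun m => ?_).trans hsigma.tsum_sigma.symm
  rw [tsum_fintype]
  exact (sum_coe_sort (antidiagonal m) f).symm

lemma norm_pow_succ_pow_le (ht : ‖t‖ < 1) (j e : ℕ) : ‖(t ^ (j + 1)) ^ (e + 1)‖ ≤ ‖t‖ ^ j := by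
  rw [← pow_mul, norm_pow]
  exact pow_le_pow_of_le_one (norm_nonneg _) ht.le (by nlinarith)

lemma summable_rankGF_terms (ht : ‖t‖ < 1) (r : ℕ) : Summable fun x : ℕ × ℕ =>
    (-1) ^ x.2 * (1 - t ^ (x.2 + 1)) * binomCoeff t (x.2 + 1) * (t ^ x.1 * binomCoeff t x.1) *
      (t ^ (x.2 + 1)) ^ (x.1 + x.2 + r + 1) := by
  obtain ⟨B, hB⟩ := exists_norm_binomCoeff_le ht
  have hB0 : 0 ≤ B := (norm_nonneg _).trans (hB 0)
  have hgeom := summable_geometric_of_lt_one (norm_nonneg t) ht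
  have hprod := (hgeom.mul_of_nonneg hgeom (fun _ => by positivity) fun _ => by positivity)
  refine Summable.of_norm_bounded (hprod.mul_left (2 * B * B)) fun x => ?_
  have hsub : ‖1 - t ^ (x.2 + 1)‖ ≤ 2 := by
    have hpow := (norm_pow_lt_one ht (Nat.add_one_ne_zero x.2)).le
    have htri := norm_sub_le 1 (t ^ (x.2 + 1))
    rw [norm_one] at htri
    linarith
  calc _ = ‖1 - t ^ (x.2 + 1)‖ * ‖binomCoeff t (x.2 + 1)‖ * (‖t‖ ^ x.1 * ‖binomCoeff t x.1‖) *
        ‖(t ^ (x.2 + 1)) ^ (x.1 + x.2 + r + 1)‖ := by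
        simp only [norm_mul, norm_pow, norm_neg, norm_one, one_pow, one_mul]
    _ ≤ 2 * B * (‖t‖ ^ x.1 * B) * ‖t‖ ^ x.2 := by
        gcongr
        exacts [hB _, hB _, norm_pow_succ_pow_le ht _ _]
    _ = _ := by ring

theorem thetaSeries_mul_rankGF (ht : ‖t‖ < 1 / 8) (ht0 : t ≠ 0) (r : ℕ) :
    thetaSeries t t * rankGF t r = 2 * ∑' j : ℕ, (-1) ^ j * (1 - t ^ (j + 1)) /
      (1 + t ^ (j + 1)) * (t ^ (j + 1)) ^ (j + 1 + r) := by
  have ht1 : ‖t‖ < 1 := by linarith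
  have hanti : rankGF t r = ∑' m, ∑ x ∈ antidiagonal m, (-1) ^ x.2 * (1 - t ^ (x.2 + 1)) *
      binomCoeff t (x.2 + 1) * (t ^ x.1 * binomCoeff t x.1) *
        (t ^ (x.2 + 1)) ^ (x.1 + x.2 + r + 1) := by
    refine tsum_congr fun m => ?_
    rw [exactGF_eq_sum ht]
    refine sum_congr rfl fun x hx => ?_
    rw [← mem_antidiagonal.1 hx, mul_comm (_ + 1) (x.2 + 1), pow_mul]
  rw [hanti, tsum_sum_antidiagonal (summable_rankGF_terms ht1 r), ← tsum_mul_left,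
    ← tsum_mul_left]
  refine tsum_congr fun j => ?_
  have hinner : ∑' i, (-1) ^ j * (1 - t ^ (j + 1)) * binomCoeff t (j + 1) *
      (t ^ i * binomCoeff t i) * (t ^ (j + 1)) ^ (i + j + r + 1) =
      (-1) ^ j * (1 - t ^ (j + 1)) * (t ^ (j + 1)) ^ (j + 1 + r) * (binomCoeff t (j + 1) *
        ∑' i, binomCoeff t i * (t ^ (j + 2)) ^ i) := by
    rw [← tsum_mul_left, ← tsum_mul_left]
    exact tsum_congr fun i => by ring
  rw [hinner, mul_left_comm, thetaSeries_mul_binomCoeff_mul_tsum ht1 ht0]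
  ring

end FixedRank

section RankCharacter

variable {t : ℂ}

/-- The function of period `5` which is `1` at `0`, `-1` at `2`, and `0` at `1`, `3`, `4`. -/
def rankChar (r : ℤ) : ℂ := (if r % 5 = 0 then 1 else 0) - if r % 5 = 2 then 1 else 0

/-- The difference `N̄(0,5,n) - N̄(2,5,n)`. -/
def rankDiff (n : ℕ) : ℂ := (overN 0 5 n : ℂ) - overN 2 5 n

/-- The generating function of `rankDiff`. -/
def rankDiffGF (t : ℂ) : ℂ := ∑' n, rankDiff n * t ^ n

lemma norm_rankChar_le (r : ℤ) : ‖rankChar r‖ ≤ 1 := by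
  rw [rankChar]
  split_ifs <;> first | omega | norm_num

lemma rankDiff_eq_sum (n : ℕ) : rankDiff n = ∑ p : Nat.Partition n,
    rankChar ((p.parts.sup : ℤ) - Multiset.card p.parts) * 2 ^ #p.parts.toFinset := by
  rw [rankDiff, overN_eq_sum, overN_eq_sum]
  push_cast
  rw [← sum_sub_distrib]
  refine sum_congr rfl fun p _ => ?_
  rw [rankChar, sub_mul, ite_mul, ite_mul]
  simp

lemma hasSum_mul_exactCount {R : Type*} [CommSemiring R] [TopologicalSpace R] [ContinuousAdd R]
    (c : ℕ × ℕ → R) (n : ℕ) : HasSum (fun y => c y * (exactCount n y.1 y.2 : R))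
      (∑ p : Nat.Partition n,
        c (p.parts.sup, Multiset.card p.parts) * 2 ^ #p.parts.toFinset) := by
  have hpart (p : Nat.Partition n) := hasSum_ite_eq (p.parts.sup, Multiset.card p.parts)
    (c (p.parts.sup, Multiset.card p.parts) * 2 ^ #p.parts.toFinset)
  refine (hasSum_sum fun p _ => hpart p).congr_fun fun y => ?_
  rw [exactCount, Nat.cast_sum, mul_sum]
  refine sum_congr rfl fun p _ => ?_
  by_cases hy : y = (p.parts.sup, Multiset.card p.parts)
  · subst hy
    simp
  · have hne : ¬(p.parts.sup = y.1 ∧ Multiset.card p.parts = y.2) := fun h =>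
      hy (Prod.ext h.1.symm h.2.symm)
    simp [hy, hne]

lemma summable_rankChar_mul_exactCount (ht : ‖t‖ < 1 / 8) : Summable fun x : ℕ × (ℕ × ℕ) =>
    rankChar ((x.2.1 : ℤ) - x.2.2) * exactCount x.1 x.2.1 x.2.2 * t ^ x.1 := by
  have hrow (n : ℕ) : HasSum (fun y : ℕ × ℕ => (exactCount n y.1 y.2 : ℝ) * ‖t‖ ^ n)
      ((∑ p : Nat.Partition n, 2 ^ #p.parts.toFinset) * ‖t‖ ^ n) := by
    simpa only [one_mul] using (hasSum_mul_exactCount (fun _ => (1 : ℝ)) n).mul_right (‖t‖ ^ n)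
  have hmajor : Summable fun x : ℕ × (ℕ × ℕ) => (exactCount x.1 x.2.1 x.2.2 : ℝ) * ‖t‖ ^ x.1 := by
    refine (summable_prod_of_nonneg fun x => by positivity).2
      ⟨fun n => (hrow n).summable, ?_⟩
    have hgeom : Summable fun n : ℕ => (4 * ‖t‖) ^ n :=
      summable_geometric_of_lt_one (by positivity) (by linarith)
    refine hgeom.of_nonneg_of_le (fun n => tsum_nonneg fun y => by positivity) fun n => ?_
    rw [(hrow n).tsum_eq, mul_pow]
    gcongr
    exact_mod_cast sum_two_pow_card_le n
  refine hmajor.of_norm_bounded fun x => ?_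
  rw [norm_mul, norm_mul, norm_pow, Complex.norm_natCast]
  gcongr
  exact mul_le_of_le_one_left (by positivity) (norm_rankChar_le _)

lemma hasSum_rankChar_mul_exactGF (ht : ‖t‖ < 1 / 8) :
    HasSum (fun y : ℕ × ℕ => rankChar ((y.1 : ℤ) - y.2) * exactGF t y.1 y.2) (rankDiffGF t) := by
  have hsum := summable_rankChar_mul_exactCount ht
  have hcol (y : ℕ × ℕ) : ∑' n, rankChar ((y.1 : ℤ) - y.2) * exactCount n y.1 y.2 * t ^ n =
      rankChar ((y.1 : ℤ) - y.2) * exactGF t y.1 y.2 := by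
    simp only [mul_assoc, tsum_mul_left, exactGF]
  have hrow (n : ℕ) : ∑' y : ℕ × ℕ, rankChar ((y.1 : ℤ) - y.2) * exactCount n y.1 y.2 * t ^ n =
      rankDiff n * t ^ n := by
    rw [tsum_mul_right, rankDiff_eq_sum,
      (hasSum_mul_exactCount (fun y => rankChar ((y.1 : ℤ) - y.2)) n).tsum_eq]
  have hcols : Summable fun y : ℕ × ℕ =>
      ∑' n, rankChar ((y.1 : ℤ) - y.2) * exactCount n y.1 y.2 * t ^ n := hsum.prod_symm.prod
  have hswap := Summable.tsum_comm
    (f := fun n (y : ℕ × ℕ) => rankChar ((y.1 : ℤ) - y.2) * exactCount n y.1 y.2 * t ^ n) hsum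
  simp only [hcol, hrow] at hcols hswap
  rw [rankDiffGF, ← hswap]
  exact hcols.hasSum

/-- The pairs of natural numbers, parametrized by their difference and their minimum. -/
def subMinEquiv : ℤ × ℕ ≃ ℕ × ℕ where
  toFun x := (x.2 + x.1.toNat, x.2 + (-x.1).toNat)
  invFun y := ((y.1 : ℤ) - y.2, min y.1 y.2)
  left_inv x := by ext <;> dsimp only <;> omega
  right_inv y := by ext <;> dsimp only <;> omega

lemma exactGF_toNat (r : ℤ) : exactGF t r.toNat (-r).toNat = if r = 0 then 1 else 0 := by
  rcases lt_trichotomy r 0 with hr | rfl | hr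
  · obtain ⟨m, hm⟩ := Nat.exists_eq_add_one_of_ne_zero (n := (-r).toNat) (by omega)
    rw [if_neg hr.ne, hm, Int.toNat_of_nonpos hr.le, exactGF_zero_left, boundedGF_zero_succ]
  · rw [if_pos rfl, neg_zero, Int.toNat_zero, exactGF_zero_left, boundedGF_zero_right]
  · obtain ⟨l, hl⟩ := Nat.exists_eq_add_one_of_ne_zero (n := r.toNat) (by omega)
    rw [if_neg hr.ne', hl, Int.toNat_of_nonpos (by omega), exactGF_succ_zero]

lemma exactGF_add_toNat (ht : ‖t‖ < 1 / 8) (r : ℤ) (k : ℕ) :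
    exactGF t (k + 1 + r.toNat) (k + 1 + (-r).toNat) = exactGF t (k + r.natAbs + 1) (k + 1) := by
  rcases le_total 0 r with hr | hr
  · rw [Int.toNat_of_nonpos (neg_nonpos.2 hr), show r.toNat = r.natAbs by omega, add_zero,
      add_right_comm]
  · rw [Int.toNat_of_nonpos hr, show (-r).toNat = r.natAbs by omega, add_zero, add_right_comm,
      exactGF_comm ht]

theorem hasSum_rankChar_mul_rankGF (ht : ‖t‖ < 1 / 8) :
    HasSum (fun r : ℤ => rankChar r * rankGF t r.natAbs) (rankDiffGF t - 1) := by
  have hpair : HasSum (fun x : ℤ × ℕ =>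
      rankChar x.1 * exactGF t (x.2 + x.1.toNat) (x.2 + (-x.1).toNat)) (rankDiffGF t) := by
    refine (subMinEquiv.hasSum_iff.2 (hasSum_rankChar_mul_exactGF ht)).congr_fun fun x => ?_
    simp only [Function.comp_apply, subMinEquiv, Equiv.coe_fn_mk]
    congr 2
    omega
  have hinner (r : ℤ) : ∑' k : ℕ, rankChar r * exactGF t (k + r.toNat) (k + (-r).toNat) =
      (if r = 0 then 1 else 0) + rankChar r * rankGF t r.natAbs := by
    have hrow := hpair.summable.prod_factor r
    have hzero : rankChar r * (if r = 0 then 1 else 0) = if r = 0 then 1 else 0 := by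
      split_ifs with hr <;> simp [hr, rankChar]
    rw [hrow.tsum_eq_zero_add]
    dsimp only
    rw [zero_add, zero_add, exactGF_toNat, hzero, tsum_mul_left, rankGF]
    simp only [exactGF_add_toNat ht]
  have houter := hpair.prod_fiberwise fun r => (hpair.summable.prod_factor r).hasSum
  refine (houter.sub (hasSum_ite_eq (0 : ℤ) (1 : ℂ))).congr_fun fun r => ?_
  rw [hinner, add_sub_cancel_left]

end RankCharacter

section ThetaMultiple

variable {t x : ℂ}

lemma tsum_mul_pow_of_periodic {c : ℕ → ℂ} {N : ℕ} (hc : Function.Periodic c N)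
    (hsum : Summable fun n => c n * x ^ n) :
    (∑' n, c n * x ^ n) * (1 - x ^ N) = ∑ n ∈ range N, c n * x ^ n := by
  have hsplit := hsum.sum_add_tsum_nat_add N
  have htail : ∑' n, c (n + N) * x ^ (n + N) = (∑' n, c n * x ^ n) * x ^ N := by
    rw [← tsum_mul_right]
    exact tsum_congr fun n => by rw [hc, pow_add, mul_assoc]
  rw [htail] at hsplit
  linear_combination -hsplit

lemma rankChar_periodic : Function.Periodic rankChar 5 := fun r => by
  simp only [rankChar, Int.add_emod_right]

lemma hasSum_rankChar_mul_pow (hx : ‖x‖ < 1) :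
    HasSum (fun r : ℤ => rankChar r * x ^ r.natAbs)
      ((1 - x ^ 2) * (1 - x ^ 3) / (1 - x ^ 5)) := by
  have hx5 : 1 - x ^ 5 ≠ 0 := one_sub_pow_ne_zero hx (by norm_num)
  have hsum (c : ℕ → ℤ) : Summable fun n : ℕ => rankChar (c n) * x ^ n := by
    refine (summable_geometric_of_lt_one (norm_nonneg x) hx).of_norm_bounded fun n => ?_
    rw [norm_mul, norm_pow]
    exact mul_le_of_le_one_left (by positivity) (norm_rankChar_le _)
  have hnonneg : (∑' n : ℕ, rankChar n * x ^ n) * (1 - x ^ 5) = 1 - x ^ 2 := by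
    rw [tsum_mul_pow_of_periodic (fun n => by exact_mod_cast rankChar_periodic n) (hsum _)]
    simp [sum_range_succ, rankChar]
    ring
  have hneg : (∑' n : ℕ, rankChar (-(n + 1 : ℤ)) * x ^ n) * (1 - x ^ 5) = x ^ 4 - x ^ 2 := by
    rw [tsum_mul_pow_of_periodic (fun n => ?_) (hsum _)]
    · simp [sum_range_succ, rankChar]
      ring
    · rw [← rankChar_periodic]
      congr 1
  have hneg' : HasSum (fun n : ℕ => rankChar (-(n + 1 : ℤ)) * x ^ (-(n + 1 : ℤ)).natAbs)
      ((∑' n : ℕ, rankChar (-(n + 1 : ℤ)) * x ^ n) * x) := by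
    refine ((hsum fun n => -(n + 1 : ℤ)).hasSum.mul_right x).congr_fun fun n => ?_
    rw [Int.natAbs_neg, show (n + 1 : ℤ).natAbs = n + 1 by omega, pow_succ, mul_assoc]
  convert HasSum.of_nat_of_neg_add_one (f := fun r : ℤ => rankChar r * x ^ r.natAbs)
    (hsum fun n => n).hasSum hneg' using 1
  rw [eq_div_iff hx5 |>.2 hnonneg, eq_div_iff hx5 |>.2 hneg]
  ring

lemma summable_thetaSeries_mul_rankDiffGF_terms (ht : ‖t‖ < 1 / 8) :
    Summable fun y : ℤ × ℕ => rankChar y.1 * ((-1) ^ y.2 * (1 - t ^ (y.2 + 1)) /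
      (1 + t ^ (y.2 + 1)) * (t ^ (y.2 + 1)) ^ (y.2 + 1 + y.1.natAbs)) := by
  have ht1 : ‖t‖ < 1 := by linarith
  have hnat := summable_geometric_of_lt_one (norm_nonneg t) ht1
  have hint : Summable fun r : ℤ => ‖t‖ ^ r.natAbs :=
    .of_nat_of_neg (by simpa using hnat) (by simpa using hnat)
  have hprod := hint.mul_of_nonneg hnat (fun _ => by positivity) fun _ => by positivity
  refine (hprod.mul_left 2).of_norm_bounded fun y => ?_
  have hquot : ‖(1 - t ^ (y.2 + 1)) / (1 + t ^ (y.2 + 1))‖ ≤ 2 := by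
    have hX : ‖t ^ (y.2 + 1)‖ ≤ 1 / 8 := by
      rw [norm_pow]
      exact (pow_le_of_le_one (norm_nonneg t) ht1.le (Nat.add_one_ne_zero _)).trans ht.le
    have hsub := norm_sub_le 1 (t ^ (y.2 + 1))
    have hadd := norm_sub_le_norm_add 1 (t ^ (y.2 + 1))
    rw [norm_one] at hsub hadd
    rw [norm_div, div_le_iff₀ (by linarith)]
    linarith
  have hpow : ‖(t ^ (y.2 + 1)) ^ (y.2 + 1 + y.1.natAbs)‖ ≤ ‖t‖ ^ y.1.natAbs * ‖t‖ ^ y.2 := by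
    rw [← pow_mul, norm_pow, ← pow_add]
    refine pow_le_pow_of_le_one (norm_nonneg t) ht1.le ?_
    nlinarith [Nat.zero_le (y.2 * y.1.natAbs)]
  calc _ = ‖rankChar y.1‖ * (‖(1 - t ^ (y.2 + 1)) / (1 + t ^ (y.2 + 1))‖ *
        ‖(t ^ (y.2 + 1)) ^ (y.2 + 1 + y.1.natAbs)‖) := by
        simp only [mul_div_assoc, norm_mul, norm_pow, norm_neg, norm_one, one_pow, one_mul]
    _ ≤ 1 * (2 * (‖t‖ ^ y.1.natAbs * ‖t‖ ^ y.2)) := by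
        gcongr
        exact norm_rankChar_le _
    _ = _ := one_mul _

theorem thetaSeries_mul_rankDiffGF (ht : ‖t‖ < 1 / 8) (ht0 : t ≠ 0) :
    thetaSeries t t * rankDiffGF t = thetaSeries t t + 2 * ∑' j : ℕ, (-1) ^ j *
      (t ^ (j + 1)) ^ (j + 1) * ((1 - t ^ (j + 1)) ^ 2 * (1 - (t ^ (j + 1)) ^ 3) /
        (1 - (t ^ (j + 1)) ^ 5)) := by
  have ht1 : ‖t‖ < 1 := by linarith
  have hsum := summable_thetaSeries_mul_rankDiffGF_terms ht
  have hcol (j : ℕ) : ∑' r : ℤ, rankChar r * ((-1) ^ j * (1 - t ^ (j + 1)) / (1 + t ^ (j + 1)) *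
      (t ^ (j + 1)) ^ (j + 1 + r.natAbs)) = (-1) ^ j *
      (t ^ (j + 1)) ^ (j + 1) * ((1 - t ^ (j + 1)) ^ 2 * (1 - (t ^ (j + 1)) ^ 3) /
        (1 - (t ^ (j + 1)) ^ 5)) := by
    have hX : ‖t ^ (j + 1)‖ < 1 := norm_pow_lt_one ht1 (Nat.add_one_ne_zero j)
    have hplus : 1 + t ^ (j + 1) ≠ 0 := one_add_pow_ne_zero ht1 (Nat.add_one_ne_zero j)
    generalize t ^ (j + 1) = X at hX hplus ⊢
    have hfactor := ((hasSum_rankChar_mul_pow hX).mul_left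
      ((-1) ^ j * (1 - X) / (1 + X) * X ^ (j + 1))).tsum_eq
    have hX5 : 1 - X ^ 5 ≠ 0 := one_sub_pow_ne_zero hX (by norm_num)
    refine (tsum_congr fun r => ?_).trans (hfactor.trans ?_)
    · rw [pow_add]
      ring
    · field_simp
      ring
  have hrow (r : ℤ) : ∑' j : ℕ, rankChar r * ((-1) ^ j * (1 - t ^ (j + 1)) /
      (1 + t ^ (j + 1)) * (t ^ (j + 1)) ^ (j + 1 + r.natAbs)) =
      rankChar r * (thetaSeries t t * rankGF t r.natAbs) / 2 := by
    rw [thetaSeries_mul_rankGF ht ht0, tsum_mul_left]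
    ring
  have hswap := Summable.tsum_comm (f := fun (r : ℤ) (j : ℕ) => rankChar r * ((-1) ^ j *
    (1 - t ^ (j + 1)) / (1 + t ^ (j + 1)) * (t ^ (j + 1)) ^ (j + 1 + r.natAbs))) hsum
  simp only [hcol, hrow] at hswap
  rw [hswap, ← sub_eq_iff_eq_add', ← mul_sub_one, ← (hasSum_rankChar_mul_rankGF ht).tsum_eq,
    ← tsum_mul_left, ← tsum_mul_left]
  exact tsum_congr fun r => by ring

lemma add_inv_rankNumerator_term (hx : x ≠ 0) (hx5 : 1 - x ^ 5 ≠ 0) :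
    ((4 * x + 2 * x ^ 3) / (1 - x ^ 5) - 1) +
        ((4 * x⁻¹ + 2 * x⁻¹ ^ 3) / (1 - x⁻¹ ^ 5) - 1) =
      -2 * ((1 - x) ^ 2 * (1 - x ^ 3) / (1 - x ^ 5)) := by
  have hinv : 1 - x⁻¹ ^ 5 = -(1 - x ^ 5) / x ^ 5 := by
    field_simp
    ring
  rw [hinv]
  field_simp
  ring

lemma hasSum_rankNumerator_sub (ht : ‖t‖ < 1) (ht0 : t ≠ 0) :
    HasSum (fun k : ℤ => (-1) ^ k * t ^ (k * k) *
        ((4 * t ^ k + 2 * (t ^ k) ^ 3) / (1 - (t ^ k) ^ 5) - 1))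
      (rankNumerator t - 1 - thetaSeries t t) := by
  have hone := (summable_rankSum ht ht0 1).hasSum.mul_left 4
  have hthree := (summable_rankSum ht ht0 3).hasSum.mul_left 2
  have htheta := (summable_thetaSeries ht ht0 ht0).hasSum
  have hvalue : rankNumerator t - 1 - thetaSeries t t =
      4 * rankSum t 1 + 2 * rankSum t 3 - thetaSeries t t := by
    rw [rankNumerator]
    ring
  rw [hvalue]
  refine ((hone.add hthree).sub htheta).congr_fun fun k => ?_
  have htk : t ^ k ≠ 0 := zpow_ne_zero k ht0
  have hfive : (t ^ 5) ^ k = (t ^ k) ^ 5 := by rw [← zpow_natCast, ← zpow_natCast, zpow_comm]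
  have hcube : t ^ (3 * k) = (t ^ k) ^ 3 := by rw [mul_comm, zpow_mul, zpow_ofNat]
  have hneg : (-t) ^ k * t ^ (k * k - k) = (-1) ^ k * t ^ (k * k) := by
    rw [neg_eq_neg_one_mul, mul_zpow, zpow_sub₀ ht0, mul_assoc, mul_div_cancel₀ _ htk]
  rw [hneg, zpow_add₀ ht0, zpow_add₀ ht0, one_mul, hcube, hfive]
  ring

lemma rankNumerator_eq_thetaSeries_add (ht : ‖t‖ < 1) (ht0 : t ≠ 0) :
    rankNumerator t = thetaSeries t t + 2 * ∑' j : ℕ, (-1) ^ j *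
      (t ^ (j + 1)) ^ (j + 1) * ((1 - t ^ (j + 1)) ^ 2 * (1 - (t ^ (j + 1)) ^ 3) /
        (1 - (t ^ (j + 1)) ^ 5)) := by
  have hsum := hasSum_rankNumerator_sub ht ht0
  have hfold := hsum.tsum_eq.symm.trans (tsum_int_eq_zero_add hsum.summable)
  have hpair (j : ℕ) (k : ℤ) (hk : k = (j + 1 : ℕ)) :
      (-1) ^ k * t ^ (k * k) * ((4 * t ^ k + 2 * (t ^ k) ^ 3) / (1 - (t ^ k) ^ 5) - 1) +
        (-1) ^ (-k) * t ^ (-k * -k) *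
          ((4 * t ^ (-k) + 2 * (t ^ (-k)) ^ 3) / (1 - (t ^ (-k)) ^ 5) - 1) =
      2 * ((-1) ^ j * (t ^ (j + 1)) ^ (j + 1) * ((1 - t ^ (j + 1)) ^ 2 *
        (1 - (t ^ (j + 1)) ^ 3) / (1 - (t ^ (j + 1)) ^ 5))) := by
    have hX := norm_pow_lt_one ht (Nat.add_one_ne_zero j)
    have hpole := add_inv_rankNumerator_term (pow_ne_zero (j + 1) ht0)
      (one_sub_pow_ne_zero hX (m := 5) (by norm_num))
    rw [neg_mul_neg, zpow_neg t, zpow_neg, ← inv_zpow, inv_neg_one, ← mul_add, zpow_mul, hk,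
      zpow_natCast, zpow_natCast, zpow_natCast, hpole, pow_succ (-1)]
    ring
  simp only [hpair _ _ (Nat.cast_succ _).symm, tsum_mul_left] at hfold
  norm_num at hfold
  linear_combination hfold

end ThetaMultiple

section CoefficientExtraction

open FormalMultilinearSeries in
theorem eq_zero_of_eventually_hasSum_zero {b : ℕ → ℂ}
    (h : ∀ᶠ t in 𝓝[≠] 0, HasSum (fun n => b n * t ^ n) 0) : b = 0 := by
  obtain ⟨s, hs, hs0⟩ := (h.and eventually_mem_nhdsWithin).exists
  have hradius : 0 < (ofScalars ℂ b).radius := by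
    have hlim : Tendsto (fun n => ‖ofScalars ℂ b n‖ * (‖s‖₊ : ℝ) ^ n) atTop (𝓝 0) := by
      simpa [ofScalars_norm] using hs.summable.tendsto_atTop_zero.norm
    exact lt_of_lt_of_le (by simpa using hs0) (le_radius_of_tendsto _ hlim)
  have hball := (ofScalars ℂ b).hasFPowerSeriesOnBall hradius
  have hpunctured : ∀ᶠ t in 𝓝[≠] 0, (ofScalars ℂ b).sum t = 0 := by
    filter_upwards [h] with t ht
    exact (ofScalars_sum_eq b t).trans ht.tsum_eq
  have hzero := hball.analyticAt.frequently_zero_iff_eventually_zero.1 hpunctured.frequently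
  exact (ofScalars_series_eq_zero ℂ).1 (hball.hasFPowerSeriesAt.eq_zero_of_eventually hzero)

variable {ω : ℂ} {m : ℕ}

lemma sum_pow_pow_eq_ite (hω : IsPrimitiveRoot ω m) (n : ℕ) :
    ∑ k ∈ range m, (ω ^ n) ^ k = if m ∣ n then (m : ℂ) else 0 := by
  split_ifs with hmn
  · simp [(hω.pow_eq_one_iff_dvd n).2 hmn]
  · rw [geom_sum_eq fun h => hmn ((hω.pow_eq_one_iff_dvd n).1 h), ← pow_mul, mul_comm n, pow_mul,
      hω.pow_eq_one, one_pow, sub_self, zero_div]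

lemma sum_pow_mul_pow_eq_ite (hω : IsPrimitiveRoot ω m) (c : Fin m) (t : ℂ) (n : ℕ) :
    ∑ k ∈ range m, (ω ^ k) ^ (m - c : ℕ) * (ω ^ k * t) ^ n =
      if n % m = c then m * t ^ n else 0 := by
  have hdvd : m ∣ m - c + n ↔ n % m = c := by
    have hmod : n % m = c ↔ c ≡ n [MOD m] := by
      rw [Nat.ModEq, Nat.mod_eq_of_lt c.isLt, eq_comm]
    rw [hmod, Nat.modEq_iff_dvd, ← Int.natCast_dvd_natCast, Nat.cast_add, Nat.cast_sub c.isLt.le,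
      sub_add_eq_add_sub, add_sub_assoc, dvd_add_right dvd_rfl]
  have hfactor : ∑ k ∈ range m, (ω ^ k) ^ (m - c : ℕ) * (ω ^ k * t) ^ n =
      (∑ k ∈ range m, (ω ^ (m - c + n)) ^ k) * t ^ n := by
    rw [sum_mul]
    exact sum_congr rfl fun k _ => by ring
  simp only [hfactor, sum_pow_pow_eq_ite hω, hdvd, ite_mul, zero_mul]

lemma sum_pow_mul_sum_fin_eq_zero (hω : IsPrimitiveRoot ω m) {F : ℂ → Fin m → ℂ} {c : Fin m}
    (hF : ∀ q, F q c = 0) (t : ℂ) :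
    ∑ k ∈ range m, (ω ^ k) ^ (m - c : ℕ) *
      ∑ d : Fin m, (ω ^ k * t) ^ (d : ℕ) * F ((ω ^ k * t) ^ m) d = 0 := by
  have hpow (k : ℕ) : (ω ^ k * t) ^ m = t ^ m := by
    rw [mul_pow, pow_right_comm, hω.pow_eq_one, one_pow, one_mul]
  simp only [hpow, mul_sum]
  rw [sum_comm]
  refine sum_eq_zero fun d _ => ?_
  simp only [← mul_assoc, ← sum_mul, sum_pow_mul_pow_eq_ite hω]
  split_ifs with hd
  · rw [Fin.ext ((Nat.mod_eq_of_lt d.isLt).symm.trans hd), hF, mul_zero]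
  · exact zero_mul _

lemma tendsto_mul_nhdsNE_zero {z : ℂ} (hz : z ≠ 0) :
    Tendsto (fun t => z * t) (𝓝[≠] 0) (𝓝[≠] 0) := by
  refine tendsto_nhdsWithin_iff.2 ⟨?_, ?_⟩
  · simpa using (tendsto_id.const_mul z).mono_left (nhdsWithin_le_nhds (a := (0 : ℂ)))
  · filter_upwards [eventually_mem_nhdsWithin] with t ht using mul_ne_zero hz ht

-- Averaging over the rotations of `t` by roots of unity isolates one residue class of exponents.
theorem eq_zero_of_eventually_hasSum_sum_fin {a : ℕ → ℂ} {F : ℂ → Fin m → ℂ} {c : Fin m}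
    (hF : ∀ q, F q c = 0)
    (h : ∀ᶠ t in 𝓝[≠] 0, HasSum (fun n => a n * t ^ n) (∑ d : Fin m, t ^ (d : ℕ) * F (t ^ m) d))
    {n : ℕ} (hn : n % m = c) : a n = 0 := by
  have hm : m ≠ 0 := c.pos.ne'
  obtain ⟨ω, hω⟩ : ∃ ω : ℂ, IsPrimitiveRoot ω m := ⟨_, Complex.isPrimitiveRoot_exp m hm⟩
  have hrot : ∀ᶠ t in 𝓝[≠] 0, ∀ k ∈ range m, HasSum (fun n => a n * (ω ^ k * t) ^ n)
      (∑ d : Fin m, (ω ^ k * t) ^ (d : ℕ) * F ((ω ^ k * t) ^ m) d) :=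
    (eventually_all_finset _).2 fun k _ =>
      (tendsto_mul_nhdsNE_zero (pow_ne_zero k (hω.ne_zero hm))).eventually h
  have hzero : ∀ᶠ t in 𝓝[≠] 0,
      HasSum (fun n => (if n % m = c then m * a n else 0) * t ^ n) 0 := by
    filter_upwards [hrot] with t ht
    have hsum := hasSum_sum fun k hk => (ht k hk).mul_left ((ω ^ k) ^ (m - c : ℕ))
    rw [sum_pow_mul_sum_fin_eq_zero hω hF] at hsum
    refine hsum.congr_fun fun n => ?_
    simp only [mul_left_comm _ (a n), ← mul_sum, sum_pow_mul_pow_eq_ite hω]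
    split_ifs <;> ring
  have hcoeff := congrFun (eq_zero_of_eventually_hasSum_zero hzero) n
  rw [if_pos hn] at hcoeff
  exact (mul_eq_zero.1 hcoeff).resolve_left (Nat.cast_ne_zero.2 hm)

end CoefficientExtraction

section Congruence

variable {t : ℂ}

lemma norm_rankDiff_le (n : ℕ) : ‖rankDiff n‖ ≤ 4 ^ n := by
  rw [rankDiff_eq_sum]
  have hterm : ∀ p ∈ (univ : Finset (Nat.Partition n)),
      ‖rankChar ((p.parts.sup : ℤ) - Multiset.card p.parts) * 2 ^ #p.parts.toFinset‖ ≤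
        2 ^ #p.parts.toFinset := fun p _ => by
    rw [norm_mul, norm_pow, RCLike.norm_ofNat]
    exact mul_le_of_le_one_left (by positivity) (norm_rankChar_le _)
  exact (norm_sum_le_of_le _ hterm).trans (by exact_mod_cast sum_two_pow_card_le n)

lemma thetaSeries_self_ne_zero (ht : ‖t‖ < 1) (ht0 : t ≠ 0) : thetaSeries t t ≠ 0 := by
  refine left_ne_zero_of_mul (b := qPochInf t (-t)) ?_
  rw [thetaSeries_self_mul_qPochInf ht ht0]
  exact qPochInf_self_ne_zero ht

theorem rankDiffGF_eq_sum_rankComponent (ht : ‖t‖ < 1 / 8) (ht0 : t ≠ 0) :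
    rankDiffGF t = ∑ c : Fin 5, t ^ (c : ℕ) * rankComponent (t ^ 5) c := by
  have ht1 : ‖t‖ < 1 := by linarith
  refine mul_left_cancel₀ (thetaSeries_self_ne_zero ht1 ht0) ?_
  rw [thetaSeries_mul_rankDiffGF ht ht0, ← rankNumerator_eq_thetaSeries_add ht1 ht0,
    rankNumerator_eq_thetaSeries_mul ht1 ht0]

theorem rankDiff_eq_zero {n : ℕ} (hn : n % 5 = 2) : rankDiff n = 0 := by
  refine eq_zero_of_eventually_hasSum_sum_fin (F := rankComponent) (c := 2) (fun q => rfl) ?_ hn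
  filter_upwards [eventually_mem_nhdsWithin,
    nhdsWithin_le_nhds (Metric.ball_mem_nhds 0 (show (0 : ℝ) < 1 / 8 by norm_num))] with t ht0 ht
  have ht8 : ‖t‖ < 1 / 8 := mem_ball_zero_iff.1 ht
  rw [← rankDiffGF_eq_sum_rankComponent ht8 ht0]
  exact (summable_mul_pow_of_norm_le ht8 norm_rankDiff_le).hasSum

end Congruence

end

end OverpartitionRank

theorem stmt_10 (n : ℕ) : overN 0 5 (5 * n + 2) = overN 2 5 (5 * n + 2) := by
  have hdiff := OverpartitionRank.rankDiff_eq_zero (n := 5 * n + 2) (by omega)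
  exact_mod_cast sub_eq_zero.1 hdiff
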